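/- arXiv:math/0304213 — 4 statements merged into one kernel-verified Lean document; each statement's English description precedes it below -/
import Mathlib

section
/- There exist a constant K > 0 and an integer N such that for all n ≥ N, |s_n − (n!/e²)·(1 − 4/n + 2/(n(n−1)))| ≤ K·n!/n³; that is, s_n = (n!/e²)·(1 − 4/n + 2/(n(n−1)) + O(n^{−3})). -/
def IsPermBlock {n : ℕ} (π : Equiv.Perm (Fin n)) (B : Finset (Fin n)) : Prop :=
  B.Nonempty ∧ (∃ i j : Fin n, B = Finset.Icc i j) ∧
    ∃ a b : Fin n, B.image π = Finset.Icc a b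

def IsSimplePerm {n : ℕ} (π : Equiv.Perm (Fin n)) : Prop :=
  ∀ B : Finset (Fin n), IsPermBlock π B → B.card = 1 ∨ B = Finset.univ

noncomputable def simpleCount (n : ℕ) : ℕ :=
  Nat.card {π : Equiv.Perm (Fin n) // IsSimplePerm π}

/-!
Call a permutation bond-free if no two neighbouring entries are consecutive integers, and let `aₙ`
be the proportion of bond-free permutations of length `n`. Inserting a new first value creates at
most one bond, with the old first entry, and destroys at most one. This gives recurrences for the
enumerator of permutations by their number of bonds, and they show that the increments of `aₙ` are
`4 L / n³ + O(n⁻⁴)`, where `L` is the limit of `aₙ`. Hence `aₙ = L (1 - 2 / (n (n - 1))) + O(n⁻³)`.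
The enumerator divided by `n!` satisfies `f' = 2 f` up to a vanishing error and is `1` at `1`, so
that its value `aₙ` at `0` tends to `L = e⁻²`.

For `n ≥ 8`, a permutation is simple exactly if it is bond-free, has no corner (an extreme value at
an extreme position, that is, a block of size `n - 1`), no block of size four, and no block of a
size between `5` and `n - 3`. Inclusion-exclusion over the corners removes the proportion
`4 aₙ₋₁ / n - 6 aₙ₋₂ / (n (n - 1))` up to `O(n⁻³)`. Blocks of size four arise by inflating one entry
by `2413` or `3142`, and they remove `2 L / (n (n - 1)) + O(n⁻³)`. The remaining blocks occur in
only `O((n - 3)!)` permutations.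
-/

namespace SimplePerm

open Equiv Finset

/-! ### Bonds and the insertion of a first value -/

/-- The bonds of a permutation: the `i` for which the entries at the neighbouring positions `i` and
`i + 1` are consecutive integers, in either order. -/
def bonds {m : ℕ} (π : Perm (Fin (m + 1))) : Finset (Fin m) :=
  {i | (π i.castSucc).val + 1 = (π i.succ).val ∨ (π i.succ).val + 1 = (π i.castSucc).val}

/-- The first two entries form a bond. This is false for permutations of length one. -/
def HasInitialBond {m : ℕ} (π : Perm (Fin (m + 1))) : Prop :=
  ∃ i ∈ bonds π, i.val = 0

instance {m : ℕ} (π : Perm (Fin (m + 1))) : Decidable (HasInitialBond π) :=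
  inferInstanceAs (Decidable (∃ i ∈ bonds π, i.val = 0))

/-- The permutation whose first entry is `v` and whose remaining entries are order isomorphic
to `τ`. -/
def insertFirst {m : ℕ} (v : Fin (m + 2)) (τ : Perm (Fin (m + 1))) : Perm (Fin (m + 2)) :=
  (finSuccEquiv' 0).trans ((optionCongr τ).trans (finSuccEquiv' v).symm)

/-- The values whose insertion in front of `τ` creates a bond. -/
def creatingValues {m : ℕ} (τ : Perm (Fin (m + 1))) : Finset (Fin (m + 2)) :=
  {(τ 0).castSucc, (τ 0).succ}

/-- The value whose insertion separates the entries of `τ` at the positions `i` and `i + 1`,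
provided that these form a bond. -/
def separatingValue {m : ℕ} (τ : Perm (Fin (m + 1))) (i : Fin m) : Fin (m + 2) :=
  (max (τ i.castSucc) (τ i.succ)).castSucc

/-- The values whose insertion in front of `τ` destroys a bond. -/
def destroyingValues {m : ℕ} (τ : Perm (Fin (m + 1))) : Finset (Fin (m + 2)) :=
  (bonds τ).image (separatingValue τ)

section Insertion

variable {m : ℕ} (v : Fin (m + 2)) (τ : Perm (Fin (m + 1)))

lemma mem_bonds {π : Perm (Fin (m + 1))} {i : Fin m} :
    i ∈ bonds π ↔
      (π i.castSucc).val + 1 = (π i.succ).val ∨ (π i.succ).val + 1 = (π i.castSucc).val := by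
  simp [bonds]

variable {τ} in
lemma HasInitialBond.card_bonds_pos (h : HasInitialBond τ) : 0 < #(bonds τ) :=
  let ⟨i, hi, _⟩ := h
  card_pos.mpr ⟨i, hi⟩

lemma insertFirst_zero : insertFirst v τ 0 = v := by
  simp [insertFirst]

lemma insertFirst_succ (i : Fin (m + 1)) : insertFirst v τ i.succ = v.succAbove (τ i) := by
  have h : finSuccEquiv' (0 : Fin (m + 2)) i.succ = some i := by
    rw [← Fin.succAbove_zero]
    exact finSuccEquiv'_succAbove _ _
  simp [insertFirst, h]

lemma insertFirst_bijective (m : ℕ) :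
    Function.Bijective fun q : Fin (m + 2) × Perm (Fin (m + 1)) ↦ insertFirst q.1 q.2 := by
  refine (Fintype.bijective_iff_injective_and_card _).2 ⟨?_, ?_⟩
  · rintro ⟨v, τ⟩ ⟨w, σ⟩ (h : insertFirst v τ = insertFirst w σ)
    obtain rfl : v = w := by rw [← insertFirst_zero v τ, h, insertFirst_zero]
    congr 1
    ext i
    have hi := Equiv.congr_fun h i.succ
    rw [insertFirst_succ, insertFirst_succ] at hi
    rw [Fin.succAbove_right_injective hi]
  · simp [Fintype.card_perm, Nat.factorial_succ (m + 1)]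

lemma sum_perm_eq_sum_insertFirst {M : Type*} [AddCommMonoid M] (f : Perm (Fin (m + 2)) → M) :
    ∑ π, f π = ∑ τ : Perm (Fin (m + 1)), ∑ v, f (insertFirst v τ) := by
  rw [← Equiv.sum_comp (ofBijective _ (insertFirst_bijective m)) f, Fintype.sum_prod_type_right]
  rfl

lemma val_succAbove {n : ℕ} (v : Fin (n + 1)) (x : Fin n) :
    (v.succAbove x).val = if x.val < v.val then x.val else x.val + 1 := by
  simp only [Fin.succAbove, Fin.lt_def]
  split_ifs <;> simp_all

lemma val_separatingValue (i : Fin m) :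
    (separatingValue τ i).val = max (τ i.castSucc).val (τ i.succ).val :=
  Fin.val_strictMono.monotone.map_max

lemma val_apply_eq_iff {n : ℕ} (π : Perm (Fin n)) (x y : Fin n) :
    (π x).val = (π y).val ↔ x.val = y.val := by
  rw [Fin.val_inj, Fin.val_inj, π.apply_eq_iff_eq]

lemma separatingValue_injOn : Set.InjOn (separatingValue τ) (bonds τ) := by
  intro i hi j hj h
  rw [mem_coe, mem_bonds] at hi hj
  rw [Fin.ext_iff, val_separatingValue, val_separatingValue] at h
  have h₁ := val_apply_eq_iff τ i.castSucc j.castSucc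
  have h₂ := val_apply_eq_iff τ i.castSucc j.succ
  have h₃ := val_apply_eq_iff τ i.succ j.castSucc
  have h₄ := val_apply_eq_iff τ i.succ j.succ
  simp only [Fin.val_castSucc, Fin.val_succ] at h₁ h₂ h₃ h₄
  ext
  omega

lemma card_destroyingValues : #(destroyingValues τ) = #(bonds τ) :=
  card_image_of_injOn (separatingValue_injOn τ)

lemma card_creatingValues : #(creatingValues τ) = 2 :=
  card_pair Fin.castSucc_lt_succ.ne

lemma separatingValue_mem_creatingValues_iff {i : Fin m} (hi : i ∈ bonds τ) :
    separatingValue τ i ∈ creatingValues τ ↔ i.val = 0 := by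
  rw [mem_bonds] at hi
  have h₁ := val_apply_eq_iff τ 0 i.castSucc
  have h₂ := val_apply_eq_iff τ 0 i.succ
  simp only [creatingValues, mem_insert, mem_singleton, Fin.ext_iff, val_separatingValue,
    Fin.val_castSucc, Fin.val_succ, Fin.val_zero] at *
  omega

lemma card_creatingValues_inter_destroyingValues :
    #(creatingValues τ ∩ destroyingValues τ) = if HasInitialBond τ then 1 else 0 := by
  split_ifs with h
  · obtain ⟨i, hi, hi₀⟩ := h
    refine card_eq_one.2 ⟨separatingValue τ i, Finset.ext fun v ↦ ?_⟩
    simp only [destroyingValues, mem_inter, mem_image, mem_singleton]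
    constructor
    · rintro ⟨hv, j, hj, rfl⟩
      rw [separatingValue_mem_creatingValues_iff τ hj] at hv
      rw [Fin.ext (hv.trans hi₀.symm)]
    · rintro rfl
      exact ⟨(separatingValue_mem_creatingValues_iff τ hi).2 hi₀, i, hi, rfl⟩
  · refine card_eq_zero.2 (disjoint_iff_inter_eq_empty.1 (disjoint_right.2 fun v hv hv' ↦ h ?_))
    obtain ⟨i, hi, rfl⟩ := mem_image.1 hv
    exact ⟨i, hi, (separatingValue_mem_creatingValues_iff τ hi).1 hv'⟩

lemma zero_mem_bonds_insertFirst : 0 ∈ bonds (insertFirst v τ) ↔ v ∈ creatingValues τ := by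
  rw [mem_bonds, Fin.castSucc_zero, insertFirst_zero, insertFirst_succ, val_succAbove]
  simp only [creatingValues, mem_insert, mem_singleton, Fin.ext_iff, Fin.val_castSucc, Fin.val_succ]
  split_ifs <;> omega

lemma hasInitialBond_insertFirst : HasInitialBond (insertFirst v τ) ↔ v ∈ creatingValues τ := by
  rw [← zero_mem_bonds_insertFirst]
  exact ⟨fun ⟨i, hi, hi₀⟩ ↦ (Fin.ext hi₀ : i = 0) ▸ hi, fun h ↦ ⟨0, h, rfl⟩⟩

lemma succ_mem_bonds_insertFirst (i : Fin m) :
    i.succ ∈ bonds (insertFirst v τ) ↔ i ∈ bonds τ ∧ separatingValue τ i ≠ v := by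
  rw [mem_bonds, mem_bonds, ← Fin.succ_castSucc, insertFirst_succ, insertFirst_succ, val_succAbove,
    val_succAbove, ne_eq, Fin.ext_iff, val_separatingValue]
  split_ifs <;> omega

lemma card_bonds_insertFirst :
    #(bonds (insertFirst v τ)) + (if v ∈ destroyingValues τ then 1 else 0) =
      #(bonds τ) + if v ∈ creatingValues τ then 1 else 0 := by
  have hsucc : #(bonds (insertFirst v τ)) =
      #{i ∈ bonds τ | separatingValue τ i ≠ v} + if v ∈ creatingValues τ then 1 else 0 := by
    conv_lhs => rw [← filter_univ_mem (bonds (insertFirst v τ)), Fin.card_filter_univ_succ',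
      add_comm]
    simp only [zero_mem_bonds_insertFirst, succ_mem_bonds_insertFirst, ← filter_filter,
      filter_univ_mem]
  have hdestroyed : #{i ∈ bonds τ | separatingValue τ i = v} =
      if v ∈ destroyingValues τ then 1 else 0 := by
    split_ifs with h
    · obtain ⟨j, hj, rfl⟩ := mem_image.1 h
      refine card_eq_one.2 ⟨j, Finset.ext fun i ↦ ?_⟩
      rw [mem_filter, mem_singleton]
      exact ⟨fun hi ↦ separatingValue_injOn τ hi.1 hj hi.2, by rintro rfl; exact ⟨hj, rfl⟩⟩
    · rw [card_eq_zero, filter_eq_empty_iff]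
      exact fun i hi hiv ↦ h (mem_image.2 ⟨i, hi, hiv⟩)
  have hsplit := card_filter_add_card_filter_not (s := bonds τ) (separatingValue τ · = v)
  simp only [ne_eq] at hsucc
  omega

end Insertion

/-! ### The bond enumerators -/

section Enumerators

open Polynomial

lemma pow_card_bonds_insertFirst {R : Type*} [CommRing R] (t : R) {m : ℕ} (v : Fin (m + 2))
    (τ : Perm (Fin (m + 1))) :
    t ^ #(bonds (insertFirst v τ)) = t ^ #(bonds τ)
      + (if v ∈ creatingValues τ then t ^ (#(bonds τ) + 1) - t ^ #(bonds τ) else 0)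
      + (if v ∈ destroyingValues τ then t ^ (#(bonds τ) - 1) - t ^ #(bonds τ) else 0)
      + if v ∈ creatingValues τ ∩ destroyingValues τ then
          2 * t ^ #(bonds τ) - t ^ (#(bonds τ) + 1) - t ^ (#(bonds τ) - 1) else 0 := by
  have h := card_bonds_insertFirst v τ
  by_cases hc : v ∈ creatingValues τ <;> by_cases hd : v ∈ destroyingValues τ <;>
    simp only [hc, hd, mem_inter, and_self, and_true, and_false, if_true, if_false, add_zero] at h ⊢
  · rw [Nat.add_right_cancel h]
    ring
  · rw [h]
    ring
  · rw [← h, Nat.add_sub_cancel]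
    ring
  · rw [h]

lemma sum_pow_card_bonds_insertFirst {R : Type*} [CommRing R] (t : R) {m : ℕ}
    (τ : Perm (Fin (m + 1))) :
    ∑ v, t ^ #(bonds (insertFirst v τ)) =
      (m + 2 * t) * t ^ #(bonds τ) - (t - 1) * (#(bonds τ) * t ^ (#(bonds τ) - 1))
        - (t - 1) ^ 2 * if HasInitialBond τ then t ^ (#(bonds τ) - 1) else 0 := by
  simp only [pow_card_bonds_insertFirst, sum_add_distrib, sum_ite_mem, univ_inter, sum_const,
    card_creatingValues, card_destroyingValues, card_creatingValues_inter_destroyingValues,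
    card_univ, Fintype.card_fin, nsmul_eq_mul]
  rcases Nat.eq_zero_or_pos #(bonds τ) with h₀ | h₀
  · rw [if_neg fun h : HasInitialBond τ ↦ h.card_bonds_pos.ne' h₀,
      if_neg fun h : HasInitialBond τ ↦ h.card_bonds_pos.ne' h₀, h₀]
    push_cast
    ring
  · obtain ⟨k, hk⟩ := Nat.exists_eq_add_one.2 h₀
    rw [hk, Nat.add_sub_cancel]
    split_ifs <;> push_cast <;> ring

lemma sum_initial_pow_card_bonds_insertFirst {R : Type*} [CommRing R] (t : R) {m : ℕ}
    (τ : Perm (Fin (m + 1))) :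
    (∑ v, if HasInitialBond (insertFirst v τ) then t ^ (#(bonds (insertFirst v τ)) - 1) else 0) =
      2 * t ^ #(bonds τ) - (t - 1) * if HasInitialBond τ then t ^ (#(bonds τ) - 1) else 0 := by
  have hv (v : Fin (m + 2)) :
      (if HasInitialBond (insertFirst v τ) then t ^ (#(bonds (insertFirst v τ)) - 1) else 0) =
        (if v ∈ creatingValues τ then t ^ #(bonds τ) else 0) +
          if v ∈ creatingValues τ ∩ destroyingValues τ then
            t ^ (#(bonds τ) - 1) - t ^ #(bonds τ) else 0 := by
    have h := card_bonds_insertFirst v τ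
    by_cases hc : v ∈ creatingValues τ <;> by_cases hd : v ∈ destroyingValues τ <;>
      simp only [hc, hd, hasInitialBond_insertFirst, mem_inter, and_self, and_true, and_false,
        if_true, if_false, add_zero] at h ⊢
    · rw [Nat.add_right_cancel h, add_sub_cancel]
    · rw [h, Nat.add_sub_cancel]
  simp only [hv, sum_add_distrib, sum_ite_mem, univ_inter, sum_const, card_creatingValues,
    card_creatingValues_inter_destroyingValues, nsmul_eq_mul]
  split_ifs with h
  · obtain ⟨k, hk⟩ := Nat.exists_eq_add_one.2 h.card_bonds_pos
    rw [hk, Nat.add_sub_cancel]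
    push_cast
    ring
  · simp

/-- The enumerator of the permutations of length `m + 1` by their number of bonds. -/
noncomputable def bondPoly (m : ℕ) : ℝ[X] :=
  ∑ π : Perm (Fin (m + 1)), X ^ #(bonds π)

/-- The enumerator of the permutations of length `m + 1` with an initial bond by their number of
other bonds. -/
noncomputable def initialBondPoly (m : ℕ) : ℝ[X] :=
  ∑ π : Perm (Fin (m + 1)), if HasInitialBond π then X ^ (#(bonds π) - 1) else 0

lemma bondPoly_zero : bondPoly 0 = 1 := by
  simp [bondPoly, eq_empty_of_isEmpty]

lemma initialBondPoly_zero : initialBondPoly 0 = 0 := by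
  simp [initialBondPoly, HasInitialBond]

lemma derivative_bondPoly (m : ℕ) :
    derivative (bondPoly m) =
      ∑ π : Perm (Fin (m + 1)), (#(bonds π) : ℝ[X]) * X ^ (#(bonds π) - 1) := by
  simp [bondPoly, derivative_X_pow]

lemma bondPoly_succ (m : ℕ) :
    bondPoly (m + 1) = ((m : ℝ[X]) + 2 * X) * bondPoly m - (X - 1) * derivative (bondPoly m)
      - (X - 1) ^ 2 * initialBondPoly m := by
  rw [derivative_bondPoly, bondPoly, sum_perm_eq_sum_insertFirst]
  simp only [sum_pow_card_bonds_insertFirst, sum_sub_distrib, ← mul_sum, bondPoly, initialBondPoly]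

lemma initialBondPoly_succ (m : ℕ) :
    initialBondPoly (m + 1) = 2 * bondPoly m - (X - 1) * initialBondPoly m := by
  rw [initialBondPoly, sum_perm_eq_sum_insertFirst]
  simp only [sum_initial_pow_card_bonds_insertFirst, sum_sub_distrib, ← mul_sum, bondPoly,
    initialBondPoly]

lemma derivative_bondPoly_succ (m : ℕ) :
    derivative (bondPoly (m + 1)) =
      2 * bondPoly m + ((m : ℝ[X]) - 1 + 2 * X) * derivative (bondPoly m)
        - (X - 1) * derivative (derivative (bondPoly m)) - 2 * (X - 1) * initialBondPoly m
        - (X - 1) ^ 2 * derivative (initialBondPoly m) := by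
  rw [bondPoly_succ]
  simp only [derivative_add, derivative_sub, derivative_mul, derivative_X, derivative_one,
    derivative_pow, derivative_ofNat, derivative_natCast, Nat.cast_ofNat, map_ofNat]
  ring

lemma derivative_initialBondPoly_succ (m : ℕ) :
    derivative (initialBondPoly (m + 1)) =
      2 * derivative (bondPoly m) - initialBondPoly m
        - (X - 1) * derivative (initialBondPoly m) := by
  rw [initialBondPoly_succ]
  simp only [derivative_sub, derivative_mul, derivative_X, derivative_one, derivative_ofNat]
  ring

lemma derivative_bondPoly_rec_and_derivative_initialBondPoly_rec (m : ℕ) :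
    derivative (bondPoly (m + 2)) + 2 * (X - 1) * derivative (bondPoly (m + 1))
        - (X - 1) ^ 2 * derivative (bondPoly m) = 2 * ((m : ℝ[X]) + 2) * bondPoly (m + 1) ∧
      derivative (initialBondPoly (m + 2)) + 2 * (X - 1) * derivative (initialBondPoly (m + 1))
        - (X - 1) ^ 2 * derivative (initialBondPoly m) =
          (2 * (m : ℝ[X]) + 1) * initialBondPoly (m + 1) + (X - 1) * initialBondPoly m := by
  induction m with
  | zero =>
    rw [bondPoly_succ 1, initialBondPoly_succ 1, bondPoly_succ 0, initialBondPoly_succ 0,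
      bondPoly_zero, initialBondPoly_zero]
    constructor <;> simp [derivative_pow, map_ofNat C] <;> ring
  | succ m ih =>
    obtain ⟨hp, hu⟩ := ih
    have dhp := congrArg derivative hp
    simp only [derivative_add, derivative_sub, derivative_mul, derivative_X, derivative_one,
      derivative_pow, derivative_ofNat, derivative_natCast, Nat.cast_ofNat, map_ofNat] at dhp
    have p₁ := bondPoly_succ (m + 1)
    have u₀ := initialBondPoly_succ m
    have u₁ := initialBondPoly_succ (m + 1)
    have dp₀ := derivative_bondPoly_succ m
    have dp₁ := derivative_bondPoly_succ (m + 1)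
    have dp₂ := derivative_bondPoly_succ (m + 2)
    have du₀ := derivative_initialBondPoly_succ m
    have du₁ := derivative_initialBondPoly_succ (m + 1)
    have du₂ := derivative_initialBondPoly_succ (m + 2)
    push_cast at *
    constructor
    · linear_combination dp₂ + 2 * (X - 1) * dp₁ - (X - 1) ^ 2 * dp₀
        + ((m : ℝ[X]) + 1 + 2 * X) * hp - (X - 1) * dhp - (X - 1) ^ 2 * hu
        - (2 * (m : ℝ[X]) + 4) * p₁ - 2 * (X - 1) * u₁ + (X - 1) ^ 2 * u₀
    · linear_combination du₂ + 2 * (X - 1) * du₁ - (X - 1) ^ 2 * du₀ + 2 * hp - (X - 1) * hu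
        - (2 * (m : ℝ[X]) + 4) * u₁

lemma derivative_bondPoly_rec (m : ℕ) :
    derivative (bondPoly (m + 2)) + 2 * (X - 1) * derivative (bondPoly (m + 1))
      - (X - 1) ^ 2 * derivative (bondPoly m) = 2 * ((m : ℝ[X]) + 2) * bondPoly (m + 1) :=
  (derivative_bondPoly_rec_and_derivative_initialBondPoly_rec m).1

end Enumerators

/-! ### Sequences decaying like a power of the index -/

section Decay

open Filter Topology Asymptotics

/-- The comparison sequence `n⁻ᵏ` of the error terms. Its value at `n = 0` is junk for `0 < k`. -/
noncomputable def invPow (k n : ℕ) : ℝ := ((n : ℝ) ^ k)⁻¹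

lemma invPow_nonneg (k n : ℕ) : 0 ≤ invPow k n := by
  unfold invPow
  positivity

lemma norm_invPow (k n : ℕ) : ‖invPow k n‖ = invPow k n :=
  Real.norm_of_nonneg (invPow_nonneg k n)

variable {f : ℕ → ℝ} {k : ℕ}

lemma isBigO_invPow_of_le {l : ℕ} (hkl : k ≤ l) (hf : f =O[atTop] invPow l) :
    f =O[atTop] invPow k := by
  refine hf.trans (IsBigO.of_bound 1 ?_)
  filter_upwards [eventually_ge_atTop 1] with n hn
  have hn' : (1 : ℝ) ≤ n := by exact_mod_cast hn
  rw [norm_invPow, norm_invPow, one_mul, invPow, invPow]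
  gcongr

lemma isBigO_div_natCast_add (hf : f =O[atTop] invPow k) (c : ℝ) :
    (fun n ↦ f n / (n + c)) =O[atTop] invPow (k + 1) := by
  have hc : (fun n : ℕ ↦ ((n : ℝ) + c)⁻¹) =O[atTop] fun n : ℕ ↦ (n : ℝ)⁻¹ := by
    refine IsBigO.of_bound 2 ?_
    filter_upwards [eventually_ge_atTop (max 1 ⌈2 * |c|⌉₊)] with n hn
    have hn₁ : (1 : ℝ) ≤ n := by exact_mod_cast le_of_max_le_left hn
    have hn₂ : 2 * |c| ≤ n := Nat.ceil_le.1 (le_of_max_le_right hn)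
    have hpos : (n : ℝ) / 2 ≤ n + c := by linarith [neg_abs_le c]
    rw [Real.norm_of_nonneg (inv_nonneg.2 (by linarith)), Real.norm_of_nonneg (by positivity),
      show 2 * (n : ℝ)⁻¹ = ((n : ℝ) / 2)⁻¹ by rw [inv_div, div_eq_mul_inv]]
    gcongr
  refine (hf.mul hc).congr (fun n ↦ (div_eq_mul_inv _ _).symm) fun n ↦ ?_
  rw [invPow, invPow, pow_succ, mul_inv]

lemma isBigO_shift_iff (j : ℕ) :
    (fun n ↦ f (n + j)) =O[atTop] invPow k ↔ f =O[atTop] invPow k := by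
  have hle : ∀ᶠ n : ℕ in atTop, (n + j : ℝ) / (j + 1) ≤ n := by
    filter_upwards [eventually_ge_atTop 1] with n hn
    have hn' : (1 : ℝ) ≤ n := by exact_mod_cast hn
    rw [div_le_iff₀ (by positivity)]
    nlinarith
  have hshift : (fun n ↦ invPow k (n + j)) =Θ[atTop] invPow k := by
    refine ⟨IsBigO.of_bound 1 ?_, IsBigO.of_bound ((j + 1) ^ k) ?_⟩
    · filter_upwards [eventually_ge_atTop 1] with n hn
      have : (1 : ℝ) ≤ n := by exact_mod_cast hn
      rw [norm_invPow, norm_invPow, one_mul, invPow, invPow]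
      gcongr
      exact Nat.le_add_right n j
    · filter_upwards [hle, eventually_ge_atTop 1] with n hn hn₁
      have : (1 : ℝ) ≤ n := by exact_mod_cast hn₁
      rw [norm_invPow, norm_invPow, invPow, invPow, Nat.cast_add,
        ← inv_inv ((j + 1 : ℝ) ^ k), ← mul_inv, mul_comm, ← div_eq_mul_inv, ← div_pow]
      gcongr
  rw [← hshift.isBigO_congr_right]
  conv_rhs => rw [← map_add_atTop_eq_nat j, isBigO_map]
  rfl

lemma invPow_le_two_mul_sub {n : ℕ} (hn : 0 < n) (hk : 0 < k) :
    invPow (k + 1) n ≤ 2 * (invPow k n - invPow k (n + 1)) := by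
  have hn' : (1 : ℝ) ≤ n := by exact_mod_cast hn
  have hratio : ((n : ℝ) / (n + 1)) ^ k ≤ n / (n + 1) :=
    pow_le_of_le_one (by positivity) (div_le_one_of_le₀ (by linarith) (by positivity)) hk.ne'
  have hhalf : (n : ℝ)⁻¹ ≤ 2 * (1 - n / (n + 1)) := by
    rw [one_sub_div (by positivity), inv_eq_one_div, ← mul_div_assoc,
      div_le_div_iff₀ (by positivity) (by positivity)]
    linarith
  calc invPow (k + 1) n = ((n : ℝ) ^ k)⁻¹ * (n : ℝ)⁻¹ := by rw [invPow, pow_succ, mul_inv]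
    _ ≤ ((n : ℝ) ^ k)⁻¹ * (2 * (1 - ((n : ℝ) / (n + 1)) ^ k)) := by
      gcongr
      linarith
    _ = 2 * (invPow k n - invPow k (n + 1)) := by
      rw [invPow, invPow, div_pow]
      push_cast
      field_simp

lemma isBigO_sub_of_tendsto {L : ℝ} (hk : 0 < k) (hL : Tendsto f atTop (𝓝 L))
    (hf : (fun n ↦ f (n + 1) - f n) =O[atTop] invPow (k + 1)) :
    (fun n ↦ f n - L) =O[atTop] invPow k := by
  obtain ⟨C, hC, hbound⟩ := hf.exists_pos
  obtain ⟨N, hN⟩ := eventually_atTop.1 (hbound.bound.and (eventually_gt_atTop 0))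
  set g : ℕ → ℝ := fun n ↦ 2 * C * invPow k n
  have hg : Tendsto g atTop (𝓝 0) := by
    simpa [g, invPow] using ((tendsto_pow_atTop hk.ne').comp
      tendsto_natCast_atTop_atTop).inv_tendsto_atTop.const_mul (2 * C)
  have hstep (n : ℕ) (hn : N ≤ n) : |f (n + 1) - f n| ≤ g n - g (n + 1) := by
    obtain ⟨hn₁, hn₀⟩ := hN n hn
    rw [Real.norm_eq_abs, norm_invPow] at hn₁
    have := mul_le_mul_of_nonneg_left (invPow_le_two_mul_sub hn₀ hk) hC.le
    simp only [g]
    linarith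
  have hanti : Antitone fun n ↦ f (n + N) + g (n + N) := antitone_nat_of_succ_le fun n ↦ by
    have := le_abs_self (f (n + N + 1) - f (n + N))
    rw [Nat.add_right_comm]
    linarith [hstep (n + N) (Nat.le_add_left N n)]
  have hmono : Monotone fun n ↦ f (n + N) - g (n + N) := monotone_nat_of_le_succ fun n ↦ by
    have := neg_abs_le (f (n + N + 1) - f (n + N))
    rw [Nat.add_right_comm]
    linarith [hstep (n + N) (Nat.le_add_left N n)]
  refine IsBigO.of_bound (2 * C) ?_
  filter_upwards [eventually_ge_atTop N] with n hn
  obtain ⟨l, rfl⟩ := Nat.exists_eq_add_of_le' hn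
  have hupper := hmono.ge_of_tendsto
    ((tendsto_add_atTop_iff_nat N).2 (by simpa using hL.sub hg)) l
  have hlower := hanti.le_of_tendsto
    ((tendsto_add_atTop_iff_nat N).2 (by simpa using hL.add hg)) l
  rw [Real.norm_eq_abs, norm_invPow, abs_le]
  constructor <;> linarith

end Decay

/-! ### Bond-free permutations -/

/-- A permutation without bonds: no two neighbouring entries are consecutive integers. -/
def BondFree {n : ℕ} (π : Perm (Fin n)) : Prop :=
  ∀ x y : Fin n, x.val + 1 = y.val →
    ¬((π x).val + 1 = (π y).val ∨ (π y).val + 1 = (π x).val)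

/-- The number of bond-free permutations of length `n`. -/
noncomputable def bondFreeCount (n : ℕ) : ℕ := {π : Perm (Fin n) | BondFree π}.ncard

/-- The proportion of bond-free permutations of length `n`. -/
noncomputable def bondFreeDensity (n : ℕ) : ℝ := bondFreeCount n / n.factorial

section BondFreeDensity

open Polynomial Filter Topology Asymptotics

lemma bonds_eq_empty_iff {m : ℕ} {π : Perm (Fin (m + 1))} : bonds π = ∅ ↔ BondFree π := by
  rw [eq_empty_iff_forall_notMem]
  constructor
  · intro h x y hxy hadj
    refine h ⟨x.val, by omega⟩ (mem_bonds.2 ?_)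
    convert hadj using 4 <;> ext <;> simp [hxy]
  · exact fun h i hi ↦ h i.castSucc i.succ (by simp) (mem_bonds.1 hi)

lemma eval_zero_bondPoly (m : ℕ) : (bondPoly m).eval 0 = bondFreeCount (m + 1) := by
  simp only [bondPoly, eval_finsetSum, eval_pow, eval_X, zero_pow_eq, card_eq_zero,
    bonds_eq_empty_iff]
  rw [sum_boole, bondFreeCount, ← Set.ncard_coe_finset]
  simp [bonds_eq_empty_iff]

lemma bondFreeCount_rec (m : ℕ) :
    (bondFreeCount (m + 5) : ℝ) =
      (m + 6) * bondFreeCount (m + 4) - (m + 3) * bondFreeCount (m + 3)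
        - m * bondFreeCount (m + 2) + (m + 2) * bondFreeCount (m + 1) := by
  have hp (k : ℕ) := congrArg (eval 0) (bondPoly_succ k)
  have hu (k : ℕ) := congrArg (eval 0) (initialBondPoly_succ k)
  have hd (k : ℕ) := congrArg (eval 0) (derivative_bondPoly_rec k)
  simp only [eval_add, eval_sub, eval_mul, eval_pow, eval_X, eval_one, eval_natCast, eval_ofNat,
    eval_zero_bondPoly] at hp hu hd
  have hp₀ := hp m
  have hp₁ := hp (m + 1)
  have hp₂ := hp (m + 2)
  have hp₃ := hp (m + 3)
  have hd₁ := hd (m + 1)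
  push_cast at *
  linear_combination hp₃ - 3 * hp₂ + hp₁ + hp₀ + hd₁ - hd m - hu (m + 2) + 2 * hu (m + 1) + hu m

lemma bondFreeCount_le_factorial (n : ℕ) : bondFreeCount n ≤ n.factorial := by
  refine (Set.ncard_le_ncard (Set.subset_univ _)).trans_eq ?_
  rw [Set.ncard_univ, Nat.card_perm, Nat.card_fin]

lemma bondFreeDensity_isBigO_one : bondFreeDensity =O[atTop] invPow 0 := by
  refine IsBigO.of_bound 1 (Eventually.of_forall fun n ↦ ?_)
  rw [norm_invPow, invPow, pow_zero, inv_one, one_mul, bondFreeDensity,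
    Real.norm_of_nonneg (by positivity)]
  exact div_le_one_of_le₀ (by exact_mod_cast bondFreeCount_le_factorial n) (by positivity)

/-- The recurrence for `bondFreeCount`, solved for the increments of the densities: since every
increment on the right carries a decaying factor, it bootstraps crude bounds to sharp ones. -/
lemma bondFreeDensity_increment_rec (m : ℕ) :
    bondFreeDensity (m + 5) - bondFreeDensity (m + 4) =
      (bondFreeDensity (m + 4) - bondFreeDensity (m + 3)) / (m + 5)
        + (bondFreeDensity (m + 3) - bondFreeDensity (m + 2)) / (m + 4) / (m + 5)
        + (3 * bondFreeDensity (m + 2) + bondFreeDensity (m + 1))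
          / (m + 3) / (m + 4) / (m + 5) := by
  simp only [bondFreeDensity, bondFreeCount_rec, Nat.factorial_succ]
  push_cast
  field_simp
  ring

lemma bondFreeDensity_increment_isBigO_step {k : ℕ} (hk : k ≤ 2)
    (hd : (fun n ↦ bondFreeDensity (n + 1) - bondFreeDensity n) =O[atTop] invPow k) :
    (fun n ↦ bondFreeDensity (n + 1) - bondFreeDensity n) =O[atTop] invPow (k + 1) := by
  have ha (j : ℕ) : (fun n ↦ bondFreeDensity (n + j)) =O[atTop] invPow 0 :=
    (isBigO_shift_iff j).2 bondFreeDensity_isBigO_one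
  have hd' (j : ℕ) := (isBigO_shift_iff j).2 hd
  rw [← isBigO_shift_iff 4]
  refine IsBigO.congr_left ?_ fun m ↦ (bondFreeDensity_increment_rec m).symm
  refine ((isBigO_div_natCast_add (hd' 3) 5).add ?_).add ?_
  · exact isBigO_invPow_of_le (by omega)
      (isBigO_div_natCast_add (isBigO_div_natCast_add (hd' 2) 4) 5)
  · exact isBigO_invPow_of_le (by omega) (isBigO_div_natCast_add (isBigO_div_natCast_add
      (isBigO_div_natCast_add (((ha 2).const_mul_left 3).add (ha 1)) 3) 4) 5)

lemma bondFreeDensity_increment_isBigO :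
    (fun n ↦ bondFreeDensity (n + 1) - bondFreeDensity n) =O[atTop] invPow 3 := by
  have h₀ : (fun n ↦ bondFreeDensity (n + 1) - bondFreeDensity n) =O[atTop] invPow 0 :=
    ((isBigO_shift_iff 1).2 bondFreeDensity_isBigO_one).sub bondFreeDensity_isBigO_one
  exact bondFreeDensity_increment_isBigO_step le_rfl
    (bondFreeDensity_increment_isBigO_step one_le_two
      (bondFreeDensity_increment_isBigO_step zero_le_two h₀))

/-- The second-order term comes from the increments, which are `4 L / n³` up to `O(n⁻⁴)`. -/
lemma bondFreeDensity_sub_isBigO_of_tendsto {L : ℝ} (hL : Tendsto bondFreeDensity atTop (𝓝 L)) :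
    (fun n : ℕ ↦ bondFreeDensity n - L + 2 * L / (n - 1) / n) =O[atTop] invPow 3 := by
  have ha (j : ℕ) : (fun n ↦ bondFreeDensity (n + j) - L) =O[atTop] invPow 1 :=
    (isBigO_shift_iff j).2 (isBigO_invPow_of_le one_le_two
      (isBigO_sub_of_tendsto two_pos hL bondFreeDensity_increment_isBigO))
  have hd (j : ℕ) := (isBigO_shift_iff j).2 bondFreeDensity_increment_isBigO
  have hcorr : Tendsto (fun n : ℕ ↦ 2 * L / ((n : ℝ) - 1) / n) atTop (𝓝 0) := by
    refine Tendsto.div_atTop (Tendsto.div_atTop tendsto_const_nhds ?_) tendsto_natCast_atTop_atTop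
    exact tendsto_atTop_add_const_right _ _ tendsto_natCast_atTop_atTop
  have hlim : Tendsto (fun n : ℕ ↦ bondFreeDensity n + 2 * L / ((n : ℝ) - 1) / n) atTop (𝓝 L) := by
    simpa using hL.add hcorr
  refine (isBigO_sub_of_tendsto three_pos hlim ?_).congr_left fun n ↦ by ring
  rw [← isBigO_shift_iff 4]
  have h₁ := isBigO_div_natCast_add (hd 3) 5
  have h₂ := isBigO_div_natCast_add (isBigO_div_natCast_add (hd 2) 4) 5
  have h₃ := isBigO_div_natCast_add (isBigO_div_natCast_add (isBigO_div_natCast_add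
    (((ha 2).const_mul_left 3).add (ha 1)) 3) 4) 5
  refine ((h₁.add (isBigO_invPow_of_le (Nat.le_succ 4) h₂)).add h₃).congr_left fun m ↦ ?_
  have hrec : bondFreeDensity (m + 4 + 1) = _ :=
    sub_eq_iff_eq_add.1 (bondFreeDensity_increment_rec m)
  rw [hrec]
  push_cast
  rw [show (m : ℝ) + 4 + 1 - 1 = m + 4 by ring, show (m : ℝ) + 4 - 1 = m + 3 by ring]
  field_simp
  ring

end BondFreeDensity

/-! ### The limiting density -/

section LimitDensity

open Polynomial Filter Topology

lemma abs_sub_exp_neg_two_le {f f' : ℝ → ℝ} {ε : ℝ} (hf : ∀ x, HasDerivAt f (f' x) x)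
    (hf₁ : f 1 = 1) (hε : ∀ x ∈ Set.Icc (0 : ℝ) 1, |f' x - 2 * f x| ≤ ε) :
    |f 0 - Real.exp (-2)| ≤ ε := by
  have hderiv (x : ℝ) : HasDerivAt (fun x ↦ Real.exp (-2 * x) * f x)
      (Real.exp (-2 * x) * (f' x - 2 * f x)) x := by
    exact ((hasDerivAt_const_mul (-2 : ℝ)).exp.mul (hf x)).congr_deriv (by ring)
  have hbound (x : ℝ) (hx : x ∈ Set.Icc (0 : ℝ) 1) :
      ‖Real.exp (-2 * x) * (f' x - 2 * f x)‖ ≤ ε := by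
    rw [norm_mul, Real.norm_of_nonneg (Real.exp_pos _).le, Real.norm_eq_abs]
    have hexp : Real.exp (-2 * x) ≤ 1 := Real.exp_le_one_iff.2 (by linarith [hx.1])
    exact (mul_le_of_le_one_left (abs_nonneg _) hexp).trans (hε x hx)
  have := (convex_Icc (0 : ℝ) 1).norm_image_sub_le_of_norm_hasDerivWithin_le
    (fun x _ ↦ (hderiv x).hasDerivWithinAt) hbound (Set.right_mem_Icc.2 zero_le_one)
    (Set.left_mem_Icc.2 zero_le_one)
  simpa [hf₁] using this

/-- The bond enumerator as an expectation over a uniformly random permutation. -/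
noncomputable def bondMean (m : ℕ) (x : ℝ) : ℝ := (bondPoly m).eval x / (m + 1).factorial

/-- The derivative of `bondMean m`. -/
noncomputable def bondMeanDeriv (m : ℕ) (x : ℝ) : ℝ :=
  (derivative (bondPoly m)).eval x / (m + 1).factorial

/-- The enumerator `initialBondPoly` as an expectation over a uniformly random permutation. -/
noncomputable def initialBondMean (m : ℕ) (x : ℝ) : ℝ :=
  (initialBondPoly m).eval x / (m + 1).factorial

lemma hasDerivAt_bondMean (m : ℕ) (x : ℝ) : HasDerivAt (bondMean m) (bondMeanDeriv m x) x :=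
  ((bondPoly m).hasDerivAt x).div_const _

lemma bondMean_zero (m : ℕ) : bondMean m 0 = bondFreeDensity (m + 1) := by
  rw [bondMean, eval_zero_bondPoly, bondFreeDensity]

lemma eval_one_bondPoly (m : ℕ) : (bondPoly m).eval 1 = (m + 1).factorial := by
  simp [bondPoly, eval_finsetSum, Fintype.card_perm]

lemma bondMean_one (m : ℕ) : bondMean m 1 = 1 := by
  rw [bondMean, eval_one_bondPoly, div_self (by positivity)]

lemma sum_perm_div_factorial_mem_Icc {n : ℕ} {w : Perm (Fin n) → ℝ}
    (hw : ∀ π, w π ∈ Set.Icc 0 1) : (∑ π, w π) / n.factorial ∈ Set.Icc (0 : ℝ) 1 := by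
  refine ⟨div_nonneg (sum_nonneg fun π _ ↦ (hw π).1) (by positivity),
    div_le_one_of_le₀ ?_ (by positivity)⟩
  simpa [Fintype.card_perm] using sum_le_sum fun π (_ : π ∈ univ) ↦ (hw π).2

variable {x : ℝ} (m : ℕ)

lemma bondMean_mem_Icc (hx : x ∈ Set.Icc (0 : ℝ) 1) : bondMean m x ∈ Set.Icc (0 : ℝ) 1 := by
  rw [bondMean, bondPoly, eval_finsetSum]
  refine sum_perm_div_factorial_mem_Icc fun π ↦ ?_
  rw [eval_pow, eval_X]
  exact ⟨pow_nonneg hx.1 _, pow_le_one₀ hx.1 hx.2⟩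

lemma initialBondMean_mem_Icc (hx : x ∈ Set.Icc (0 : ℝ) 1) :
    initialBondMean m x ∈ Set.Icc (0 : ℝ) 1 := by
  rw [initialBondMean, initialBondPoly, eval_finsetSum]
  refine sum_perm_div_factorial_mem_Icc fun π ↦ ?_
  split_ifs
  · rw [eval_pow, eval_X]
    exact ⟨pow_nonneg hx.1 _, pow_le_one₀ hx.1 hx.2⟩
  · simp

lemma eval_one_derivative_bondPoly_le :
    (derivative (bondPoly m)).eval 1 ≤ 2 * ((m + 1).factorial : ℝ) := by
  induction m with
  | zero => simp [bondPoly_zero]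
  | succ m ih =>
    rw [derivative_bondPoly_succ]
    simp only [eval_add, eval_sub, eval_mul, eval_pow, eval_X, eval_one, eval_natCast, eval_ofNat,
      eval_one_bondPoly, Nat.factorial_succ (m + 1)]
    push_cast
    nlinarith [Nat.cast_nonneg (α := ℝ) m]

lemma bondMeanDeriv_mem_Icc (hx : x ∈ Set.Icc (0 : ℝ) 1) :
    bondMeanDeriv m x ∈ Set.Icc (0 : ℝ) 2 := by
  have hsum (y : ℝ) : (derivative (bondPoly m)).eval y =
      ∑ π : Perm (Fin (m + 1)), #(bonds π) * y ^ (#(bonds π) - 1) := by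
    simp [derivative_bondPoly, eval_finsetSum]
  have hmono : (derivative (bondPoly m)).eval x ≤ (derivative (bondPoly m)).eval 1 := by
    rw [hsum, hsum]
    gcongr
    · exact hx.1
    · exact hx.2
  refine ⟨div_nonneg ?_ (by positivity), (div_le_iff₀ (by positivity)).2
    (hmono.trans (eval_one_derivative_bondPoly_le m))⟩
  rw [hsum]
  exact sum_nonneg fun π _ ↦ mul_nonneg (by positivity) (pow_nonneg hx.1 _)

lemma bondMean_succ_sub :
    bondMean (m + 1) x - bondMean m x =
      (2 * (x - 1) * bondMean m x - (x - 1) * bondMeanDeriv m x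
        - (x - 1) ^ 2 * initialBondMean m x) / (m + 2) := by
  simp only [bondMean, bondMeanDeriv, initialBondMean, bondPoly_succ, eval_add, eval_sub, eval_mul,
    eval_pow, eval_X, eval_one, eval_natCast, eval_ofNat, Nat.factorial_succ (m + 1)]
  push_cast
  field_simp
  ring

lemma bondMeanDeriv_sub_two_mul_bondMean :
    bondMeanDeriv (m + 2) x - 2 * bondMean (m + 2) x =
      (2 * (1 - x) * bondMeanDeriv (m + 1) x + (x - 1) ^ 2 * bondMeanDeriv m x / (m + 2)
        - 2 * bondMean (m + 1) x) / (m + 3)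
      - 2 * (bondMean (m + 2) x - bondMean (m + 1) x) := by
  have h := congrArg (eval x) (derivative_bondPoly_rec m)
  simp only [bondMean, bondMeanDeriv, eval_add, eval_sub, eval_mul, eval_pow, eval_X, eval_one,
    eval_natCast, eval_ofNat, Nat.factorial_succ (m + 1), Nat.factorial_succ (m + 2)] at h ⊢
  push_cast
  field_simp
  linear_combination ((m : ℝ) + 2) * (m + 3) * h

lemma abs_bondMean_succ_sub_le (hx : x ∈ Set.Icc (0 : ℝ) 1) :
    |bondMean (m + 1) x - bondMean m x| ≤ 5 / (m + 2) := by
  obtain ⟨hp₀, hp₁⟩ := bondMean_mem_Icc m hx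
  obtain ⟨hd₀, hd₁⟩ := bondMeanDeriv_mem_Icc m hx
  obtain ⟨hu₀, hu₁⟩ := initialBondMean_mem_Icc m hx
  have hy₀ : 0 ≤ 1 - x := sub_nonneg.2 hx.2
  have hy₁ : 1 - x ≤ 1 := sub_le_self 1 hx.1
  have hyp : (1 - x) * bondMean m x ≤ 1 := mul_le_one₀ hy₁ hp₀ hp₁
  have hyd : (1 - x) * bondMeanDeriv m x ≤ 1 * 2 := mul_le_mul hy₁ hd₁ hd₀ zero_le_one
  have hyu : (1 - x) ^ 2 * initialBondMean m x ≤ 1 := mul_le_one₀ (pow_le_one₀ hy₀ hy₁) hu₀ hu₁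
  rw [bondMean_succ_sub, abs_div, abs_of_nonneg (by positivity : (0 : ℝ) ≤ m + 2)]
  gcongr
  rw [abs_le]
  constructor <;>
    linarith [mul_nonneg hy₀ hp₀, mul_nonneg hy₀ hd₀, mul_nonneg (pow_nonneg hy₀ 2) hu₀]

lemma abs_bondMeanDeriv_sub_le (hx : x ∈ Set.Icc (0 : ℝ) 1) :
    |bondMeanDeriv (m + 2) x - 2 * bondMean (m + 2) x| ≤ 15 / ((m : ℝ) + 3) := by
  obtain ⟨hp₀, hp₁⟩ := bondMean_mem_Icc (m + 1) hx
  obtain ⟨hd₀, hd₁⟩ := bondMeanDeriv_mem_Icc m hx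
  obtain ⟨he₀, he₁⟩ := bondMeanDeriv_mem_Icc (m + 1) hx
  have hstep := abs_bondMean_succ_sub_le (m + 1) hx
  have hy₀ : 0 ≤ 1 - x := sub_nonneg.2 hx.2
  have hy₁ : 1 - x ≤ 1 := sub_le_self 1 hx.1
  have hye : (1 - x) * bondMeanDeriv (m + 1) x ≤ 1 * 2 := mul_le_mul hy₁ he₁ he₀ zero_le_one
  have hyd : (1 - x) ^ 2 * bondMeanDeriv m x ≤ 1 * 2 :=
    mul_le_mul (pow_le_one₀ hy₀ hy₁) hd₁ hd₀ zero_le_one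
  have hsmall : (x - 1) ^ 2 * bondMeanDeriv m x / (m + 2) ∈ Set.Icc (0 : ℝ) 1 :=
    ⟨by positivity, div_le_one_of_le₀ (by linarith [Nat.cast_nonneg (α := ℝ) m]) (by positivity)⟩
  have hnum : |(2 * (1 - x) * bondMeanDeriv (m + 1) x + (x - 1) ^ 2 * bondMeanDeriv m x / (m + 2)
      - 2 * bondMean (m + 1) x) / (m + 3)| ≤ 5 / ((m : ℝ) + 3) := by
    rw [abs_div, abs_of_nonneg (by positivity : (0 : ℝ) ≤ m + 3)]
    gcongr
    rw [abs_le]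
    constructor <;> linarith [hsmall.1, hsmall.2, mul_nonneg hy₀ he₀]
  rw [bondMeanDeriv_sub_two_mul_bondMean]
  refine (norm_sub_le (_ : ℝ) _).trans ?_
  rw [Real.norm_eq_abs, Real.norm_eq_abs, abs_mul, abs_two]
  rw [show ((m + 1 : ℕ) : ℝ) + 2 = m + 3 by push_cast; ring] at hstep
  calc _ ≤ 5 / ((m : ℝ) + 3) + 2 * (5 / (m + 3)) := by gcongr
    _ = 15 / (m + 3) := by ring

lemma tendsto_bondFreeDensity : Tendsto bondFreeDensity atTop (𝓝 (Real.exp (-2))) := by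
  rw [← tendsto_add_atTop_iff_nat 3, tendsto_iff_norm_sub_tendsto_zero]
  have hbound : Tendsto (fun m : ℕ ↦ 15 / ((m : ℝ) + 3)) atTop (𝓝 0) :=
    tendsto_const_nhds.div_atTop
      (tendsto_atTop_add_const_right _ _ tendsto_natCast_atTop_atTop)
  refine squeeze_zero (fun m ↦ norm_nonneg _) (fun m ↦ ?_) hbound
  rw [← bondMean_zero]
  exact abs_sub_exp_neg_two_le (hasDerivAt_bondMean (m + 2)) (bondMean_one _)
    fun x hx ↦ abs_bondMeanDeriv_sub_le m hx

end LimitDensity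

/-! ### Counting permutations that respect prescribed sets -/

section Counting

/-- The permutations that respect a pair of colourings form a coset of the stabilizer of one of
them, if there are any. -/
lemma ncard_perm_apply_eq_le {α ι : Type*} [Fintype α] [Fintype ι] [DecidableEq ι]
    (f g : α → ι) :
    {π : Perm α | ∀ x, g (π x) = f x}.ncard ≤ ∏ i, (#{x | f x = i}).factorial := by
  classical
  rcases Set.eq_empty_or_nonempty {π : Perm α | ∀ x, g (π x) = f x} with h | ⟨π₀, hπ₀⟩
  · simp [h]
  have hstab : {σ : Perm α | f ∘ σ = f}.ncard = ∏ i, (#{x | f x = i}).factorial := by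
    rw [← Nat.card_coe_set_eq, Set.coe_ofPred, Nat.card_eq_fintype_card, DomMulAct.stabilizer_card]
    simp only [Fintype.card_subtype]
  rw [← hstab]
  refine Set.ncard_le_ncard_of_injOn (π₀⁻¹ * ·) (fun π hπ ↦ ?_) (mul_right_injective _).injOn
  ext x
  simpa [hπ x] using (hπ₀ (π₀⁻¹ (π x))).symm

lemma apply_mem_iff_of_mapsTo {α : Type*} {π : Perm α} {s t : Finset α}
    (h : ∀ x ∈ s, π x ∈ t) (hst : #t ≤ #s) (x : α) : π x ∈ t ↔ x ∈ s := by
  classical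
  have himage : s.image π = t :=
    eq_of_subset_of_card_le (image_subset_iff.2 h) (by rwa [card_image_of_injective _ π.injective])
  rw [← himage, mem_image]
  simp

lemma ncard_mapsTo_mapsTo_le {α : Type*} [Fintype α] {s s' t t' : Finset α}
    (hs : Disjoint s s') (hst : #t ≤ #s) (hst' : #t' ≤ #s') :
    {π : Perm α | (∀ x ∈ s, π x ∈ t) ∧ ∀ x ∈ s', π x ∈ t'}.ncard ≤
      (#s).factorial * (#s').factorial * (Fintype.card α - #s - #s').factorial := by
  classical
  let colour (u u' : Finset α) (x : α) : Fin 3 := if x ∈ u then 0 else if x ∈ u' then 1 else 2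
  have hsub : {π : Perm α | (∀ x ∈ s, π x ∈ t) ∧ ∀ x ∈ s', π x ∈ t'} ⊆
      {π | ∀ x, colour t t' (π x) = colour s s' x} := fun π ⟨h, h'⟩ x ↦ by
    simp only [colour, apply_mem_iff_of_mapsTo h hst, apply_mem_iff_of_mapsTo h' hst']
  refine (Set.ncard_le_ncard hsub).trans ((ncard_perm_apply_eq_le _ _).trans_eq ?_)
  have h₀ : ({x | colour s s' x = 0} : Finset α) = s := by
    ext x
    simp only [colour, mem_filter, mem_univ, true_and]
    split_ifs <;> simp_all
  have h₁ : ({x | colour s s' x = 1} : Finset α) = s' := by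
    ext x
    have : x ∈ s → x ∉ s' := fun h ↦ disjoint_left.1 hs h
    simp only [colour, mem_filter, mem_univ, true_and]
    split_ifs <;> simp_all
  have h₂ : ({x | colour s s' x = 2} : Finset α) = (s ∪ s')ᶜ := by
    ext x
    simp only [colour, mem_filter, mem_univ, true_and, mem_compl, mem_union]
    split_ifs <;> simp_all
  rw [Fin.prod_univ_three, h₀, h₁, h₂, card_compl, card_union_of_disjoint hs, Nat.sub_sub]

lemma ncard_mapsTo_le {α : Type*} [Fintype α] {s t : Finset α} (hst : #t ≤ #s) :
    {π : Perm α | ∀ x ∈ s, π x ∈ t}.ncard ≤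
      (#s).factorial * (Fintype.card α - #s).factorial := by
  simpa using ncard_mapsTo_mapsTo_le (disjoint_empty_right s) hst (le_refl #(∅ : Finset α))

/-- The positions, or values, `i, …, i + k - 1` of a permutation of length `n`, cut off at `n`. -/
def window (n i k : ℕ) : Finset (Fin n) := {x | i ≤ x.val ∧ x.val < i + k}

lemma mem_window {n i k : ℕ} {x : Fin n} : x ∈ window n i k ↔ i ≤ x.val ∧ x.val < i + k := by
  simp [window]

lemma map_valEmbedding_window (n i k : ℕ) :
    (window n i k).map Fin.valEmbedding = Ico i (min n (i + k)) := by
  ext x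
  simp only [mem_map, mem_window, Fin.valEmbedding_apply, mem_Ico, lt_min_iff]
  exact ⟨by rintro ⟨y, hy, rfl⟩; omega, fun h ↦ ⟨⟨x, h.2.1⟩, ⟨h.1, h.2.2⟩, rfl⟩⟩

lemma card_window (n i k : ℕ) : #(window n i k) = min n (i + k) - i := by
  rw [← card_map Fin.valEmbedding, map_valEmbedding_window, Nat.card_Ico]

lemma card_window_le (n i k : ℕ) : #(window n i k) ≤ k := by
  rw [card_window]
  omega

lemma card_window_of_le {n i k : ℕ} (h : i + k ≤ n) : #(window n i k) = k := by
  rw [card_window]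
  omega

/-- `π` maps the `k` positions starting at `i` into the `k` values starting at `a`. When
`i + k ≤ n`, these positions form a block of `π`. -/
def MapsWindow {n : ℕ} (π : Perm (Fin n)) (k i a : ℕ) : Prop :=
  ∀ x ∈ window n i k, π x ∈ window n a k

variable {n k i : ℕ}

lemma MapsWindow.apply_mem_iff {π : Perm (Fin n)} {a : ℕ} (h : MapsWindow π k i a)
    (hi : i + k ≤ n) (x : Fin n) : π x ∈ window n a k ↔ x ∈ window n i k :=
  apply_mem_iff_of_mapsTo h ((card_window_le n a k).trans_eq (card_window_of_le hi).symm) x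

lemma MapsWindow.add_le {π : Perm (Fin n)} {a : ℕ} (h : MapsWindow π k i a) (hi : i + k ≤ n)
    (hk : 0 < k) : a + k ≤ n := by
  have hcard := card_le_card_of_injOn π h π.injective.injOn
  rw [card_window_of_le hi, card_window] at hcard
  omega

lemma ncard_mapsWindow_le (hi : i + k ≤ n) (a : ℕ) :
    {π : Perm (Fin n) | MapsWindow π k i a}.ncard ≤ k.factorial * (n - k).factorial := by
  have h := ncard_mapsTo_le ((card_window_le n a k).trans_eq (card_window_of_le hi).symm)
  rwa [card_window_of_le hi, Fintype.card_fin] at h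

lemma ncard_mapsWindow_and_mapsWindow_le {k' i' : ℕ} (hi : i + k ≤ i') (hi' : i' + k' ≤ n)
    (a a' : ℕ) :
    {π : Perm (Fin n) | MapsWindow π k i a ∧ MapsWindow π k' i' a'}.ncard ≤
      k.factorial * k'.factorial * (n - k - k').factorial := by
  have hi₀ : i + k ≤ n := by omega
  have hdisj : Disjoint (window n i k) (window n i' k') := disjoint_left.2 fun x hx hx' ↦ by
    rw [mem_window] at hx hx'
    omega
  have h := ncard_mapsTo_mapsTo_le hdisj
    ((card_window_le n a k).trans_eq (card_window_of_le hi₀).symm)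
    ((card_window_le n a' k').trans_eq (card_window_of_le hi').symm)
  rwa [card_window_of_le hi₀, card_window_of_le hi', Fintype.card_fin] at h

lemma ncard_mapsWindow_and_apply_eq_le (hi : i + k ≤ n) {x : Fin n} (hx : x ∉ window n i k)
    (y : Fin n) (a : ℕ) :
    {π : Perm (Fin n) | MapsWindow π k i a ∧ π x = y}.ncard ≤
      k.factorial * (n - k - 1).factorial := by
  have h := ncard_mapsTo_mapsTo_le (t' := {y}) (disjoint_singleton_right.2 hx)
    ((card_window_le n a k).trans_eq (card_window_of_le hi).symm) (by simp)
  simpa [MapsWindow, card_window_of_le hi] using h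

lemma ncard_biUnion_le_of_le {ι α : Type*} {t : Finset ι} {s : ι → Set α} {c : ℕ}
    (h : ∀ i ∈ t, (s i).ncard ≤ c) : (⋃ i ∈ t, s i).ncard ≤ #t * c :=
  (set_ncard_biUnion_le t s).trans (sum_le_card_nsmul t _ c h)

end Counting

/-! ### Corners -/

/-- `π` maps one of its two extreme positions to an extreme value. For lengths `n ≥ 3` this means
that `π` has a block of size `n - 1`. -/
def HasCorner {m : ℕ} (π : Perm (Fin (m + 1))) : Prop :=
  (π 0 = 0 ∨ π (Fin.last m) = Fin.last m) ∨ π 0 = Fin.last m ∨ π (Fin.last m) = 0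

/-- The number of bond-free permutations of length `m + 1` that fix the first point. -/
noncomputable def fixFirstCount (m : ℕ) : ℕ := {π : Perm (Fin (m + 1)) | BondFree π ∧ π 0 = 0}.ncard

/-- The number of bond-free permutations of length `m + 1` that fix the first and the last point. -/
noncomputable def fixEndsCount (m : ℕ) : ℕ :=
  {π : Perm (Fin (m + 1)) | BondFree π ∧ π 0 = 0 ∧ π (Fin.last m) = Fin.last m}.ncard

section Corners

variable {m n : ℕ}

lemma bondFree_mul_revPerm {π : Perm (Fin n)} : BondFree (π * Fin.revPerm) ↔ BondFree π := by
  have key {σ : Perm (Fin n)} (h : BondFree σ) : BondFree (σ * Fin.revPerm) := fun x y hxy hadj ↦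
    h y.rev x.rev (by simp only [Fin.val_rev]; omega) hadj.symm
  refine ⟨fun h ↦ ?_, key⟩
  convert key h
  ext x
  simp

lemma bondFree_revPerm_mul {π : Perm (Fin n)} : BondFree (Fin.revPerm * π) ↔ BondFree π := by
  refine forall₃_congr fun x y _ ↦ not_congr ?_
  simp only [Perm.mul_apply, Fin.revPerm_apply, Fin.val_rev]
  omega

lemma bondFree_insertFirst_zero {τ : Perm (Fin (m + 1))} :
    BondFree (insertFirst 0 τ) ↔ BondFree τ ∧ τ 0 ≠ 0 := by
  have hsep (i : Fin m) : separatingValue τ i ≠ 0 := fun h ↦ by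
    rw [Fin.ext_iff, val_separatingValue, Fin.val_zero] at h
    have := val_apply_eq_iff τ i.castSucc i.succ
    rw [Fin.val_castSucc, Fin.val_succ] at this
    omega
  have hzero : 0 ∈ creatingValues τ ↔ τ 0 = 0 := by
    simp [creatingValues, Fin.ext_iff, eq_comm]
  simp only [← bonds_eq_empty_iff, eq_empty_iff_forall_notMem, Fin.forall_fin_succ (n := m),
    zero_mem_bonds_insertFirst, succ_mem_bonds_insertFirst, hzero, hsep, ne_eq, not_false_eq_true,
    and_true]
  exact and_comm

lemma ncard_fixFirst_add_ncard_fixFirst {p : Perm (Fin (m + 1)) → Prop}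
    {q : Perm (Fin (m + 2)) → Prop} (hpq : ∀ τ, q (insertFirst 0 τ) ↔ p τ) :
    {π | BondFree π ∧ π 0 = 0 ∧ q π}.ncard + {τ | BondFree τ ∧ τ 0 = 0 ∧ p τ}.ncard =
      {τ | BondFree τ ∧ p τ}.ncard := by
  have hinj : Function.Injective (insertFirst (0 : Fin (m + 2))) := fun τ τ' h ↦
    congrArg Prod.snd ((insertFirst_bijective m).1 (a₁ := (0, τ)) (a₂ := (0, τ')) h)
  have himage : {π | BondFree π ∧ π 0 = 0 ∧ q π} =
      insertFirst 0 '' {τ | BondFree τ ∧ τ 0 ≠ 0 ∧ p τ} := by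
    ext π
    obtain ⟨⟨v, τ⟩, rfl⟩ := (insertFirst_bijective m).2 π
    constructor
    · rintro ⟨hπ, h₀, hq⟩
      obtain rfl : v = 0 := by rwa [insertFirst_zero] at h₀
      obtain ⟨hτ, hτ₀⟩ := bondFree_insertFirst_zero.1 hπ
      exact ⟨τ, ⟨hτ, hτ₀, (hpq τ).1 hq⟩, rfl⟩
    · rintro ⟨σ, ⟨hσ, hσ₀, hp⟩, hστ⟩
      rw [← hστ]
      exact ⟨bondFree_insertFirst_zero.2 ⟨hσ, hσ₀⟩, insertFirst_zero _ _, (hpq σ).2 hp⟩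
  rw [himage, Set.ncard_image_of_injective _ hinj, ← Set.ncard_union_eq]
  · congr 1
    ext τ
    simp only [Set.mem_union, Set.mem_ofPred_eq]
    tauto
  · exact Set.disjoint_left.2 fun τ h h' ↦ h.2.1 h'.2.1

lemma fixFirstCount_succ_add (m : ℕ) :
    fixFirstCount (m + 1) + fixFirstCount m = bondFreeCount (m + 1) := by
  simpa [fixFirstCount, bondFreeCount] using
    ncard_fixFirst_add_ncard_fixFirst (m := m) (p := fun _ ↦ True) (q := fun _ ↦ True) (by simp)

lemma ncard_fixLast (m : ℕ) :
    {π : Perm (Fin (m + 1)) | BondFree π ∧ π (Fin.last m) = Fin.last m}.ncard =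
      fixFirstCount m := by
  rw [fixFirstCount, ← Set.ncard_image_of_injective _
    ((mul_right_injective Fin.revPerm).comp (mul_left_injective Fin.revPerm))]
  congr 1
  ext π
  constructor
  · rintro ⟨σ, ⟨hσ, hlast⟩, rfl⟩
    refine ⟨bondFree_revPerm_mul.2 (bondFree_mul_revPerm.2 hσ), ?_⟩
    simp [hlast]
  · rintro ⟨hπ, h₀⟩
    refine ⟨Fin.revPerm * (π * Fin.revPerm),
      ⟨bondFree_revPerm_mul.2 (bondFree_mul_revPerm.2 hπ), ?_⟩, ?_⟩
    · simp [h₀]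
    · ext x
      simp

lemma fixEndsCount_succ_add (m : ℕ) :
    fixEndsCount (m + 1) + fixEndsCount m = fixFirstCount m := by
  rw [← ncard_fixLast]
  refine ncard_fixFirst_add_ncard_fixFirst fun τ ↦ ?_
  rw [← Fin.succ_last, insertFirst_succ, Fin.succAbove_zero, Fin.succ_inj]

lemma fixFirstCount_le (m : ℕ) : fixFirstCount m ≤ m.factorial := by
  have h := ncard_mapsTo_le (s := {(0 : Fin (m + 1))}) (t := {0}) le_rfl
  simp only [mem_singleton, forall_eq, card_singleton, Nat.factorial_one, Fintype.card_fin,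
    Nat.add_sub_cancel, one_mul] at h
  exact (Set.ncard_le_ncard fun π hπ ↦ hπ.2).trans h

lemma fixEndsCount_succ_le (m : ℕ) : fixEndsCount (m + 1) ≤ m.factorial := by
  have h := ncard_mapsTo_mapsTo_le (s := {(0 : Fin (m + 2))}) (t := {0}) (s' := {Fin.last (m + 1)})
    (t' := {Fin.last (m + 1)}) (by simp [Fin.ext_iff]) le_rfl le_rfl
  simp only [mem_singleton, forall_eq, card_singleton, Nat.factorial_one, Fintype.card_fin,
    one_mul] at h
  exact (Set.ncard_le_ncard fun π hπ ↦ hπ.2).trans h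

lemma ncard_hasCorner (m : ℕ) :
    {π : Perm (Fin (m + 2)) | BondFree π ∧ HasCorner π}.ncard + 2 * fixEndsCount (m + 1) =
      4 * fixFirstCount (m + 1) := by
  let diag : Set (Perm (Fin (m + 2))) :=
    {π | BondFree π ∧ (π 0 = 0 ∨ π (Fin.last _) = Fin.last _)}
  let anti : Set (Perm (Fin (m + 2))) :=
    {π | BondFree π ∧ (π 0 = Fin.last _ ∨ π (Fin.last _) = 0)}
  have hunion : {π : Perm (Fin (m + 2)) | BondFree π ∧ HasCorner π} = diag ∪ anti :=
    Set.ext fun π ↦ and_or_left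
  have hne : (0 : Fin (m + 2)) ≠ Fin.last _ := by simp [Fin.ext_iff]
  have hdisj : Disjoint diag anti := by
    refine Set.disjoint_left.2 fun π ⟨_, h⟩ ⟨_, h'⟩ ↦ ?_
    have hinj := hne.imp (π.injective (a₁ := 0) (a₂ := Fin.last _))
    rcases h with h | h <;> rcases h' with h' | h' <;> simp_all
  have hsymm : anti.ncard = diag.ncard := by
    rw [← Set.ncard_image_of_injective anti (mul_right_injective Fin.revPerm)]
    congr 1
    ext π
    constructor
    · rintro ⟨σ, ⟨hσ, h⟩, rfl⟩
      exact ⟨bondFree_revPerm_mul.2 hσ, h.imp (by simp +contextual) (by simp +contextual)⟩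
    · rintro ⟨hπ, h⟩
      refine ⟨Fin.revPerm * π, ⟨bondFree_revPerm_mul.2 hπ, h.imp ?_ ?_⟩, ?_⟩
      · simp +contextual
      · simp +contextual
      · ext x
        simp
  have hdiag : diag.ncard + fixEndsCount (m + 1) = 2 * fixFirstCount (m + 1) := by
    have hor : diag = {π | BondFree π ∧ π 0 = 0} ∪ {π | BondFree π ∧ π (Fin.last _) = Fin.last _} :=
      Set.ext fun π ↦ and_or_left
    have hand : {π | BondFree π ∧ π 0 = 0 ∧ π (Fin.last (m + 1)) = Fin.last (m + 1)} =
        {π | BondFree π ∧ π 0 = 0} ∩ {π | BondFree π ∧ π (Fin.last _) = Fin.last _} :=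
      Set.ext fun π ↦ and_and_left
    rw [hor, fixEndsCount, hand, Set.ncard_union_add_ncard_inter, ncard_fixLast, two_mul,
      fixFirstCount]
  rw [hunion, Set.ncard_union_eq hdisj, hsymm]
  omega

lemma ncard_hasCorner_bounds (m : ℕ) :
    4 * bondFreeCount (m + 2) ≤
        {π : Perm (Fin (m + 3)) | BondFree π ∧ HasCorner π}.ncard + 6 * bondFreeCount (m + 1) ∧
      {π : Perm (Fin (m + 3)) | BondFree π ∧ HasCorner π}.ncard + 6 * bondFreeCount (m + 1) ≤
        4 * bondFreeCount (m + 2) + 8 * m.factorial := by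
  have h : {π : Perm (Fin (m + 3)) | BondFree π ∧ HasCorner π}.ncard + 2 * fixEndsCount (m + 2) =
      4 * fixFirstCount (m + 2) := ncard_hasCorner (m + 1)
  have hB : fixFirstCount (m + 2) + _ = bondFreeCount (m + 2) := fixFirstCount_succ_add (m + 1)
  have hB' := fixFirstCount_succ_add m
  have hC : fixEndsCount (m + 2) + _ = _ := fixEndsCount_succ_add (m + 1)
  have hBle := fixFirstCount_le m
  have hCle := fixEndsCount_succ_le m
  omega

end Corners

/-! ### Counting blocks by their size -/

/-- The `k` positions starting at `i` form a block of `π`, provided that `i + k ≤ n`. -/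
def HasBlockAt {n : ℕ} (π : Perm (Fin n)) (k i : ℕ) : Prop := ∃ a, MapsWindow π k i a

/-- `π` has a block of size `k`. -/
def HasBlock {n : ℕ} (π : Perm (Fin n)) (k : ℕ) : Prop := ∃ i, i + k ≤ n ∧ HasBlockAt π k i

section HasBlock

lemma ncard_hasBlockAt_le {n k l i : ℕ} (hn : n = k + l) (hk : 0 < k) (hi : i ≤ l) :
    {π : Perm (Fin n) | HasBlockAt π k i}.ncard ≤ k.factorial * (l + 1).factorial := by
  have hik : i + k ≤ n := by omega
  have hsub : {π : Perm (Fin n) | HasBlockAt π k i} ⊆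
      ⋃ a ∈ range (l + 1), {π | MapsWindow π k i a} := fun π ⟨a, ha⟩ ↦ by
    have := ha.add_le hik hk
    exact Set.mem_iUnion₂.2 ⟨a, mem_range.2 (by omega), ha⟩
  refine (Set.ncard_le_ncard hsub).trans
    ((ncard_biUnion_le_of_le fun a _ ↦ ncard_mapsWindow_le hik a).trans_eq ?_)
  rw [card_range, hn, Nat.add_sub_cancel_left, Nat.factorial_succ, mul_left_comm]

lemma ncard_hasBlock_le {n k l : ℕ} (hn : n = k + l) (hk : 0 < k) :
    {π : Perm (Fin n) | HasBlock π k}.ncard ≤ k.factorial * (l + 2).factorial := by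
  have hsub : {π : Perm (Fin n) | HasBlock π k} ⊆
      ⋃ i ∈ range (l + 1), {π | HasBlockAt π k i} := fun π ⟨i, hi, h⟩ ↦
    Set.mem_iUnion₂.2 ⟨i, mem_range.2 (by omega), h⟩
  refine (Set.ncard_le_ncard hsub).trans ((ncard_biUnion_le_of_le fun i hi ↦
    ncard_hasBlockAt_le hn hk (Nat.lt_succ_iff.1 (mem_range.1 hi))).trans ?_)
  rw [card_range, Nat.factorial_succ (l + 1), mul_left_comm]
  gcongr
  omega

lemma factorial_add_mul_factorial_add_le (a s t : ℕ) :
    (a + s).factorial * (a + t).factorial ≤ a.factorial * (a + s + t).factorial := by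
  induction s with
  | zero => rfl
  | succ s ih =>
    calc (a + s + 1).factorial * (a + t).factorial
        = (a + s + 1) * ((a + s).factorial * (a + t).factorial) := by
          rw [Nat.factorial_succ, mul_assoc]
      _ ≤ (a + s + 1 + t) * (a.factorial * (a + s + t).factorial) := by
          exact Nat.mul_le_mul (by omega) ih
      _ = a.factorial * (a + (s + 1) + t).factorial := by
          rw [show a + (s + 1) + t = a + s + t + 1 by omega, Nat.factorial_succ]
          ring

lemma sum_factorial_mul_factorial_le (m : ℕ) :
    ∑ q ∈ antidiagonal m, (5 + q.1).factorial * (5 + q.2).factorial ≤ 960 * (m + 5).factorial := by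
  have hterm (q : ℕ × ℕ) (hq : q ∈ antidiagonal m) :
      (5 + q.1).factorial * (5 + q.2).factorial ≤ 720 * (m + 4).factorial +
        ((if q = (0, m) then 120 * (m + 5).factorial else 0) +
          if q = (m, 0) then 120 * (m + 5).factorial else 0) := by
    obtain ⟨s, t⟩ := q
    obtain rfl : s + t = m := HasAntidiagonal.mem_antidiagonal.1 hq
    have h₅ : Nat.factorial 5 = 120 := rfl
    obtain rfl | s := s
    · simp only [add_zero, zero_add, add_comm 5 t, if_true, h₅]
      omega
    obtain rfl | t := t
    · simp only [add_zero, add_comm 5, if_true, h₅, mul_comm _ 120]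
      omega
    · have h := factorial_add_mul_factorial_add_le 6 s t
      rw [show Nat.factorial 6 = 720 from rfl] at h
      rw [show 5 + (s + 1) = 6 + s by omega, show 5 + (t + 1) = 6 + t by omega,
        show s + 1 + (t + 1) + 4 = 6 + s + t by omega]
      omega
  refine (sum_le_sum hterm).trans ?_
  simp only [sum_add_distrib, sum_const, sum_ite_eq', HasAntidiagonal.mem_antidiagonal,
    zero_add, add_zero, if_true, Nat.card_antidiagonal, smul_eq_mul]
  rw [Nat.factorial_succ (m + 4)]
  nlinarith [Nat.zero_le (m + 4).factorial]

lemma ncard_exists_hasBlock_le (m : ℕ) :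
    {π : Perm (Fin (m + 8)) | ∃ k ∈ Icc 5 (m + 5), HasBlock π k}.ncard ≤
      960 * (m + 5).factorial := by
  have hsub : {π : Perm (Fin (m + 8)) | ∃ k ∈ Icc 5 (m + 5), HasBlock π k} ⊆
      ⋃ q ∈ antidiagonal m, {π | HasBlock π (5 + q.1)} := fun π ⟨k, hk, hπ⟩ ↦ by
    obtain ⟨hk₅, hkm⟩ := mem_Icc.1 hk
    refine Set.mem_iUnion₂.2 ⟨(k - 5, m + 5 - k), HasAntidiagonal.mem_antidiagonal.2 (by omega), ?_⟩
    rwa [Set.mem_ofPred_eq, Nat.add_sub_of_le hk₅]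
  refine (Set.ncard_le_ncard hsub).trans ((set_ncard_biUnion_le _ _).trans ?_)
  refine (sum_le_sum fun q hq ↦ ?_).trans (sum_factorial_mul_factorial_le m)
  rw [HasAntidiagonal.mem_antidiagonal] at hq
  rw [show 5 + q.2 = 3 + q.2 + 2 by omega]
  exact ncard_hasBlock_le (by omega) (by omega)

end HasBlock

/-! ### Inflations -/

section Inflate

variable {m k : ℕ}

/-- The monotone map of positions that shrinks the `k + 1` positions starting at `i` to the single
position `i`. -/
def collapse (i : Fin (m + 1)) (x : Fin (m + k + 1)) : Fin (m + 1) :=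
  ⟨if x.val ≤ i.val then x.val else if x.val ≤ i.val + k then i.val else x.val - k, by
    split_ifs <;> omega⟩

/-- The underlying map of `inflate`. -/
def inflateFun (σ : Perm (Fin (k + 1))) (i : Fin (m + 1)) (τ : Perm (Fin (m + 1)))
    (x : Fin (m + k + 1)) : Fin (m + k + 1) :=
  ⟨if h : i.val ≤ x.val ∧ x.val ≤ i.val + k then τ i + σ ⟨x - i, by omega⟩
    else if τ (collapse i x) < τ i then τ (collapse i x) else τ (collapse i x) + k, by
    split_ifs <;> omega⟩

lemma collapse_eq_iff {i : Fin (m + 1)} {x : Fin (m + k + 1)} :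
    collapse i x = i ↔ i.val ≤ x.val ∧ x.val ≤ i.val + k := by
  simp only [collapse, Fin.ext_iff]
  split_ifs <;> omega

lemma eq_of_collapse_eq {i : Fin (m + 1)} {x y : Fin (m + k + 1)} (hx : collapse i x ≠ i)
    (hxy : collapse i x = collapse i y) : x = y := by
  simp only [collapse, ne_eq, Fin.ext_iff] at hx hxy ⊢
  split_ifs at hx hxy <;> omega

lemma collapse_surjective (i : Fin (m + 1)) :
    Function.Surjective (collapse i : Fin (m + k + 1) → Fin (m + 1)) := fun y ↦ by
  by_cases hy : y.val ≤ i.val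
  · exact ⟨⟨y, by omega⟩, Fin.ext (if_pos hy)⟩
  · refine ⟨⟨y + k, by omega⟩, Fin.ext ?_⟩
    simp only [collapse]
    split_ifs <;> omega

variable (σ : Perm (Fin (k + 1))) (i : Fin (m + 1)) (τ : Perm (Fin (m + 1)))

lemma inflateFun_of_collapse_eq {x : Fin (m + k + 1)} (hx : collapse i x = i) :
    (inflateFun σ i τ x).val =
      τ i + σ ⟨x - i, by have := collapse_eq_iff.1 hx; omega⟩ :=
  dif_pos (collapse_eq_iff.1 hx)

lemma inflateFun_of_collapse_ne {x : Fin (m + k + 1)} (hx : collapse i x ≠ i) :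
    (inflateFun σ i τ x).val =
      if τ (collapse i x) < τ i then (τ (collapse i x)).val else τ (collapse i x) + k :=
  dif_neg (mt collapse_eq_iff.2 hx)

lemma collapse_inflateFun (x : Fin (m + k + 1)) :
    collapse (τ i) (inflateFun σ i τ x) = τ (collapse i x) := by
  by_cases hx : collapse i x = i
  · rw [hx, collapse_eq_iff, inflateFun_of_collapse_eq σ i τ hx]
    omega
  · have hne := (τ.injective.ne hx).symm
    have hval := inflateFun_of_collapse_ne σ i τ hx
    rw [ne_eq, Fin.ext_iff] at hne
    simp only [Fin.lt_def] at hval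
    simp only [collapse.eq_def (τ i), Fin.ext_iff]
    split_ifs at hval ⊢ <;> omega

lemma inflateFun_injective : Function.Injective (inflateFun σ i τ) := by
  intro x y hxy
  have hcollapse : collapse i x = collapse i y := τ.injective <| by
    rw [← collapse_inflateFun σ, hxy, collapse_inflateFun]
  by_cases hx : collapse i x = i
  · have hy := hcollapse.symm.trans hx
    have hval := congrArg Fin.val hxy
    rw [inflateFun_of_collapse_eq σ i τ hx, inflateFun_of_collapse_eq σ i τ hy, add_right_inj,
      val_apply_eq_iff] at hval
    have := collapse_eq_iff.1 hx
    have := collapse_eq_iff.1 hy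
    simp only at hval
    omega
  · exact eq_of_collapse_eq hx hcollapse

/-- The permutation obtained from `τ` by replacing the entry at position `i` by a block of `k + 1`
entries that is order isomorphic to `σ`. -/
noncomputable def inflate : Perm (Fin (m + k + 1)) :=
  ofBijective _ (Finite.injective_iff_bijective.1 (inflateFun_injective σ i τ))

lemma inflate_apply (x : Fin (m + k + 1)) : inflate σ i τ x = inflateFun σ i τ x := rfl

lemma inflate_of_add {x : Fin (m + k + 1)} (j : Fin (k + 1)) (hx : x.val = i + j) :
    (inflate σ i τ x).val = τ i + σ j := by
  rw [inflate_apply, inflateFun_of_collapse_eq σ i τ (collapse_eq_iff.2 (by omega))]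
  simp [hx]

lemma collapse_inflate (x : Fin (m + k + 1)) :
    collapse (τ i) (inflate σ i τ x) = τ (collapse i x) :=
  collapse_inflateFun σ i τ x

lemma hasBlockAt_inflate : HasBlockAt (inflate σ i τ) (k + 1) i := by
  refine ⟨τ i, fun x hx ↦ ?_⟩
  rw [mem_window] at hx ⊢
  rw [inflate_of_add σ i τ ⟨x - i, by omega⟩ (by simp only; omega)]
  omega

lemma inflate_injective :
    Function.Injective fun q : Perm (Fin (k + 1)) × Perm (Fin (m + 1)) ↦ inflate q.1 i q.2 := by
  have hle {σ σ' : Perm (Fin (k + 1))} {τ τ' : Perm (Fin (m + 1))}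
      (h : inflate σ i τ = inflate σ' i τ') : (τ' i).val ≤ τ i := by
    have hval := congrArg Fin.val (Equiv.congr_fun h ⟨i + σ.symm 0, by omega⟩)
    rw [inflate_of_add σ i τ _ rfl, inflate_of_add σ' i τ' _ rfl, apply_symm_apply,
      Fin.val_zero] at hval
    omega
  rintro ⟨σ, τ⟩ ⟨σ', τ'⟩ (h : inflate σ i τ = inflate σ' i τ')
  have hi : τ i = τ' i := Fin.ext ((hle h.symm).antisymm (hle h))
  congr 1
  · ext j
    have hval := congrArg Fin.val (Equiv.congr_fun h ⟨i + j, by omega⟩)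
    rwa [inflate_of_add σ i τ _ rfl, inflate_of_add σ' i τ' _ rfl, hi, add_right_inj] at hval
  · refine Equiv.ext fun y ↦ ?_
    obtain ⟨x, rfl⟩ := collapse_surjective (k := k) i y
    rw [← collapse_inflate σ, ← collapse_inflate σ', h, hi]

lemma hasBlockAt_iff_exists_inflate {π : Perm (Fin (m + k + 1))} :
    HasBlockAt π (k + 1) i ↔
      ∃ q : Perm (Fin (k + 1)) × Perm (Fin (m + 1)), inflate q.1 i q.2 = π := by
  have hrange : Set.range (fun q : Perm (Fin (k + 1)) × Perm (Fin (m + 1)) ↦ inflate q.1 i q.2) =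
      {π | HasBlockAt π (k + 1) i} := by
    refine Set.eq_of_subset_of_ncard_le ?_ ?_
    · rintro _ ⟨q, rfl⟩
      exact hasBlockAt_inflate q.1 i q.2
    · rw [← Set.image_univ, Set.ncard_image_of_injective _ (inflate_injective i), Set.ncard_univ,
        Nat.card_prod, Nat.card_perm, Nat.card_perm, Nat.card_fin, Nat.card_fin]
      exact ncard_hasBlockAt_le (by omega) (Nat.succ_pos k) (Nat.lt_succ_iff.1 i.isLt)
  exact (Set.ext_iff.1 hrange π).symm

end Inflate

/-! ### Small blocks of bond-free permutations -/

section BondFreeBlocks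

variable {n : ℕ} {π : Perm (Fin n)}

lemma hasBlockAt_two_of_adjacent {x y : Fin n} (hxy : x.val + 1 = y.val)
    (h : (π x).val + 1 = (π y).val ∨ (π y).val + 1 = (π x).val) : HasBlockAt π 2 x := by
  refine ⟨min (π x).val (π y).val, fun z hz ↦ ?_⟩
  rw [mem_window] at hz ⊢
  obtain rfl | rfl : z = x ∨ z = y := by
    rw [Fin.ext_iff, Fin.ext_iff]
    omega
  all_goals omega

lemma BondFree.not_hasBlock_two (hπ : BondFree π) : ¬HasBlock π 2 := by
  rintro ⟨i, hi, a, h⟩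
  have h₀ := mem_window.1 (h ⟨i, by omega⟩ (mem_window.2 (by simp only; omega)))
  have h₁ := mem_window.1 (h ⟨i + 1, by omega⟩ (mem_window.2 (by simp only; omega)))
  have hne := val_apply_eq_iff π ⟨i, by omega⟩ ⟨i + 1, by omega⟩
  have := hπ ⟨i, by omega⟩ ⟨i + 1, by omega⟩ rfl
  simp only at hne
  omega

lemma bondFree_iff_not_hasBlock_two : BondFree π ↔ ¬HasBlock π 2 :=
  ⟨BondFree.not_hasBlock_two, fun h x y hxy hadj ↦
    h ⟨x, by omega, hasBlockAt_two_of_adjacent hxy hadj⟩⟩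

/-- The middle value of three consecutive ones is a neighbour of the other two values, so that it
forms a bond with the entry at the middle position, or is itself that entry. -/
lemma BondFree.not_hasBlock_three (hπ : BondFree π) : ¬HasBlock π 3 := by
  rintro ⟨i, hi, a, h⟩
  have h₀ := mem_window.1 (h ⟨i, by omega⟩ (mem_window.2 (by simp only; omega)))
  have h₁ := mem_window.1 (h ⟨i + 1, by omega⟩ (mem_window.2 (by simp only; omega)))
  have h₂ := mem_window.1 (h ⟨i + 2, by omega⟩ (mem_window.2 (by simp only; omega)))
  have hne₀ := val_apply_eq_iff π ⟨i, by omega⟩ ⟨i + 1, by omega⟩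
  have hne₁ := val_apply_eq_iff π ⟨i + 1, by omega⟩ ⟨i + 2, by omega⟩
  have hne₂ := val_apply_eq_iff π ⟨i, by omega⟩ ⟨i + 2, by omega⟩
  have := hπ ⟨i, by omega⟩ ⟨i + 1, by omega⟩ rfl
  have := hπ ⟨i + 1, by omega⟩ ⟨i + 2, by omega⟩ rfl
  simp only at hne₀ hne₁ hne₂
  omega

lemma MapsWindow.offset_eq {k d i a b : ℕ} (hd : d < k) (hi : i + d + k ≤ n)
    (ha : MapsWindow π k i a) (hb : MapsWindow π k (i + d) b) : b = a + d ∨ a = b + d := by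
  have hinter : (window n (i + d) (k - d)).image π =
      window n (max a b) (min a b + k - max a b) := by
    ext y
    obtain ⟨x, rfl⟩ := π.surjective y
    have hxa := ha.apply_mem_iff (by omega) x
    have hxb := hb.apply_mem_iff hi x
    simp only [mem_image, π.apply_eq_iff_eq, exists_eq_right, mem_window] at hxa hxb ⊢
    omega
  have hcard := congrArg card hinter
  have := ha.add_le (by omega) (by omega)
  have := hb.add_le hi (by omega)
  rw [card_image_of_injective _ π.injective, card_window_of_le (by omega), card_window] at hcard
  omega

lemma hasBlock_of_overlap {k d i : ℕ} (hd : d < k) (hi : i + d + k ≤ n)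
    (ha : HasBlockAt π k i) (hb : HasBlockAt π k (i + d)) : HasBlock π d ∧ HasBlock π (k - d) := by
  obtain ⟨a, ha⟩ := ha
  obtain ⟨b, hb⟩ := hb
  have hab := ha.offset_eq hd hi hb
  refine ⟨⟨i, by omega, if a ≤ b then a else a + k - d, fun x hx ↦ ?_⟩,
    ⟨i + d, by omega, max a b, fun x hx ↦ ?_⟩⟩
  all_goals
    have hxa := ha.apply_mem_iff (by omega) x
    have hxb := hb.apply_mem_iff hi x
    simp only [mem_window] at hx hxa hxb ⊢
  · split_ifs <;> omega
  · omega

lemma BondFree.not_overlap {d i : ℕ} (hπ : BondFree π) (hd₀ : 0 < d) (hd : d < 4)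
    (hi : i + d + 4 ≤ n) : ¬(HasBlockAt π 4 i ∧ HasBlockAt π 4 (i + d)) := fun ⟨ha, hb⟩ ↦ by
  obtain ⟨h, h'⟩ := hasBlock_of_overlap hd hi ha hb
  interval_cases d
  · exact hπ.not_hasBlock_three h'
  · exact hπ.not_hasBlock_two h
  · exact hπ.not_hasBlock_three h

end BondFreeBlocks

/-! ### Bond-free permutations with a block of size four -/

/-- All bonds of `τ` involve the position `i`, so that inflating the entry there may destroy them
all. -/
def BondFreeAwayFrom {n : ℕ} (i : Fin n) (τ : Perm (Fin n)) : Prop :=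
  ∀ x y : Fin n, x ≠ i → y ≠ i → x.val + 1 = y.val →
    ¬((τ x).val + 1 = (τ y).val ∨ (τ y).val + 1 = (τ x).val)

section FourBlocks

variable {m k : ℕ} {σ : Perm (Fin (k + 1))} {i : Fin (m + 1)} {τ : Perm (Fin (m + 1))}

lemma BondFree.of_inflate (h : BondFree (inflate σ i τ)) : BondFree σ := fun x y hxy hadj ↦ by
  refine h ⟨i + x, by omega⟩ ⟨i + y, by omega⟩ (by simp only; omega) ?_
  rw [inflate_of_add σ i τ _ rfl, inflate_of_add σ i τ _ rfl]
  omega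

lemma val_collapse_add_one_eq_iff {x y : Fin (m + k + 1)} (hx : collapse i x ≠ i)
    (hy : collapse i y ≠ i) :
    (collapse i x).val + 1 = (collapse i y).val ↔ x.val + 1 = y.val := by
  simp only [collapse, ne_eq, Fin.ext_iff] at hx hy ⊢
  split_ifs at hx hy ⊢ <;> omega

lemma val_inflate_add_one_eq_iff {x y : Fin (m + k + 1)} (hx : collapse i x ≠ i)
    (hy : collapse i y ≠ i) :
    (inflate σ i τ x).val + 1 = (inflate σ i τ y).val ↔
      (τ (collapse i x)).val + 1 = (τ (collapse i y)).val := by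
  rw [← collapse_inflate σ, ← collapse_inflate σ, val_collapse_add_one_eq_iff] <;>
    rw [collapse_inflate]
  · exact τ.injective.ne hx
  · exact τ.injective.ne hy

lemma BondFree.awayFrom_of_inflate (h : BondFree (inflate σ i τ)) : BondFreeAwayFrom i τ := by
  intro x y hx hy hxy hadj
  obtain ⟨x, rfl⟩ := collapse_surjective (k := k) i x
  obtain ⟨y, rfl⟩ := collapse_surjective (k := k) i y
  rw [← val_inflate_add_one_eq_iff (σ := σ) hx hy, ← val_inflate_add_one_eq_iff (σ := σ) hy hx]
    at hadj
  exact h x y ((val_collapse_add_one_eq_iff hx hy).1 hxy) hadj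

lemma BondFreeAwayFrom.bondFree_inflate (hτ : BondFreeAwayFrom i τ) (hσ : BondFree σ)
    (h₀ : 0 < (σ 0).val ∧ (σ 0).val < k)
    (hlast : 0 < (σ (Fin.last k)).val ∧ (σ (Fin.last k)).val < k) :
    BondFree (inflate σ i τ) := by
  intro x y hxy hadj
  have hoff {z : Fin (m + k + 1)} (hz : collapse i z ≠ i) :
      ¬((τ i).val ≤ (inflate σ i τ z).val ∧
        (inflate σ i τ z).val ≤ (τ i).val + k) := by
    rw [← collapse_eq_iff, collapse_inflate]
    exact τ.injective.ne hz
  by_cases hx : collapse i x = i <;> by_cases hy : collapse i y = i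
  · have hx' := collapse_eq_iff.1 hx
    have hy' := collapse_eq_iff.1 hy
    refine hσ ⟨x - i, by omega⟩ ⟨y - i, by omega⟩ (by simp only; omega) ?_
    rw [inflate_of_add σ i τ ⟨x - i, by omega⟩ (by simp only; omega),
      inflate_of_add σ i τ ⟨y - i, by omega⟩ (by simp only; omega)] at hadj
    omega
  · have hx' := collapse_eq_iff.1 hx
    have hy' := mt collapse_eq_iff.2 hy
    have := hoff hy
    rw [inflate_of_add σ i τ (Fin.last k) (by simp only [Fin.val_last]; omega)] at hadj
    omega
  · have hx' := mt collapse_eq_iff.2 hx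
    have hy' := collapse_eq_iff.1 hy
    have := hoff hx
    rw [inflate_of_add σ i τ (x := y) 0 (by simp only [Fin.val_zero]; omega)] at hadj
    omega
  · rw [val_inflate_add_one_eq_iff hx hy, val_inflate_add_one_eq_iff hy hx] at hadj
    exact hτ _ _ hx hy ((val_collapse_add_one_eq_iff hx hy).2 hxy) hadj

instance {n : ℕ} : DecidablePred (BondFree (n := n)) := fun π ↦
  inferInstanceAs (Decidable (∀ x y : Fin n, x.val + 1 = y.val →
    ¬((π x).val + 1 = (π y).val ∨ (π y).val + 1 = (π x).val)))

lemma bondFreeCount_four : bondFreeCount 4 = 2 := by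
  rw [bondFreeCount, Set.ncard_eq_toFinset_card', Set.toFinset_ofPred]
  decide

lemma BondFree.interior_of_four :
    ∀ {σ : Perm (Fin 4)}, BondFree σ →
      (0 < (σ 0).val ∧ (σ 0).val < 3) ∧ 0 < (σ 3).val ∧ (σ 3).val < 3 := by
  decide

lemma bondFree_inflate_four_iff {σ : Perm (Fin 4)} :
    BondFree (inflate σ i τ) ↔ BondFree σ ∧ BondFreeAwayFrom i τ :=
  ⟨fun h ↦ ⟨h.of_inflate, h.awayFrom_of_inflate⟩,
    fun ⟨hσ, hτ⟩ ↦ hτ.bondFree_inflate hσ hσ.interior_of_four.1 hσ.interior_of_four.2⟩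

lemma ncard_bondFree_hasBlockAt_four (i : Fin (m + 1)) :
    {π : Perm (Fin (m + 4)) | BondFree π ∧ HasBlockAt π 4 i}.ncard =
      2 * {τ | BondFreeAwayFrom i τ}.ncard := by
  have himage : {π : Perm (Fin (m + 4)) | BondFree π ∧ HasBlockAt π 4 i} =
      (fun q : Perm (Fin 4) × Perm (Fin (m + 1)) ↦ inflate q.1 i q.2) ''
        ({σ | BondFree σ} ×ˢ {τ | BondFreeAwayFrom i τ}) := by
    ext π
    constructor
    · rintro ⟨hπ, hblock⟩
      obtain ⟨q, rfl⟩ := (hasBlockAt_iff_exists_inflate (k := 3) i).1 hblock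
      exact ⟨q, bondFree_inflate_four_iff.1 hπ, rfl⟩
    · rintro ⟨q, hq, rfl⟩
      exact ⟨bondFree_inflate_four_iff.2 hq, hasBlockAt_inflate q.1 i q.2⟩
  rw [himage, Set.ncard_image_of_injective _ (inflate_injective i), Set.ncard_prod,
    ← bondFreeCount_four, bondFreeCount]

lemma bondFreeCount_le_ncard_awayFrom {n : ℕ} (i : Fin n) :
    bondFreeCount n ≤ {τ | BondFreeAwayFrom i τ}.ncard :=
  Set.ncard_le_ncard fun _ hτ x y _ _ hxy ↦ hτ x y hxy

lemma ncard_awayFrom_le (i : Fin (m + 2)) :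
    {τ | BondFreeAwayFrom i τ}.ncard ≤ bondFreeCount (m + 2) + 4 * (m + 1).factorial := by
  have hsub : {τ | BondFreeAwayFrom i τ} ⊆ {τ | BondFree τ} ∪
      ({τ | HasBlockAt τ 2 (min i.val m)} ∪ {τ | HasBlockAt τ 2 (i.val - 1)}) := by
    refine fun τ hτ ↦ or_iff_not_imp_left.2 fun hbond ↦ ?_
    simp only [BondFree, Set.mem_ofPred_eq, not_forall, not_not] at hbond
    obtain ⟨x, y, hxy, hadj⟩ := hbond
    have hblock := hasBlockAt_two_of_adjacent hxy hadj
    by_cases hx : x = i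
    · left
      rwa [Set.mem_ofPred_eq, ← hx, min_eq_left (by omega)]
    by_cases hy : y = i
    · right
      rwa [Set.mem_ofPred_eq, ← hy, ← hxy, Nat.add_sub_cancel]
    · exact absurd hadj (hτ x y hx hy hxy)
  have hblock {j : ℕ} (hj : j ≤ m) := ncard_hasBlockAt_le (add_comm m 2) two_pos hj
  refine (Set.ncard_le_ncard hsub).trans ((Set.ncard_union_le _ _).trans ?_)
  refine Nat.add_le_add le_rfl ((Set.ncard_union_le _ _).trans ?_)
  refine (Nat.add_le_add (hblock (min_le_right _ _)) (hblock (by omega))).trans_eq ?_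
  rw [Nat.factorial_two]
  ring

lemma sum_ncard_le_ncard_biUnion_add {ι α : Type*} [Finite α] {t : Finset ι} {s : ι → Set α}
    {c : ℕ} (h : ∀ i ∈ t, ∀ j ∈ t, i ≠ j → (s i ∩ s j).ncard ≤ c) :
    ∑ i ∈ t, (s i).ncard ≤ (⋃ i ∈ t, s i).ncard + #t ^ 2 * c := by
  classical
  induction t using Finset.induction_on with
  | empty => simp
  | insert i t hi ih =>
    have hsum := ih fun j hj l hl ↦ h j (mem_insert_of_mem hj) l (mem_insert_of_mem hl)
    have hinter : (s i ∩ ⋃ j ∈ t, s j).ncard ≤ #t * c := by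
      rw [Set.inter_iUnion₂]
      exact ncard_biUnion_le_of_le fun j hj ↦
        h i (mem_insert_self i t) j (mem_insert_of_mem hj) (ne_of_mem_of_not_mem hj hi).symm
    have hunion := Set.ncard_union_add_ncard_inter (s i) (⋃ j ∈ t, s j)
    rw [sum_insert hi, set_biUnion_insert, card_insert_of_notMem hi]
    nlinarith

lemma ncard_two_four_blocks_le {i i' : ℕ} (hi : i + 4 ≤ i') (hi' : i' ≤ m + 4) :
    {π : Perm (Fin (m + 8)) | HasBlockAt π 4 i ∧ HasBlockAt π 4 i'}.ncard ≤
      (m + 5) * ((m + 5) * (576 * m.factorial)) := by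
  have hsub : {π : Perm (Fin (m + 8)) | HasBlockAt π 4 i ∧ HasBlockAt π 4 i'} ⊆
      ⋃ a ∈ range (m + 5), ⋃ b ∈ range (m + 5), {π | MapsWindow π 4 i a ∧ MapsWindow π 4 i' b} := by
    rintro π ⟨⟨a, ha⟩, b, hb⟩
    have := ha.add_le (by omega) four_pos
    have := hb.add_le (by omega) four_pos
    simp only [Set.mem_iUnion, mem_range]
    exact ⟨a, by omega, b, by omega, ha, hb⟩
  have hcount (a b : ℕ) :=
    ncard_mapsWindow_and_mapsWindow_le (n := m + 8) (k := 4) (k' := 4) hi (by omega) a b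
  refine (Set.ncard_le_ncard hsub).trans ((ncard_biUnion_le_of_le fun a _ ↦
    ncard_biUnion_le_of_le fun b _ ↦ hcount a b).trans_eq ?_)
  simp [Nat.factorial]

lemma ncard_bondFree_two_four_blocks_le {i i' : ℕ} (hi : i ≤ m + 4) (hi' : i' ≤ m + 4)
    (hne : i ≠ i') :
    ({π : Perm (Fin (m + 8)) | BondFree π ∧ HasBlockAt π 4 i} ∩
      {π | BondFree π ∧ HasBlockAt π 4 i'}).ncard ≤ (m + 5) * ((m + 5) * (576 * m.factorial)) := by
  wlog hlt : i < i' generalizing i i'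
  · rw [Set.inter_comm]
    exact this hi' hi hne.symm (by omega)
  by_cases hdisj : i + 4 ≤ i'
  · have hsub : {π : Perm (Fin (m + 8)) | BondFree π ∧ HasBlockAt π 4 i} ∩
        {π | BondFree π ∧ HasBlockAt π 4 i'} ⊆ {π | HasBlockAt π 4 i ∧ HasBlockAt π 4 i'} :=
      fun π hπ ↦ ⟨hπ.1.2, hπ.2.2⟩
    exact (Set.ncard_le_ncard hsub).trans (ncard_two_four_blocks_le hdisj hi')
  · obtain ⟨d, rfl⟩ := Nat.exists_eq_add_of_lt hlt
    have hempty : {π : Perm (Fin (m + 8)) | BondFree π ∧ HasBlockAt π 4 i} ∩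
        {π | BondFree π ∧ HasBlockAt π 4 (i + (d + 1))} = ∅ :=
      Set.eq_empty_iff_forall_notMem.2 fun π hπ ↦
        hπ.1.1.not_overlap (Nat.succ_pos d) (by omega) (by omega) ⟨hπ.1.2, hπ.2.2⟩
    rw [add_assoc, hempty, Set.ncard_empty]
    exact Nat.zero_le _

lemma setOf_bondFree_hasBlock_four (m : ℕ) :
    {π : Perm (Fin (m + 8)) | BondFree π ∧ HasBlock π 4} =
      ⋃ i ∈ range (m + 5), {π | BondFree π ∧ HasBlockAt π 4 i} := by
  ext π
  simp only [HasBlock, Set.mem_ofPred_eq, Set.mem_iUnion, mem_range]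
  constructor
  · rintro ⟨hπ, i, hi, h⟩
    exact ⟨i, by omega, hπ, h⟩
  · rintro ⟨i, hi, hπ, h⟩
    exact ⟨hπ, i, by omega, h⟩

lemma ncard_bondFree_hasBlock_four_le (m : ℕ) :
    {π : Perm (Fin (m + 8)) | BondFree π ∧ HasBlock π 4}.ncard ≤
      2 * ((m + 5) * bondFreeCount (m + 5)) + 8 * (m + 5).factorial := by
  rw [setOf_bondFree_hasBlock_four]
  refine (ncard_biUnion_le_of_le fun i hi ↦ ((ncard_bondFree_hasBlockAt_four (m := m + 4)
    ⟨i, mem_range.1 hi⟩).trans_le (Nat.mul_le_mul_left 2 (ncard_awayFrom_le _)))).trans_eq ?_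
  rw [card_range, Nat.factorial_succ (m + 4)]
  ring

lemma pow_mul_factorial_le (m : ℕ) :
    (m + 5) ^ 2 * ((m + 5) * ((m + 5) * (576 * m.factorial))) ≤ 360000 * (m + 5).factorial := by
  have hlin : m + 5 ≤ 5 * (m + 1) := by omega
  calc (m + 5) ^ 2 * ((m + 5) * ((m + 5) * (576 * m.factorial)))
      = 576 * (m.factorial * (m + 5) ^ 4) := by ring
    _ ≤ 576 * (m.factorial * (5 * (m + 1)) ^ 4) := by gcongr
    _ = 360000 * (m.factorial * (m + 1) ^ 4) := by ring
    _ ≤ 360000 * (m + 4).factorial :=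
        Nat.mul_le_mul_left _ Nat.factorial_mul_pow_le_factorial
    _ ≤ 360000 * (m + 5).factorial :=
        Nat.mul_le_mul_left _ (Nat.factorial_le (Nat.le_succ _))

lemma le_ncard_bondFree_hasBlock_four (m : ℕ) :
    2 * ((m + 5) * bondFreeCount (m + 5)) ≤
      {π : Perm (Fin (m + 8)) | BondFree π ∧ HasBlock π 4}.ncard + 360000 * (m + 5).factorial := by
  calc 2 * ((m + 5) * bondFreeCount (m + 5))
      = ∑ i ∈ range (m + 5), 2 * bondFreeCount (m + 5) := by
        rw [sum_const, card_range, smul_eq_mul, mul_left_comm]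
    _ ≤ ∑ i ∈ range (m + 5), {π : Perm (Fin (m + 8)) | BondFree π ∧ HasBlockAt π 4 i}.ncard := by
        refine sum_le_sum fun i hi ↦ ?_
        exact (Nat.mul_le_mul_left 2 (bondFreeCount_le_ncard_awayFrom _)).trans_eq
          (ncard_bondFree_hasBlockAt_four (m := m + 4) ⟨i, mem_range.1 hi⟩).symm
    _ ≤ _ + (m + 5) ^ 2 * ((m + 5) * ((m + 5) * (576 * m.factorial))) := by
        rw [setOf_bondFree_hasBlock_four]
        conv_rhs => enter [2, 1, 1]; rw [← card_range (m + 5)]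
        refine sum_ncard_le_ncard_biUnion_add fun i hi j hj hij ↦ ?_
        exact ncard_bondFree_two_four_blocks_le (Nat.lt_succ_iff.1 (mem_range.1 hi))
          (Nat.lt_succ_iff.1 (mem_range.1 hj)) hij
    _ ≤ _ := Nat.add_le_add_left (pow_mul_factorial_le m) _

end FourBlocks

section CornerBlocks

lemma ncard_four_block_and_apply_eq_le (m : ℕ) {x : Fin (m + 8)} (hx : x = 0 ∨ x = Fin.last (m + 7))
    (y : Fin (m + 8)) :
    {π : Perm (Fin (m + 8)) | (∃ i ∈ Icc 1 (m + 3), HasBlockAt π 4 i) ∧ π x = y}.ncard ≤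
      24 * (m + 5).factorial := by
  have hsub : {π : Perm (Fin (m + 8)) | (∃ i ∈ Icc 1 (m + 3), HasBlockAt π 4 i) ∧ π x = y} ⊆
      ⋃ i ∈ Icc 1 (m + 3), ⋃ a ∈ range (m + 5), {π | MapsWindow π 4 i a ∧ π x = y} := by
    rintro π ⟨⟨i, hi, a, ha⟩, hxy⟩
    have := ha.add_le (by rw [mem_Icc] at hi; omega) four_pos
    simp only [Set.mem_iUnion]
    exact ⟨i, hi, a, mem_range.2 (by omega), ha, hxy⟩
  have hcount (i) (hi : i ∈ Icc 1 (m + 3)) (a : ℕ) :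
      {π : Perm (Fin (m + 8)) | MapsWindow π 4 i a ∧ π x = y}.ncard ≤ 24 * (m + 3).factorial := by
    rw [mem_Icc] at hi
    refine ncard_mapsWindow_and_apply_eq_le (by omega) (fun hmem ↦ ?_) y a
    rw [mem_window] at hmem
    rcases hx with rfl | rfl
    · rw [Fin.val_zero] at hmem
      omega
    · rw [Fin.val_last] at hmem
      omega
  refine (Set.ncard_le_ncard hsub).trans ((ncard_biUnion_le_of_le fun i hi ↦
    ncard_biUnion_le_of_le fun a _ ↦ hcount i hi a).trans ?_)
  rw [Nat.card_Icc, card_range, Nat.factorial_succ (m + 4), Nat.factorial_succ (m + 3),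
    Nat.add_sub_cancel]
  nlinarith [Nat.zero_le ((m + 5) * (m + 3).factorial)]

lemma ncard_hasCorner_hasBlock_four_le (m : ℕ) :
    {π : Perm (Fin (m + 8)) | HasCorner π ∧ HasBlock π 4}.ncard ≤ 144 * (m + 5).factorial := by
  let interior (x y : Fin (m + 8)) : Set (Perm (Fin (m + 8))) :=
    {π | (∃ i ∈ Icc 1 (m + 3), HasBlockAt π 4 i) ∧ π x = y}
  have hsub : {π : Perm (Fin (m + 8)) | HasCorner π ∧ HasBlock π 4} ⊆
      ({π | HasBlockAt π 4 0} ∪ {π | HasBlockAt π 4 (m + 4)}) ∪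
        ((interior 0 0 ∪ interior (Fin.last _) (Fin.last _)) ∪
          (interior 0 (Fin.last _) ∪ interior (Fin.last _) 0)) := by
    rintro π ⟨hcorner, i, hi, hblock⟩
    by_cases hinterior : i ∈ Icc 1 (m + 3)
    · exact .inr (hcorner.imp (Or.imp (⟨⟨i, hinterior, hblock⟩, ·⟩) (⟨⟨i, hinterior, hblock⟩, ·⟩))
        (Or.imp (⟨⟨i, hinterior, hblock⟩, ·⟩) (⟨⟨i, hinterior, hblock⟩, ·⟩)))
    · rw [mem_Icc] at hinterior
      obtain rfl | rfl : i = 0 ∨ i = m + 4 := by omega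
      exacts [.inl (.inl hblock), .inl (.inr hblock)]
  have hends {i : ℕ} (hi : i ≤ m + 4) := ncard_hasBlockAt_le (add_comm (m + 4) 4) four_pos hi
  have h₀ : {π : Perm (Fin (m + 8)) | HasBlockAt π 4 0}.ncard ≤ 24 * (m + 5).factorial :=
    hends (Nat.zero_le _)
  have h₁ : {π : Perm (Fin (m + 8)) | HasBlockAt π 4 (m + 4)}.ncard ≤ 24 * (m + 5).factorial :=
    hends le_rfl
  have hcount {x : Fin (m + 8)} (hx : x = 0 ∨ x = Fin.last _) (y) :
      (interior x y).ncard ≤ 24 * (m + 5).factorial := ncard_four_block_and_apply_eq_le m hx y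
  refine (Set.ncard_le_ncard hsub).trans ?_
  grw [Set.ncard_union_le, Set.ncard_union_le, h₀, h₁, Set.ncard_union_le,
    Set.ncard_union_le, Set.ncard_union_le, hcount (.inl rfl), hcount (.inr rfl),
    hcount (.inl rfl), hcount (.inr rfl)]
  exact (by ring : _ = _).le

end CornerBlocks

/-! ### Simple permutations -/

section Simple

variable {n : ℕ} {π : Perm (Fin n)}

lemma Icc_eq_window {i j : Fin n} : Icc i j = window n i (j.val + 1 - i.val) := by
  ext x
  rw [mem_Icc, mem_window, Fin.le_def, Fin.le_def]
  omega

lemma MapsWindow.isPermBlock {k i a : ℕ} (h : MapsWindow π k i a) (hi : i + k ≤ n) (hk : 0 < k) :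
    IsPermBlock π (window n i k) := by
  have ha := h.add_le hi hk
  have hIcc {j : ℕ} (hj : j + k ≤ n) :
      window n j k = Icc ⟨j, by omega⟩ ⟨j + k - 1, by omega⟩ := by
    rw [Icc_eq_window]
    congr 1
    simp only
    omega
  refine ⟨card_pos.1 (by rwa [card_window_of_le hi]), ⟨_, _, hIcc hi⟩, _, _, Eq.trans ?_ (hIcc ha)⟩
  ext y
  obtain ⟨x, rfl⟩ := π.surjective y
  rw [h.apply_mem_iff hi, mem_image]
  simp

lemma exists_mapsWindow_of_isPermBlock {B : Finset (Fin n)} (h : IsPermBlock π B) :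
    ∃ i a, i + #B ≤ n ∧ MapsWindow π #B i a := by
  obtain ⟨hne, ⟨i, j, rfl⟩, a, b, himage⟩ := h
  have hcard := congrArg card himage
  rw [card_image_of_injective _ π.injective, Fin.card_Icc, Fin.card_Icc] at hcard
  have hij := Fin.le_def.1 (nonempty_Icc.1 hne)
  refine ⟨i, a, by rw [Fin.card_Icc]; omega, fun x hx ↦ ?_⟩
  rw [Fin.card_Icc] at hx ⊢
  rw [hcard, ← Icc_eq_window, ← himage]
  exact mem_image_of_mem π (by rwa [Icc_eq_window])

lemma isSimplePerm_iff_forall_not_hasBlock :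
    IsSimplePerm π ↔ ∀ k, 2 ≤ k → k < n → ¬HasBlock π k := by
  constructor
  · rintro hπ k hk hkn ⟨i, hi, a, h⟩
    rcases hπ _ (h.isPermBlock hi (by omega)) with hcard | huniv
    · rw [card_window_of_le hi] at hcard
      omega
    · have hcard := congrArg card huniv
      rw [card_window_of_le hi, card_univ, Fintype.card_fin] at hcard
      omega
  · intro hπ B hB
    obtain ⟨i, a, hi, h⟩ := exists_mapsWindow_of_isPermBlock hB
    by_contra! hne
    have hpos := card_pos.2 hB.1
    have hlt := (card_lt_iff_ne_univ B).2 hne.2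
    rw [Fintype.card_fin] at hlt
    exact hπ #B (by omega) hlt ⟨i, hi, a, h⟩

end Simple

section Characterization

variable {m : ℕ}

lemma hasBlock_of_apply_eq {π : Perm (Fin (m + 1))} {x y : Fin (m + 1)}
    (hx : x = 0 ∨ x = Fin.last m) (hy : y = 0 ∨ y = Fin.last m) (h : π x = y) :
    HasBlock π m := by
  have hval (w : Fin (m + 1)) (hw : w = 0 ∨ w = Fin.last m) : w.val = 0 ∨ w.val = m :=
    hw.imp (congrArg Fin.val) (congrArg Fin.val)
  have hx := hval x hx
  have hy := hval y hy
  refine ⟨if x.val = 0 then 1 else 0, by split_ifs <;> omega, if y.val = 0 then 1 else 0,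
    fun z hz ↦ ?_⟩
  have hne := val_apply_eq_iff π z x
  rw [h] at hne
  rw [mem_window] at hz ⊢
  split_ifs at hz ⊢ <;> omega

lemma HasCorner.hasBlock {π : Perm (Fin (m + 1))} : HasCorner π → HasBlock π m := by
  rintro ((h | h) | h | h)
  · exact hasBlock_of_apply_eq (.inl rfl) (.inl rfl) h
  · exact hasBlock_of_apply_eq (.inr rfl) (.inr rfl) h
  · exact hasBlock_of_apply_eq (.inl rfl) (.inr rfl) h
  · exact hasBlock_of_apply_eq (.inr rfl) (.inl rfl) h

/-- The one or two positions outside the block carry the one or two values outside its image. If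
neither of them is a corner, there are two, and they form a bond. -/
lemma BondFree.hasCorner_of_hasBlock {π : Perm (Fin (m + 4))} (hπ : BondFree π) {k : ℕ}
    (hk : m + 2 ≤ k) (hkm : k < m + 4) (h : HasBlock π k) : HasCorner π := by
  obtain ⟨i, hi, a, h⟩ := h
  have ha := h.add_le hi (by omega)
  let x₀ : Fin (m + 4) := 0
  let x₁ : Fin (m + 4) := ⟨1, by omega⟩
  let y₁ : Fin (m + 4) := ⟨m + 2, by omega⟩
  let y₀ : Fin (m + 4) := Fin.last (m + 3)
  have hmem (x : Fin (m + 4)) := h.apply_mem_iff hi x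
  simp only [mem_window] at hmem
  have hx₀ := hmem x₀
  have hx₁ := hmem x₁
  have hy₀ := hmem y₀
  have hy₁ := hmem y₁
  have hbond := hπ x₀ x₁ rfl
  have hbond' := hπ y₁ y₀ rfl
  have hne := val_apply_eq_iff π x₀ x₁
  have hne' := val_apply_eq_iff π y₁ y₀
  have hne'' := val_apply_eq_iff π x₀ y₀
  simp only [HasCorner, Fin.ext_iff, Fin.val_zero, Fin.val_last]
  change ((π x₀).val = 0 ∨ (π y₀).val = m + 3) ∨ (π x₀).val = m + 3 ∨ (π y₀).val = 0
  have : x₀.val = 0 := rfl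
  have : x₁.val = 1 := rfl
  have : y₁.val = m + 2 := rfl
  have : y₀.val = m + 3 := rfl
  have := (π x₀).isLt
  have := (π y₀).isLt
  have := (π x₁).isLt
  have := (π y₁).isLt
  obtain rfl | rfl : k = m + 2 ∨ k = m + 3 := by omega
  · omega
  · omega

lemma isSimplePerm_iff {π : Perm (Fin (m + 8))} :
    IsSimplePerm π ↔ BondFree π ∧
      ¬((HasCorner π ∨ HasBlock π 4) ∨ ∃ k ∈ Icc 5 (m + 5), HasBlock π k) := by
  rw [isSimplePerm_iff_forall_not_hasBlock]
  constructor
  · refine fun h ↦ ⟨bondFree_iff_not_hasBlock_two.2 (h 2 le_rfl (by omega)), ?_⟩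
    rintro ((hcorner | hblock) | ⟨k, hk, hblock⟩)
    · exact h (m + 7) (by omega) (by omega) hcorner.hasBlock
    · exact h 4 (by omega) (by omega) hblock
    · rw [mem_Icc] at hk
      exact h k (by omega) (by omega) hblock
  · rintro ⟨hπ, hnot⟩ k hk₂ hk hblock
    refine hnot ?_
    obtain rfl | rfl | rfl | hmid | hlarge :
        k = 2 ∨ k = 3 ∨ k = 4 ∨ k ∈ Icc 5 (m + 5) ∨ m + 6 ≤ k := by
      rw [mem_Icc]
      omega
    · exact absurd hblock hπ.not_hasBlock_two
    · exact absurd hblock hπ.not_hasBlock_three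
    · exact .inl (.inr hblock)
    · exact .inr ⟨k, hmid, hblock⟩
    · exact .inl (.inl (hπ.hasCorner_of_hasBlock hlarge hk hblock))

end Characterization

/-! ### Asymptotics of the number of simple permutations -/

section Asymptotics

open Filter Asymptotics Topology

lemma simpleCount_eq_ncard (n : ℕ) : simpleCount n = {π : Perm (Fin n) | IsSimplePerm π}.ncard :=
  Nat.card_coe_set_eq _

lemma bondFreeCount_le_simpleCount_add (m : ℕ) :
    bondFreeCount (m + 8) + 6 * bondFreeCount (m + 6) ≤
      simpleCount (m + 8) + 4 * bondFreeCount (m + 7) + 2 * ((m + 5) * bondFreeCount (m + 5)) +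
        976 * (m + 5).factorial := by
  have hcover : {π : Perm (Fin (m + 8)) | BondFree π} ⊆ {π | IsSimplePerm π} ∪
      (({π | BondFree π ∧ HasCorner π} ∪ {π | BondFree π ∧ HasBlock π 4}) ∪
        {π | ∃ k ∈ Icc 5 (m + 5), HasBlock π k}) := fun π hπ ↦ by
    simp only [Set.mem_union, Set.mem_ofPred_eq, isSimplePerm_iff] at hπ ⊢
    tauto
  have hle := Set.ncard_le_ncard hcover
  grw [Set.ncard_union_le, Set.ncard_union_le, Set.ncard_union_le, ← simpleCount_eq_ncard,
    ncard_exists_hasBlock_le, ncard_bondFree_hasBlock_four_le] at hle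
  have hcorner : {π : Perm (Fin (m + 8)) | BondFree π ∧ HasCorner π}.ncard +
      6 * bondFreeCount (m + 6) ≤ 4 * bondFreeCount (m + 7) + 8 * (m + 5).factorial :=
    (ncard_hasCorner_bounds (m + 5)).2
  rw [← bondFreeCount] at hle
  omega

lemma simpleCount_add_le_bondFreeCount_add (m : ℕ) :
    simpleCount (m + 8) + 4 * bondFreeCount (m + 7) + 2 * ((m + 5) * bondFreeCount (m + 5)) ≤
      bondFreeCount (m + 8) + 6 * bondFreeCount (m + 6) + 360144 * (m + 5).factorial := by
  set corner := {π : Perm (Fin (m + 8)) | BondFree π ∧ HasCorner π}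
  set four := {π : Perm (Fin (m + 8)) | BondFree π ∧ HasBlock π 4}
  have hdisj : Disjoint {π : Perm (Fin (m + 8)) | IsSimplePerm π} (corner ∪ four) := by
    refine Set.disjoint_left.2 fun π hπ ↦ ?_
    simp only [corner, four, Set.mem_union, Set.mem_ofPred_eq, isSimplePerm_iff] at hπ ⊢
    tauto
  have hsub : {π : Perm (Fin (m + 8)) | IsSimplePerm π} ∪ (corner ∪ four) ⊆ {π | BondFree π} := by
    rintro π (hπ | hπ | hπ)
    exacts [(isSimplePerm_iff.1 hπ).1, hπ.1, hπ.1]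
  have hinter_sub : corner ∩ four ⊆ {π | HasCorner π ∧ HasBlock π 4} := fun π hπ ↦
    ⟨hπ.1.2, hπ.2.2⟩
  have hinter := (Set.ncard_le_ncard hinter_sub).trans (ncard_hasCorner_hasBlock_four_le m)
  have hle : _ ≤ bondFreeCount (m + 8) := Set.ncard_le_ncard hsub
  rw [Set.ncard_union_eq hdisj, ← simpleCount_eq_ncard] at hle
  have hunion := Set.ncard_union_add_ncard_inter corner four
  have hcorner_le : 4 * bondFreeCount (m + 7) ≤ corner.ncard + 6 * bondFreeCount (m + 6) :=
    (ncard_hasCorner_bounds (m + 5)).1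
  have hfour_le : 2 * ((m + 5) * bondFreeCount (m + 5)) ≤ four.ncard + 360000 * (m + 5).factorial :=
    le_ncard_bondFree_hasBlock_four m
  omega

/-- The proportion of simple permutations of length `n`. -/
noncomputable def simpleDensity (n : ℕ) : ℝ := simpleCount n / n.factorial

lemma abs_simpleDensity_sub_bondFreeDensity_le (m : ℕ) :
    |simpleDensity (m + 8) - (bondFreeDensity (m + 8) - 4 * (bondFreeDensity (m + 7) / (m + 8))
        + 6 * (bondFreeDensity (m + 6) / (m + 7) / (m + 8))
        - 2 * ((m + 5) * bondFreeDensity (m + 5) / (m + 6) / (m + 7) / (m + 8)))| ≤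
      360144 * (1 / (m + 6) / (m + 7) / (m + 8)) := by
  have hfac : ((m + 8).factorial : ℝ) = (m + 8) * ((m + 7) * ((m + 6) * (m + 5).factorial)) := by
    simp only [Nat.factorial_succ]
    push_cast
    ring
  calc _ = |((simpleCount (m + 8) : ℝ) + 4 * bondFreeCount (m + 7)
            + 2 * ((m + 5) * bondFreeCount (m + 5))
            - (bondFreeCount (m + 8) + 6 * bondFreeCount (m + 6))) / (m + 8).factorial| := by
        simp only [simpleDensity, bondFreeDensity, Nat.factorial_succ]
        push_cast
        congr 1
        field_simp
        ring
    _ ≤ 360144 * (m + 5).factorial / (m + 8).factorial := by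
        rw [abs_div, Nat.abs_cast]
        gcongr
        have hlower := bondFreeCount_le_simpleCount_add m
        have hupper := simpleCount_add_le_bondFreeCount_add m
        rify at hlower hupper
        rw [abs_le]
        constructor <;> linarith [Nat.cast_nonneg (α := ℝ) (m + 5).factorial]
    _ = _ := by
        rw [hfac]
        field_simp

lemma simpleDensity_sub_bondFreeDensity_isBigO :
    (fun m : ℕ ↦ simpleDensity (m + 8) - (bondFreeDensity (m + 8)
        - 4 * (bondFreeDensity (m + 7) / (m + 8))
        + 6 * (bondFreeDensity (m + 6) / (m + 7) / (m + 8))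
        - 2 * ((m + 5) * bondFreeDensity (m + 5) / (m + 6) / (m + 7) / (m + 8)))) =O[atTop]
      invPow 3 := by
  have hone : (fun _ : ℕ ↦ (1 : ℝ)) =O[atTop] invPow 0 :=
    (isBigO_refl _ _).congr_right fun n ↦ by simp [invPow]
  refine IsBigO.trans (IsBigO.of_bound 360144 (Eventually.of_forall fun m ↦ ?_))
    (isBigO_div_natCast_add (isBigO_div_natCast_add (isBigO_div_natCast_add hone 6) 7) 8)
  rw [Real.norm_eq_abs, Real.norm_of_nonneg (by positivity)]
  exact abs_simpleDensity_sub_bondFreeDensity_le m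

lemma simpleDensity_sub_isBigO :
    (fun n : ℕ ↦ simpleDensity n - Real.exp (-2) * (1 - 4 / n + 2 / (n * (n - 1)))) =O[atTop]
      invPow 3 := by
  rw [← isBigO_shift_iff 8]
  set L := Real.exp (-2)
  have hfine := (isBigO_shift_iff 8).2
    (bondFreeDensity_sub_isBigO_of_tendsto tendsto_bondFreeDensity)
  have hcoarse (j : ℕ) : (fun n ↦ bondFreeDensity (n + j) - L) =O[atTop] invPow 2 :=
    (isBigO_shift_iff j).2
      (isBigO_sub_of_tendsto two_pos tendsto_bondFreeDensity bondFreeDensity_increment_isBigO)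
  have hcoarse' (j : ℕ) := isBigO_invPow_of_le one_le_two (hcoarse j)
  have hthree {f : ℕ → ℝ} (hf : f =O[atTop] invPow 0) :=
    isBigO_div_natCast_add (isBigO_div_natCast_add (isBigO_div_natCast_add hf 6) 7) 8
  have herror := simpleDensity_sub_bondFreeDensity_isBigO
  have hcorners := (isBigO_div_natCast_add (hcoarse 7) 8).const_mul_left 4
  have hpairs := (isBigO_div_natCast_add (isBigO_div_natCast_add (hcoarse' 6) 7) 8).const_mul_left 6
  have hblocks :=
    (isBigO_div_natCast_add (isBigO_div_natCast_add (hcoarse' 5) 7) 8).const_mul_left 2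
  have hblocks' := (hthree ((isBigO_shift_iff 5).2 bondFreeDensity_isBigO_one)).const_mul_left 2
  have hsum := ((((herror.add hfine).sub hcorners).add hpairs).sub hblocks).add hblocks'
  refine hsum.congr_left fun m ↦ ?_
  push_cast
  rw [show (m : ℝ) + 8 - 1 = m + 7 by ring]
  field_simp
  ring

end Asymptotics

end SimplePerm

/-- `sₙ = (n!/e²)·(1 - 4/n + 2/(n(n-1)) + O(n⁻³))`. -/
theorem simpleCount_asymptotics :
    ∃ K : ℝ, 0 < K ∧ ∃ N : ℕ, ∀ n : ℕ, N ≤ n →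
      |(simpleCount n : ℝ) -
          (Nat.factorial n : ℝ) / Real.exp 1 ^ 2 *
            (1 - 4 / (n : ℝ) + 2 / ((n : ℝ) * ((n : ℝ) - 1)))| ≤
        K * (Nat.factorial n : ℝ) / (n : ℝ) ^ 3 := by
  obtain ⟨K, hK, hbound⟩ := SimplePerm.simpleDensity_sub_isBigO.exists_pos
  obtain ⟨N, hN⟩ := Filter.eventually_atTop.1 hbound.bound
  refine ⟨K, hK, N, fun n hn ↦ ?_⟩
  have hn' := hN n hn
  rw [Real.norm_eq_abs, SimplePerm.norm_invPow] at hn'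
  have hexp : Real.exp (-2) = (Real.exp 1 ^ 2)⁻¹ := by
    rw [Real.exp_neg, ← Real.exp_nat_mul]
    norm_num
  calc _ = (n.factorial : ℝ) * |SimplePerm.simpleDensity n -
          Real.exp (-2) * (1 - 4 / n + 2 / (n * (n - 1)))| := by
        rw [← Nat.abs_cast n.factorial, ← abs_mul, Nat.abs_cast, mul_sub (n.factorial : ℝ), hexp,
          SimplePerm.simpleDensity, mul_div_cancel₀ _ (by positivity), ← mul_assoc,
          ← div_eq_mul_inv]
    _ ≤ n.factorial * (K * SimplePerm.invPow 3 n) := by gcongr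
    _ = _ := by
        rw [SimplePerm.invPow]
        ring
end

section
/- For all integers n and k with 2 ≤ k ≤ n, the number p_{n,k} of permutations of length n containing a minimal block of length k satisfies p_{n,k} ≤ s_k·(n−k+1)·(n−k+1)!. -/
/-- A minimal block: a non-singleton block containing no other non-singleton block. -/
def IsMinimalBlock {n : ℕ} (π : Equiv.Perm (Fin n)) (B : Finset (Fin n)) : Prop :=
  IsPermBlock π B ∧ 1 < B.card ∧
    ∀ B' : Finset (Fin n), IsPermBlock π B' → 1 < B'.card → B' ⊆ B → B' = B

/-- `p_{n,k}`: the number of permutations of length `n` containing a minimal block of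
length `k`. -/
noncomputable def minBlockCount (n k : ℕ) : ℕ :=
  Nat.card {π : Equiv.Perm (Fin n) // ∃ B, IsMinimalBlock π B ∧ B.card = k}

/-!
A minimal block of `π` on an interval `B` of `k` positions carries a simple pattern, and contracting
`B` to one of its points leaves a pattern of length `n - k + 1`. Since no value taken outside `B`
separates two values taken on `B`, these two patterns fix the relative order of any two values of
`π`, hence `π` itself. The remaining factor `n - k + 1` counts the possible intervals `B`.
-/

section Order

theorem map_Icc_of_ordConnected_range {α β : Type*} [PartialOrder α] [PartialOrder β]
    [LocallyFiniteOrder α] [LocallyFiniteOrder β] (e : α ↪o β)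
    (he : (Set.range e).OrdConnected) (x y : α) :
    (Finset.Icc x y).map e.toEmbedding = Finset.Icc (e x) (e y) := by
  rw [← Finset.coe_inj, Finset.coe_map, Finset.coe_Icc, Finset.coe_Icc]
  exact e.image_Icc he x y

variable {α β : Type*} [LinearOrder β]

theorem lt_iff_lt_of_ordConnected {s : Set β} (hs : s.OrdConnected) {a b c : β} (ha : a ∈ s)
    (hb : b ∈ s) (hc : c ∉ s) : a < c ↔ b < c := by
  have key {a b : β} (ha : a ∈ s) (hb : b ∈ s) (hac : a < c) : b < c :=
    lt_of_not_ge fun hcb => hc (hs.out ha hb ⟨hac.le, hcb⟩)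
  exact ⟨key ha hb, key hb ha⟩

theorem gt_iff_gt_of_ordConnected {s : Set β} (hs : s.OrdConnected) {a b c : β} (ha : a ∈ s)
    (hb : b ∈ s) (hc : c ∉ s) : c < a ↔ c < b :=
  lt_iff_lt_of_ordConnected (β := βᵒᵈ) hs.dual ha hb hc

theorem equiv_eq_of_lt_iff_lt [WellFoundedLT β] {π ρ : α ≃ β}
    (h : ∀ x y, π x < π y ↔ ρ x < ρ y) : π = ρ := by
  have hmono : StrictMono (ρ ∘ π.symm) := fun a b hab => by
    simpa only [Function.comp_apply, ← h, Equiv.apply_symm_apply] using hab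
  have hid : ρ ∘ π.symm = id := (hmono.range_inj strictMono_id).1 <| by
    rw [(ρ.surjective.comp π.symm.surjective).range_eq, Set.range_id]
  exact Equiv.ext fun x => by simpa using (congrFun hid (π x)).symm

end Order

section Pattern

variable {α β : Type*} [LinearOrder α] [LinearOrder β] {f g : α → β} {s : Finset α}

/-- The pattern of `f` on the positions `s`: the permutation of `Fin s.card` ordered like the values
of `f` on `s`, read from left to right (equal values count as increasing). `Tuple.sort` lists the
positions by increasing value, so the pattern is its inverse. -/
def patternOn (f : α → β) (s : Finset α) : Equiv.Perm (Fin s.card) :=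
  (Tuple.sort (f ∘ s.orderEmbOfFin rfl)).symm

theorem strictMono_comp_patternOn_symm (hf : Set.InjOn f s) :
    StrictMono (f ∘ s.orderEmbOfFin rfl ∘ (patternOn f s).symm) := by
  have hinj : Function.Injective (f ∘ s.orderEmbOfFin rfl) := fun i j h =>
    (s.orderEmbOfFin rfl).injective
      (hf (s.orderEmbOfFin_mem rfl i) (s.orderEmbOfFin_mem rfl j) h)
  exact (Tuple.monotone_sort (f ∘ s.orderEmbOfFin rfl)).strictMono_of_injective
    (hinj.comp (Equiv.injective _))

theorem patternOn_lt_patternOn_iff (hf : Set.InjOn f s) (i j : Fin s.card) :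
    patternOn f s i < patternOn f s j ↔
      f (s.orderEmbOfFin rfl i) < f (s.orderEmbOfFin rfl j) := by
  simpa only [Function.comp_apply, Equiv.symm_apply_apply] using
    ((strictMono_comp_patternOn_symm hf).lt_iff_lt
      (a := patternOn f s i) (b := patternOn f s j)).symm

theorem lt_iff_lt_of_patternOn_eq (hf : Set.InjOn f s) (hg : Set.InjOn g s)
    (h : patternOn f s = patternOn g s) {x y : α} (hx : x ∈ s) (hy : y ∈ s) :
    f x < f y ↔ g x < g y := by
  rw [← Finset.mem_coe, ← s.range_orderEmbOfFin rfl] at hx hy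
  obtain ⟨i, rfl⟩ := hx
  obtain ⟨j, rfl⟩ := hy
  rw [← patternOn_lt_patternOn_iff hf, h, patternOn_lt_patternOn_iff hg]

-- The positions `insert b sᶜ` are what is left of `α` when `s` is contracted to `b`.
theorem equiv_eq_of_patternOn_eq [Fintype α] {π ρ : α ≃ β} {b : α} (hb : b ∈ s)
    (hπ : (π '' s).OrdConnected) (hρ : (ρ '' s).OrdConnected)
    (hblock : patternOn π s = patternOn ρ s)
    (hquot : patternOn π (insert b sᶜ) = patternOn ρ (insert b sᶜ)) : π = ρ := by
  have : Finite β := .of_equiv α π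
  have mem_image {τ : α ≃ β} {x : α} : τ x ∈ τ '' s ↔ x ∈ s := τ.injective.mem_set_image
  have lt_block {x y : α} := lt_iff_lt_of_patternOn_eq (x := x) (y := y)
    π.injective.injOn ρ.injective.injOn hblock
  have lt_quot {x y : α} := lt_iff_lt_of_patternOn_eq (x := x) (y := y)
    π.injective.injOn ρ.injective.injOn hquot
  have b_mem_quot : b ∈ insert b sᶜ := Finset.mem_insert_self b sᶜ
  have mem_quot {x : α} (hx : x ∉ s) : x ∈ insert b sᶜ :=
    Finset.mem_insert_of_mem (Finset.mem_compl.2 hx)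
  refine equiv_eq_of_lt_iff_lt fun x y => ?_
  by_cases hx : x ∈ s <;> by_cases hy : y ∈ s
  · exact lt_block hx hy
  · calc π x < π y ↔ π b < π y := lt_iff_lt_of_ordConnected hπ
          (mem_image.2 hx) (mem_image.2 hb) (mem_image.not.2 hy)
      _ ↔ ρ b < ρ y := lt_quot b_mem_quot (mem_quot hy)
      _ ↔ ρ x < ρ y := lt_iff_lt_of_ordConnected hρ
          (mem_image.2 hb) (mem_image.2 hx) (mem_image.not.2 hy)
  · calc π x < π y ↔ π x < π b := gt_iff_gt_of_ordConnected hπ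
          (mem_image.2 hy) (mem_image.2 hb) (mem_image.not.2 hx)
      _ ↔ ρ x < ρ b := lt_quot (mem_quot hx) b_mem_quot
      _ ↔ ρ x < ρ y := gt_iff_gt_of_ordConnected hρ
          (mem_image.2 hb) (mem_image.2 hy) (mem_image.not.2 hx)
  · exact lt_quot (mem_quot hx) (mem_quot hy)

end Pattern

section Block

variable {n : ℕ} {π : Equiv.Perm (Fin n)} {B : Finset (Fin n)}

theorem IsPermBlock.ordConnected (hB : IsPermBlock π B) : (B : Set (Fin n)).OrdConnected := by
  obtain ⟨-, ⟨i, j, rfl⟩, -⟩ := hB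
  rw [Finset.coe_Icc]
  exact Set.ordConnected_Icc

theorem IsPermBlock.ordConnected_image (hB : IsPermBlock π B) : (π '' B).OrdConnected := by
  obtain ⟨-, -, a, b, hab⟩ := hB
  rw [← Finset.coe_image, hab, Finset.coe_Icc]
  exact Set.ordConnected_Icc

theorem IsPermBlock.map_orderEmbOfFin (hB : IsPermBlock π B) {C : Finset (Fin B.card)}
    (hC : IsPermBlock (patternOn π B) C) :
    IsPermBlock π (C.map (B.orderEmbOfFin rfl).toEmbedding) := by
  obtain ⟨hne, ⟨p, q, hpq⟩, r, u, hru⟩ := hC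
  let pos := B.orderEmbOfFin rfl
  let val : Fin B.card ↪o Fin n :=
    OrderEmbedding.ofStrictMono _ (strictMono_comp_patternOn_symm (s := B) π.injective.injOn)
  have pos_conn : (Set.range pos).OrdConnected := by
    rw [Finset.range_orderEmbOfFin]
    exact hB.ordConnected
  have val_conn : (Set.range val).OrdConnected := by
    rw [OrderEmbedding.coe_ofStrictMono, ← Function.comp_assoc, EquivLike.range_comp,
      Set.range_comp, Finset.range_orderEmbOfFin]
    exact hB.ordConnected_image
  have map_pos :
      (C.map pos.toEmbedding).image π = (C.image (patternOn π B)).map val.toEmbedding := by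
    ext y
    simp [val, pos]
  exact ⟨hne.map, ⟨pos p, pos q, by rw [hpq, map_Icc_of_ordConnected_range pos pos_conn]⟩,
    val r, val u, by rw [map_pos, hru, map_Icc_of_ordConnected_range val val_conn]⟩

theorem IsMinimalBlock.isSimplePerm_patternOn (hB : IsMinimalBlock π B) :
    IsSimplePerm (patternOn π B) := by
  obtain ⟨hblock, -, hmin⟩ := hB
  intro C hC
  refine or_iff_not_imp_left.2 fun hC1 => ?_
  have hcard : 1 < (C.map (B.orderEmbOfFin rfl).toEmbedding).card := by
    have := hC.1.card_pos
    rw [Finset.card_map]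
    omega
  have hsub : C.map (B.orderEmbOfFin rfl).toEmbedding ⊆ B := fun y hy => by
    obtain ⟨x, -, rfl⟩ := Finset.mem_map.1 hy
    exact B.orderEmbOfFin_mem rfl x
  have heq := hmin _ (hblock.map_orderEmbOfFin hC) hcard hsub
  rw [← Finset.card_eq_iff_eq_univ, Fintype.card_fin, ← Finset.card_map, heq]

end Block

section Counting

theorem card_isMinimalBlock_le {n : ℕ} (B : Finset (Fin n)) :
    Nat.card {π : Equiv.Perm (Fin n) // IsMinimalBlock π B} ≤
      simpleCount B.card * (n - B.card + 1).factorial := by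
  obtain rfl | ⟨b, hb⟩ := B.eq_empty_or_nonempty
  · simp [IsMinimalBlock]
  let patterns (π : {π : Equiv.Perm (Fin n) // IsMinimalBlock π B}) :
      {σ : Equiv.Perm (Fin B.card) // IsSimplePerm σ} ×
        Equiv.Perm (Fin (insert b Bᶜ : Finset (Fin n)).card) :=
    (⟨patternOn π.1 B, π.2.isSimplePerm_patternOn⟩, patternOn π.1 (insert b Bᶜ))
  have hpatterns : Function.Injective patterns := fun π ρ h => by
    obtain ⟨hblock, hquot⟩ := Prod.ext_iff.1 h
    exact Subtype.ext (equiv_eq_of_patternOn_eq hb π.2.1.ordConnected_image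
      ρ.2.1.ordConnected_image (congrArg Subtype.val hblock) hquot)
  have hquot_card : (insert b Bᶜ : Finset (Fin n)).card = n - B.card + 1 := by
    rw [Finset.card_insert_of_notMem (Finset.notMem_compl.2 hb), Finset.card_compl,
      Fintype.card_fin]
  have hle := Nat.card_le_card_of_injective patterns hpatterns
  rwa [Nat.card_prod, Nat.card_perm, Nat.card_fin, hquot_card] at hle

/-- The intervals of `k` positions, on which the blocks of length `k` live. As in `IsPermBlock`, an
interval is given by its end points. -/
abbrev IntervalOfCard (n k : ℕ) : Type :=
  {B : Finset (Fin n) // (∃ i j, B = Finset.Icc i j) ∧ B.card = k}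

theorem card_intervalOfCard_le (n k : ℕ) : Nat.card (IntervalOfCard n k) ≤ n - k + 1 := by
  let window (a : Fin (n - k + 1)) : Finset (Fin n) := {x | (a : ℕ) ≤ x ∧ (x : ℕ) < a + k}
  have hex (B : IntervalOfCard n k) : ∃ a, B.1 = window a := by
    obtain ⟨_, ⟨i, j, rfl⟩, hcard⟩ := B
    rw [Fin.card_Icc] at hcard
    refine ⟨⟨i, by omega⟩, ?_⟩
    ext x
    simp only [Finset.mem_Icc, Finset.mem_filter_univ, Fin.le_def, window]
    omega
  choose start hstart using hex
  have hinj : Function.Injective start := fun B C h => Subtype.ext <| by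
    rw [hstart B, hstart C, h]
  simpa only [Nat.card_fin] using Nat.card_le_card_of_injective start hinj

end Counting

/-- `p_{n,k} ≤ s_k·(n-k+1)·(n-k+1)!` for `2 ≤ k ≤ n`. -/
theorem minBlockCount_le (n k : ℕ) (hk : 2 ≤ k) (hkn : k ≤ n) :
    minBlockCount n k ≤ simpleCount k * (n - k + 1) * Nat.factorial (n - k + 1) := by
  let forget (p : Σ B : IntervalOfCard n k, {π : Equiv.Perm (Fin n) // IsMinimalBlock π B.1}) :
      {π : Equiv.Perm (Fin n) // ∃ B, IsMinimalBlock π B ∧ B.card = k} :=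
    ⟨p.2.1, p.1.1, p.2.2, p.1.2.2⟩
  have hforget : Function.Surjective forget := fun ⟨π, B, hB, hBk⟩ =>
    ⟨⟨⟨B, hB.1.2.1, hBk⟩, π, hB⟩, rfl⟩
  have : Fintype (IntervalOfCard n k) := Fintype.ofFinite _
  calc minBlockCount n k
      ≤ ∑ B : IntervalOfCard n k, Nat.card {π : Equiv.Perm (Fin n) // IsMinimalBlock π B.1} := by
        rw [← Nat.card_sigma]
        exact Nat.card_le_card_of_surjective forget hforget
    _ ≤ ∑ _B : IntervalOfCard n k, simpleCount k * (n - k + 1).factorial :=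
        Finset.sum_le_sum fun B _ => by
          simpa only [B.2.2] using card_isMinimalBlock_le B.1
    _ = Nat.card (IntervalOfCard n k) * (simpleCount k * (n - k + 1).factorial) := by
        rw [Finset.sum_const, smul_eq_mul, Finset.card_univ, Nat.card_eq_fintype_card]
    _ ≤ (n - k + 1) * (simpleCount k * (n - k + 1).factorial) :=
        Nat.mul_le_mul_right _ (card_intervalOfCard_le n k)
    _ = simpleCount k * (n - k + 1) * (n - k + 1).factorial := by ring
end

section
/- For every fixed positive integer c there exists a constant K > 0 such that for all positive integers n, Σ_{k=c+2}^{n−c} p_{n,k} ≤ K·n!·n^{−c}; that is, Σ_{k=c+2}^{n−c} p_{n,k}/n! = O(n^{−c}). -/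
/-!
A permutation with a block of length `k ≥ 1` carries one of the `n - k + 1` intervals of `k`
positions onto one of as many intervals of values, and exactly `k! (n - k)!` permutations do so for
a given pair of intervals. Hence at most
`(n - k + 1)² k! (n - k)! ≤ k! (n - k + 2)! = (n + 2)! / C(n + 2, k)` permutations have a block of
length `k`. If `d + 2 ≤ k ≤ n - d`, then `k` is at distance at least `d + 2` from both ends of
`[0, n + 2]`, so `C(n + 2, k)` is at least a constant times `n ^ (d + 2)` and the count is
`O(n! / n ^ d)`. Taking `d = c` for the two extreme values of `k`, and `d = c + 1` for the at most
`n` values strictly between them, gives `O(n! / n ^ c)` for the sum.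
-/

section

open Finset
open scoped Nat

theorem choose_le_choose_of_le_of_add_le {N m i : ℕ} (hmi : m ≤ i) (hiN : i + m ≤ N) :
    N.choose m ≤ N.choose i := by
  have hsub : i.choose m ≤ (N - m).choose (i - m) := by
    rw [← Nat.choose_symm hmi]
    exact Nat.choose_le_choose _ (by omega)
  refine Nat.le_of_mul_le_mul_right ?_ (Nat.choose_pos hmi)
  calc N.choose m * i.choose m
      ≤ N.choose m * (N - m).choose (i - m) := Nat.mul_le_mul_left _ hsub
    _ = N.choose i * i.choose m := (Nat.choose_mul hmi).symm

theorem pow_le_two_pow_mul_factorial_mul_choose {N m i : ℕ} (hmi : m ≤ i) (hiN : i + m ≤ N) :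
    N ^ m ≤ 2 ^ m * m ! * N.choose i :=
  calc N ^ m ≤ (2 * (N + 1 - m)) ^ m := Nat.pow_le_pow_left (by omega) _
    _ = 2 ^ m * (N + 1 - m) ^ m := mul_pow _ _ _
    _ ≤ 2 ^ m * N.descFactorial m := Nat.mul_le_mul_left _ (Nat.pow_sub_le_descFactorial N m)
    _ = 2 ^ m * m ! * N.choose m := by
      rw [Nat.descFactorial_eq_factorial_mul_choose, mul_assoc]
    _ ≤ 2 ^ m * m ! * N.choose i :=
      Nat.mul_le_mul_left _ (choose_le_choose_of_le_of_add_le hmi hiN)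

theorem factorial_add_two_le (n : ℕ) : (n + 2)! ≤ (n + 2) ^ 2 * n ! :=
  calc (n + 2)! = (n + 2) * (n + 1) * n ! := by
        rw [Nat.factorial_succ, Nat.factorial_succ, mul_assoc]
    _ ≤ (n + 2) ^ 2 * n ! := Nat.mul_le_mul_right _ (by nlinarith)

theorem add_one_sq_mul_factorial_le (n : ℕ) : (n + 1) ^ 2 * n ! ≤ (n + 2)! :=
  calc (n + 1) ^ 2 * n ! ≤ (n + 2) * (n + 1) * n ! := Nat.mul_le_mul_right _ (by nlinarith)
    _ = (n + 2)! := by rw [Nat.factorial_succ, Nat.factorial_succ, mul_assoc]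

theorem sum_Icc_le_two_mul_add {f : ℕ → ℕ} {a b n X Y : ℕ} (hbn : b ≤ n)
    (hIcc : ∀ k ∈ Icc a b, f k ≤ X) (hIoo : ∀ k ∈ Ioo a b, f k * n ≤ Y) :
    ∑ k ∈ Icc a b, f k ≤ 2 * X + Y := by
  rcases lt_trichotomy b a with hba | rfl | hab
  · simp [Icc_eq_empty_of_lt hba]
  · have := hIcc b (by simp)
    simp only [Icc_self, sum_singleton]
    omega
  · have hinner : ∑ k ∈ Ioo a b, f k ≤ Y := by
      refine Nat.le_of_mul_le_mul_right ?_ (show 0 < n by omega)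
      calc (∑ k ∈ Ioo a b, f k) * n = ∑ k ∈ Ioo a b, f k * n := sum_mul _ _ _
        _ ≤ #(Ioo a b) * Y := sum_le_card_nsmul _ _ _ hIoo
        _ ≤ Y * n := by
          rw [Nat.card_Ioo, mul_comm]
          exact Nat.mul_le_mul_left _ (by omega)
    have ha := hIcc a (left_mem_Icc.2 hab.le)
    have hb := hIcc b (right_mem_Icc.2 hab.le)
    rw [← sum_Ioc_add_eq_sum_Icc hab.le, ← sum_Ioo_add_eq_sum_Ioc hab]
    omega

section ImageEq

variable {α : Type*} [DecidableEq α] {S T : Finset α}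

theorem image_perm_eq_iff {π : Equiv.Perm α} :
    S.image π = T ↔ ∀ x, x ∈ S ↔ π x ∈ T := by
  rw [Finset.ext_iff, ← π.forall_congr_right]
  simp

variable (S T) in
/-- A permutation carrying `S` onto `T` amounts to a bijection `S ≃ T` together with a bijection
between the complements; used to count such permutations. -/
def permImageEquiv :
    {π : Equiv.Perm α // S.image π = T} ≃
      ({x // x ∈ S} ≃ {x // x ∈ T}) × ({x // x ∉ S} ≃ {x // x ∉ T}) where
  toFun π :=
    have hmem := image_perm_eq_iff.1 π.2
    (π.1.subtypeEquiv hmem, π.1.subtypeEquiv fun x => not_congr (hmem x))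
  invFun e := ⟨e.1.subtypeCongr e.2, image_perm_eq_iff.2 fun x => by
    by_cases hx : x ∈ S
    · simp [Equiv.subtypeCongr, hx]
    · simpa [Equiv.subtypeCongr, hx] using (e.2 ⟨x, hx⟩).2⟩
  left_inv π := by
    ext x
    by_cases hx : x ∈ S <;> simp [Equiv.subtypeCongr, hx]
  right_inv e := by
    ext x <;> simp [Equiv.subtypeCongr, x.2]

theorem card_filter_image_perm_eq [Fintype α] (hST : #S = #T) :
    #{π : Equiv.Perm α | S.image π = T} = (#S)! * (Fintype.card α - #S)! := by
  have hcompl : Fintype.card {x // x ∉ S} = Fintype.card {x // x ∉ T} := by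
    simp [Fintype.card_subtype_compl, hST]
  rw [← Fintype.card_subtype, Fintype.card_congr (permImageEquiv S T), Fintype.card_prod,
    Fintype.card_equiv (Finset.equivOfCardEq hST),
    Fintype.card_equiv (Fintype.equivOfCardEq hcompl)]
  simp [Fintype.card_subtype_compl]

end ImageEq

open Classical in
/-- The intervals of `Fin n` with `k` elements: the possible position sets and value sets of a
block of length `k`. -/
noncomputable def intervalsOfCard (n k : ℕ) : Finset (Finset (Fin n)) :=
  {B | #B = k ∧ ∃ i j, B = Icc i j}

theorem mem_intervalsOfCard {n k : ℕ} {B : Finset (Fin n)} :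
    B ∈ intervalsOfCard n k ↔ #B = k ∧ ∃ i j, B = Icc i j := by
  simp [intervalsOfCard]

theorem card_intervalsOfCard_le {n k : ℕ} (hk : 0 < k) : #(intervalsOfCard n k) ≤ n + 1 - k := by
  let intervalFrom (a : ℕ) : Finset (Fin n) := {x | a ≤ x ∧ x < a + k}
  have hsub : intervalsOfCard n k ⊆ (range (n + 1 - k)).image intervalFrom := by
    intro B hB
    obtain ⟨hcard, i, j, rfl⟩ := mem_intervalsOfCard.1 hB
    rw [Fin.card_Icc] at hcard
    refine mem_image.2 ⟨i, mem_range.2 (by omega), ?_⟩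
    ext x
    simp only [intervalFrom, mem_Icc, mem_filter_univ, Fin.le_def]
    omega
  calc #(intervalsOfCard n k) ≤ #((range (n + 1 - k)).image intervalFrom) := card_le_card hsub
    _ ≤ #(range (n + 1 - k)) := card_image_le
    _ = n + 1 - k := card_range _

/-- The number of permutations of length `n` containing a block of length `k`, minimal or not; an
upper bound for `p_{n,k}`. -/
noncomputable def blockCount (n k : ℕ) : ℕ :=
  Nat.card {π : Equiv.Perm (Fin n) // ∃ B, IsPermBlock π B ∧ B.card = k}

theorem minBlockCount_le_blockCount (n k : ℕ) : minBlockCount n k ≤ blockCount n k :=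
  Nat.card_le_card_of_injective
    (Subtype.map id fun _ ⟨B, hB, hcard⟩ => ⟨B, hB.1, hcard⟩)
    (Subtype.map_injective _ Function.injective_id)

theorem blockCount_le {n k : ℕ} (hk : 0 < k) :
    blockCount n k ≤ (n + 1 - k) ^ 2 * (k ! * (n - k)!) := by
  classical
  let pairs := intervalsOfCard n k ×ˢ intervalsOfCard n k
  let carrying (p : Finset (Fin n) × Finset (Fin n)) : Finset (Equiv.Perm (Fin n)) :=
    {π | p.1.image π = p.2}
  have hcover : ({π | ∃ B, IsPermBlock π B ∧ #B = k} : Finset (Equiv.Perm (Fin n))) ⊆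
      pairs.biUnion carrying := by
    intro π hπ
    obtain ⟨B, ⟨-, hpositions, hvalues⟩, rfl⟩ := (mem_filter_univ _).1 hπ
    have hB : B ∈ intervalsOfCard n #B := mem_intervalsOfCard.2 ⟨rfl, hpositions⟩
    have hπB : B.image π ∈ intervalsOfCard n #B :=
      mem_intervalsOfCard.2 ⟨card_image_of_injective _ π.injective, hvalues⟩
    exact mem_biUnion.2 ⟨(B, B.image π), mem_product.2 ⟨hB, hπB⟩, by simp [carrying]⟩
  have hcarrying : ∀ p ∈ pairs, #(carrying p) ≤ k ! * (n - k)! := by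
    intro p hp
    obtain ⟨hmem₁, hmem₂⟩ := mem_product.1 hp
    have hcard₁ : #p.1 = k := (mem_intervalsOfCard.1 hmem₁).1
    have hcard₂ : #p.2 = k := (mem_intervalsOfCard.1 hmem₂).1
    simpa [hcard₁] using (card_filter_image_perm_eq (hcard₁.trans hcard₂.symm)).le
  calc blockCount n k
      = #({π | ∃ B, IsPermBlock π B ∧ #B = k} : Finset (Equiv.Perm (Fin n))) := by
        rw [blockCount, Nat.card_eq_fintype_card, Fintype.card_subtype]
    _ ≤ #(pairs.biUnion carrying) := card_le_card hcover
    _ ≤ #pairs * (k ! * (n - k)!) := card_biUnion_le_card_mul _ _ _ hcarrying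
    _ ≤ (n + 1 - k) ^ 2 * (k ! * (n - k)!) := by
      rw [card_product, ← sq]
      gcongr
      exact card_intervalsOfCard_le hk

theorem blockCount_mul_choose_le {n k : ℕ} (hk : 0 < k) (hkn : k ≤ n) :
    blockCount n k * (n + 2).choose k ≤ (n + 2)! := by
  have hcount : blockCount n k ≤ k ! * (n - k + 2)! :=
    calc blockCount n k ≤ (n + 1 - k) ^ 2 * (k ! * (n - k)!) := blockCount_le hk
      _ = k ! * ((n - k + 1) ^ 2 * (n - k)!) := by rw [Nat.sub_add_comm hkn]; ring
      _ ≤ k ! * (n - k + 2)! := Nat.mul_le_mul_left _ (add_one_sq_mul_factorial_le _)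
  calc blockCount n k * (n + 2).choose k
      ≤ k ! * (n - k + 2)! * (n + 2).choose k := Nat.mul_le_mul_right _ hcount
    _ = (n + 2).choose k * k ! * (n + 2 - k)! := by rw [Nat.sub_add_comm hkn]; ring
    _ = (n + 2)! := Nat.choose_mul_factorial_mul_factorial (by omega)

theorem blockCount_mul_pow_le {n k d : ℕ} (hdk : d + 2 ≤ k) (hkn : k + d ≤ n) :
    blockCount n k * n ^ d ≤ 2 ^ (d + 2) * (d + 2)! * n ! := by
  refine Nat.le_of_mul_le_mul_right ?_ (show 0 < (n + 2) ^ 2 by positivity)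
  calc blockCount n k * n ^ d * (n + 2) ^ 2
      ≤ blockCount n k * (n + 2) ^ d * (n + 2) ^ 2 := by gcongr; omega
    _ = blockCount n k * (n + 2) ^ (d + 2) := by ring
    _ ≤ blockCount n k * (2 ^ (d + 2) * (d + 2)! * (n + 2).choose k) :=
      Nat.mul_le_mul_left _ (pow_le_two_pow_mul_factorial_mul_choose hdk (by omega))
    _ = 2 ^ (d + 2) * (d + 2)! * (blockCount n k * (n + 2).choose k) := by ring
    _ ≤ 2 ^ (d + 2) * (d + 2)! * ((n + 2) ^ 2 * n !) :=
      Nat.mul_le_mul_left _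
        ((blockCount_mul_choose_le (by omega) (by omega)).trans (factorial_add_two_le n))
    _ = 2 ^ (d + 2) * (d + 2)! * n ! * (n + 2) ^ 2 := by ring

theorem sum_blockCount_mul_pow_le (c n : ℕ) :
    (∑ k ∈ Icc (c + 2) (n - c), blockCount n k) * n ^ c ≤
      (2 * (2 ^ (c + 2) * (c + 2)!) + 2 ^ (c + 3) * (c + 3)!) * n ! := by
  rw [sum_mul, add_mul, mul_assoc 2]
  refine sum_Icc_le_two_mul_add (Nat.sub_le n c) (fun k hk => ?_) (fun k hk => ?_)
  · rw [mem_Icc] at hk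
    exact blockCount_mul_pow_le hk.1 (by omega)
  · rw [mem_Ioo] at hk
    rw [mul_assoc, ← pow_succ]
    exact blockCount_mul_pow_le (d := c + 1) (by omega) (by omega)

theorem sum_minBlockCount_bigO_general (c : ℕ) :
    ∃ K : ℝ, 0 < K ∧ ∀ n : ℕ, 0 < n →
      (∑ k ∈ Icc (c + 2) (n - c), (blockCount n k : ℝ)) ≤ K * (n ! : ℝ) / (n : ℝ) ^ c := by
  refine ⟨2 * (2 ^ (c + 2) * (c + 2)!) + 2 ^ (c + 3) * (c + 3)!, by positivity, fun n hn => ?_⟩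
  rw [le_div_iff₀ (by positivity)]
  exact_mod_cast sum_blockCount_mul_pow_le c n

end

/-- For every fixed `c ≥ 1`, `Σ_{k=c+2}^{n-c} p_{n,k} / n! = O(n^{-c})`. -/
theorem sum_minBlockCount_bigO (c : ℕ) (hc : 0 < c) :
    ∃ K : ℝ, 0 < K ∧ ∀ n : ℕ, 0 < n →
      (∑ k ∈ Finset.Icc (c + 2) (n - c), (minBlockCount n k : ℝ)) ≤
        K * (Nat.factorial n : ℝ) / (n : ℝ) ^ c := by
  obtain ⟨K, hK, hbound⟩ := sum_minBlockCount_bigO_general c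
  exact ⟨K, hK, fun n hn => (Finset.sum_le_sum fun k _ => Nat.cast_le.2
    (minBlockCount_le_blockCount n k)).trans (hbound n hn)⟩
end

section
/- For every integer n ≥ 3: if n is odd then s_n ≡ 2 (mod 2^{(n−1)/2}), and if n is even then s_n ≡ −2 (mod 2^{n/2}). -/
/-!
A permutation of length `n ≥ 2` is a direct sum, or a skew sum, or the inflation of a simple
permutation of length `k ≥ 4`; these cases exclude each other, and in the last one the simple
permutation and its inflated blocks are unique. Every pattern of length `k` has as many inflations
with prescribed block sizes as there are ways to permute within the blocks, namely the product of
the factorials of the `k` sizes. Counting the permutations that are not direct sums by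
inclusion–exclusion over the places where they split, one gets
`n! = -∑ (s_k - 2 (-1)^(k-1)) * (product of the factorials of the block sizes)`,
summed over all divisions of `n` positions into `k` intervals, where `s_1` and `s_2` are to be
replaced by `0`.

A product of the factorials of `k` positive integers with sum `n` is divisible by
`2 ^ ⌈(n - k) / 2⌉`. The division into singletons contributes the coefficient for `k = n` itself, so
by induction that coefficient is divisible by `2 ^ ⌊n / 2⌋`.
-/

namespace SimplePermutation

open Equiv
open scoped Finset Nat

section OrdConnected

variable {α β : Type*} [LinearOrder α] [LinearOrder β] {s t : Set α}

lemma ordConnected_union_of_mem (hs : s.OrdConnected) (ht : t.OrdConnected) {z : α} (hzs : z ∈ s)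
    (hzt : z ∈ t) : (s ∪ t).OrdConnected :=
  Set.ordConnected_of_uIcc_subset_left fun _ hy => hy.elim
    (fun h => (hs.uIcc_subset hzs h).trans Set.subset_union_left)
    (fun h => (ht.uIcc_subset hzt h).trans Set.subset_union_right)

lemma isLowerSet_of_bot_mem {γ : Type*} [Preorder γ] [OrderBot γ] {s : Set γ}
    (hs : s.OrdConnected) (hbot : ⊥ ∈ s) : IsLowerSet s :=
  fun _ _ hba ha => hs.out hbot ha ⟨bot_le, hba⟩

lemma eq_univ_of_bot_mem_of_top_mem {γ : Type*} [Preorder γ] [BoundedOrder γ] {s : Set γ}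
    (hs : s.OrdConnected) (hbot : ⊥ ∈ s) (htop : ⊤ ∈ s) : s = Set.univ :=
  Set.eq_univ_of_forall fun _ => hs.out hbot htop ⟨bot_le, le_top⟩

lemma ordConnected_image_of_monotone {f : α → β} (hf : Monotone f) (hsurj : Function.Surjective f)
    (hs : s.OrdConnected) : (f '' s).OrdConnected := by
  constructor
  rintro _ ⟨a, ha, rfl⟩ _ ⟨b, hb, rfl⟩ y ⟨hay, hyb⟩
  obtain ⟨c, rfl⟩ := hsurj y
  rcases lt_or_ge c a with hca | hac
  · exact ⟨a, ha, le_antisymm hay (hf hca.le)⟩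
  rcases lt_or_ge b c with hbc | hcb
  · exact ⟨b, hb, le_antisymm (hf hbc.le) hyb⟩
  · exact ⟨c, hs.out ha hb ⟨hac, hcb⟩, rfl⟩

/- An order-connected set that misses `x` lies on one side of `x`, so its image can only be
everything if `f x` is an endpoint. -/
lemma ordConnected_compl_singleton_of_image_eq_univ {f : α → β} (hf : Monotone f)
    (hs : s.OrdConnected) {x : α} (hx : x ∉ s) (himage : f '' s = Set.univ) :
    ({f x}ᶜ : Set β).OrdConnected := by
  have hsurj : ∀ y, ∃ a ∈ s, f a = y := Set.eq_univ_iff_forall.1 himage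
  constructor
  rintro y hy z hz w hw rfl
  obtain ⟨a, ha, rfl⟩ := hsurj y
  obtain ⟨b, hb, rfl⟩ := hsurj z
  have hax : a < x := hf.reflect_lt (lt_of_le_of_ne hw.1 hy)
  have hxb : x < b := hf.reflect_lt (lt_of_le_of_ne hw.2 (Ne.symm hz))
  exact hx (hs.out ha hb ⟨hax.le, hxb.le⟩)

lemma exists_perm_monotone_comp {k : ℕ} {g : α → Fin k} (hg : Function.Surjective g)
    (hfiber : ∀ y, (g ⁻¹' {y}).OrdConnected) : ∃ σ : Perm (Fin k), Monotone (σ ∘ g) := by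
  let r := Function.surjInv hg
  have hgr : ∀ y, g (r y) = y := Function.surjInv_eq hg
  have hsort : StrictMono (r ∘ Tuple.sort r) :=
    (Tuple.monotone_sort r).strictMono_of_injective
      ((Function.injective_surjInv hg).comp (Tuple.sort r).injective)
  refine ⟨(Tuple.sort r)⁻¹, fun a b hab => ?_⟩
  rcases eq_or_ne (g a) (g b) with heq | hne
  · exact (congrArg _ heq).le
  have hra : r (g a) < b := by
    by_contra! hle
    exact hne.symm ((hfiber (g a)).out rfl (hgr _) ⟨hab, hle⟩)
  have hrab : r (g a) < r (g b) := by
    by_contra! hle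
    exact hne ((hgr _).symm.trans ((hfiber (g b)).out (hgr _) rfl ⟨hle, hra.le⟩))
  refine (hsort.lt_iff_lt.1 ?_).le
  simpa using hrab

lemma finset_ordConnected_iff_eq_Icc [LocallyFiniteOrder α] {B : Finset α} (hB : B.Nonempty) :
    (B : Set α).OrdConnected ↔ ∃ i j, B = Finset.Icc i j := by
  constructor
  · intro h
    refine ⟨B.min' hB, B.max' hB, subset_antisymm (fun x hx => ?_) fun x hx => ?_⟩
    · exact Finset.mem_Icc.2 ⟨B.min'_le x hx, B.le_max' x hx⟩
    · exact h.out (B.min'_mem hB) (B.max'_mem hB) (Finset.mem_Icc.1 hx)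
  · rintro ⟨i, j, rfl⟩
    rw [Finset.coe_Icc]
    exact Set.ordConnected_Icc

end OrdConnected

section Block

variable {α β : Type*} [LinearOrder α] [LinearOrder β]

/-- A block of a permutation of a linear order. Unlike in `IsPermBlock`, the empty set counts as a
block, so that blocks are stable under preimages along monotone maps. -/
def IsBlock (π : Perm α) (B : Set α) : Prop :=
  B.OrdConnected ∧ (π '' B).OrdConnected

lemma isPermBlock_iff {n : ℕ} {π : Perm (Fin n)} {B : Finset (Fin n)} :
    IsPermBlock π B ↔ B.Nonempty ∧ IsBlock π B := by
  refine and_congr_right fun hB => ?_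
  rw [IsBlock, ← finset_ordConnected_iff_eq_Icc hB, ← finset_ordConnected_iff_eq_Icc (hB.image π),
    Finset.coe_image]

lemma isSimplePerm_iff {n : ℕ} {π : Perm (Fin n)} :
    IsSimplePerm π ↔ ∀ B : Set (Fin n), IsBlock π B → B.Subsingleton ∨ B = Set.univ := by
  simp only [IsSimplePerm, isPermBlock_iff]
  constructor
  · intro h B hB
    rcases B.eq_empty_or_nonempty with rfl | hne
    · exact Or.inl Set.subsingleton_empty
    lift B to Finset (Fin n) using B.toFinite
    refine (h B ⟨hne, hB⟩).imp (fun h1 => ?_) (fun hu => by simp [hu])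
    exact Finset.card_le_one_iff_subsingleton.1 h1.le
  · rintro h B ⟨hne, hB⟩
    refine (h B hB).imp (fun hs => ?_) Finset.coe_eq_univ.1
    exact le_antisymm (Finset.card_le_one_iff_subsingleton.2 hs) hne.card_pos

lemma isBlock_singleton (π : Perm α) (a : α) : IsBlock π {a} :=
  ⟨Set.ordConnected_singleton, by simpa using Set.ordConnected_singleton⟩

lemma IsBlock.union {π : Perm α} {A B : Set α} (hA : IsBlock π A) (hB : IsBlock π B) {z : α}
    (hzA : z ∈ A) (hzB : z ∈ B) : IsBlock π (A ∪ B) := by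
  refine ⟨ordConnected_union_of_mem hA.1 hB.1 hzA hzB, ?_⟩
  rw [Set.image_union]
  exact ordConnected_union_of_mem hA.2 hB.2 ⟨z, hzA, rfl⟩ ⟨z, hzB, rfl⟩

lemma isBlock_revPerm_mul_iff {n : ℕ} {π : Perm (Fin n)} {B : Set (Fin n)} :
    IsBlock (Fin.revPerm * π) B ↔ IsBlock π B := by
  have hrev : ∀ σ : Perm (Fin n), IsBlock σ B → IsBlock (Fin.revPerm * σ) B := by
    refine fun σ h => ⟨h.1, ?_⟩
    rw [Perm.coe_mul, Set.image_comp, image_eq_preimage_symm]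
    exact h.2.preimage_anti Fin.rev_anti
  refine ⟨fun h => ?_, hrev π⟩
  have hinvol : Fin.revPerm * (Fin.revPerm * π) = π := Equiv.ext fun i => Fin.rev_rev (π i)
  exact hinvol ▸ hrev _ h

lemma le_one_of_isSimplePerm_of_ordConnected_compl {k : ℕ} {σ : Perm (Fin (k + 1))}
    (hσ : IsSimplePerm σ) {e : Fin (k + 1)} (he : ({e}ᶜ : Set (Fin (k + 1))).OrdConnected)
    (hσe : ({σ e}ᶜ : Set (Fin (k + 1))).OrdConnected) : k ≤ 1 := by
  have hblock : IsBlock σ {e}ᶜ := ⟨he, by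
    rwa [Set.image_compl_eq σ.bijective, Set.image_singleton]⟩
  have hsub : ({e}ᶜ : Set (Fin (k + 1))).Subsingleton :=
    (isSimplePerm_iff.1 hσ _ hblock).resolve_right fun hu =>
      Set.eq_univ_iff_forall.1 hu e rfl
  have hcard := Set.ncard_le_one_iff_subsingleton.2 hsub
  rw [Set.ncard_compl, Set.ncard_singleton, Nat.card_fin] at hcard
  exact hcard

/-- `π` is obtained from the pattern `σ` by inflating each point `y` to the fiber of `f` over `y`:
points in different fibers compare under `π` as their `f`-values compare under `σ`. -/
def IsInflation (f : α → β) (σ : Perm β) (π : Perm α) : Prop :=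
  Monotone (σ ∘ f ∘ π.symm)

section

variable {f : α → β} {σ : Perm β} {π : Perm α}

lemma IsInflation.isBlock_image (h : IsInflation f σ π) (hf : Monotone f)
    (hsurj : Function.Surjective f) {B : Set α} (hB : IsBlock π B) : IsBlock σ (f '' B) := by
  refine ⟨ordConnected_image_of_monotone hf hsurj hB.1, ?_⟩
  have himage := ordConnected_image_of_monotone h
    (σ.surjective.comp (hsurj.comp π.symm.surjective)) hB.2
  simpa [Set.image_image] using himage

lemma IsInflation.isBlock_preimage (h : IsInflation f σ π) (hf : Monotone f) {B : Set β}
    (hB : IsBlock σ B) : IsBlock π (f ⁻¹' B) := by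
  refine ⟨hB.1.preimage_mono hf, ?_⟩
  have hpre := hB.2.preimage_mono h
  simpa [Set.preimage_comp, image_eq_preimage_symm, Set.preimage_preimage] using hpre

end

lemma IsInflation.eq {k : ℕ} {f : α → Fin k} {σ τ : Perm (Fin k)} {π : Perm α}
    (hσ : IsInflation f σ π) (hτ : IsInflation f τ π) (hsurj : Function.Surjective f) :
    σ = τ := by
  have hmono : Monotone (τ * σ⁻¹ : Perm (Fin k)) := by
    intro a b hab
    rcases hab.eq_or_lt with rfl | hlt
    · exact le_rfl
    obtain ⟨x, rfl⟩ := (σ.surjective.comp (hsurj.comp π.symm.surjective)) a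
    obtain ⟨y, rfl⟩ := (σ.surjective.comp (hsurj.comp π.symm.surjective)) b
    simpa using hτ (hσ.reflect_lt hlt).le
  exact (mul_inv_eq_one.1 ((Perm.monotone_iff _).1 hmono)).symm

lemma IsInflation.subsingleton_image_of_isBlock {k : ℕ} {f : α → Fin (k + 1)}
    {σ : Perm (Fin (k + 1))} {π : Perm α} (h : IsInflation f σ π) (hf : Monotone f)
    (hsurj : Function.Surjective f) (hk : 2 ≤ k) (hσ : IsSimplePerm σ) {B : Set α}
    (hB : IsBlock π B) (hne : B ≠ Set.univ) : (f '' B).Subsingleton := by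
  refine (isSimplePerm_iff.1 hσ _ (h.isBlock_image hf hsurj hB)).resolve_right fun himage => ?_
  obtain ⟨x, hx⟩ := (Set.ne_univ_iff_exists_notMem B).1 hne
  have hx' : π x ∉ π '' B := fun hmem => hx ((π.injective.mem_set_image).1 hmem)
  have himage' : (σ ∘ f ∘ π.symm) '' (π '' B) = Set.univ := by
    rw [← Set.image_comp, show (σ ∘ f ∘ π.symm) ∘ π = σ ∘ f from funext fun i => by simp,
      Set.image_comp, himage, Set.image_univ_of_surjective σ.surjective]
  have hend := ordConnected_compl_singleton_of_image_eq_univ hf hB.1 hx himage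
  have hend' := ordConnected_compl_singleton_of_image_eq_univ h hB.2 hx' himage'
  have hk' := le_one_of_isSimplePerm_of_ordConnected_compl hσ hend (by simpa using hend')
  omega

lemma isInflation_one_iff {n : ℕ} {f : Fin n → β} (hf : Monotone f) {π : Perm (Fin n)} :
    IsInflation f 1 π ↔ ∀ i, f (π i) = f i := by
  constructor
  · intro h i
    have hcomp : f ∘ π.symm = f ∘ (1 : Perm (Fin n)) := Tuple.unique_monotone h hf
    simpa using (congrFun hcomp (π i)).symm
  · intro h
    have hcomp : f ∘ π.symm = f := funext fun i => by simpa using (h (π.symm i)).symm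
    simpa only [IsInflation, Perm.coe_one, Function.id_comp, hcomp] using hf

lemma isInflation_revPerm_iff {n k : ℕ} {f : Fin n → Fin k} {π : Perm (Fin n)} :
    IsInflation f Fin.revPerm π ↔ IsInflation f 1 (Fin.revPerm * π) := by
  refine ⟨fun h i j hij => Fin.rev_le_rev.1 (h (Fin.rev_le_rev.2 hij)), fun h i j hij => ?_⟩
  have hrev : f (π.symm j.rev.rev) ≤ f (π.symm i.rev.rev) := h (Fin.rev_le_rev.2 hij)
  simpa using hrev

/- Composing with a permutation that sorts `g` turns the permutations with `g ∘ π.symm` monotone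
into the stabilizer of `g`. -/
lemma card_monotone_comp_symm [Fintype β] {n : ℕ} (g : Fin n → β)
    [DecidablePred fun π : Perm (Fin n) => Monotone (g ∘ π.symm)] :
    #{π : Perm (Fin n) | Monotone (g ∘ π.symm)} = ∏ y, (#{i | g i = y})! := by
  simp only [← Fintype.card_subtype]
  rw [← DomMulAct.stabilizer_card g]
  refine Fintype.card_congr
    (((Equiv.inv (Perm (Fin n))).trans (Equiv.mulRight (Tuple.sort g)⁻¹)).subtypeEquiv fun π => ?_)
  rw [← Tuple.comp_sort_eq_comp_iff_monotone]
  exact (Equiv.comp_symm_eq (Tuple.sort g) g (g ∘ π.symm)).symm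

lemma card_isInflation [Fintype β] {n : ℕ} (f : Fin n → β) (σ : Perm β)
    [DecidablePred (IsInflation f σ)] :
    #{π : Perm (Fin n) | IsInflation f σ π} = ∏ y, (#{i | f i = y})! := by
  rw [← Equiv.prod_comp σ.symm]
  convert card_monotone_comp_symm (σ ∘ f) using 4
  · rfl
  · simp only [Function.comp_apply, Equiv.eq_symm_apply]

end Block

section Cut

variable {m : ℕ}

/-- The positions `0, …, m` are cut after `d` for every `d ∈ D`; this is the number of the resulting
interval that contains a position. -/
def blockIndex (D : Finset (Fin m)) (i : Fin (m + 1)) : Fin (#D + 1) :=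
  ⟨#{d ∈ D | d.castSucc < i}, Nat.lt_succ_of_le (Finset.card_filter_le _ _)⟩

variable {D : Finset (Fin m)}

lemma blockIndex_monotone (D : Finset (Fin m)) : Monotone (blockIndex D) := fun _ _ hij =>
  Finset.card_le_card (Finset.monotone_filter_right D fun _ _ hd => lt_of_lt_of_le hd hij)

lemma blockIndex_lt_blockIndex {d : Fin m} (hd : d ∈ D) {i j : Fin (m + 1)}
    (hi : i ≤ d.castSucc) (hj : d.castSucc < j) : blockIndex D i < blockIndex D j := by
  refine Finset.card_lt_card (Finset.ssubset_iff_of_subset ?_ |>.2 ⟨d, ?_, ?_⟩)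
  · exact Finset.monotone_filter_right D fun _ _ he => he.trans (hi.trans_lt hj)
  · simpa using ⟨hd, hj⟩
  · simpa using fun _ => hi

lemma blockIndex_eq_iff {i j : Fin (m + 1)} :
    blockIndex D i = blockIndex D j ↔ ∀ d ∈ D, d.castSucc < i ↔ d.castSucc < j := by
  constructor
  · intro h d hd
    constructor <;> intro hlt <;> by_contra! hle
    · exact (blockIndex_lt_blockIndex hd hle hlt).ne' h
    · exact (blockIndex_lt_blockIndex hd hle hlt).ne h
  · intro h
    exact Fin.ext (congrArg Finset.card (Finset.filter_congr h))

lemma blockIndex_surjective (D : Finset (Fin m)) : Function.Surjective (blockIndex D) := by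
  let d := D.orderEmbOfFin rfl
  have hd : ∀ j, d j ∈ D := D.orderEmbOfFin_mem rfl
  let start : Fin (#D + 1) → Fin (m + 1) := Fin.cons 0 fun j => (d j).succ
  have hinj : Function.Injective (blockIndex D ∘ start) := by
    rw [Fin.comp_cons, Fin.cons_injective_iff]
    refine ⟨?_, StrictMono.injective fun i j hij => ?_⟩
    · rintro ⟨j, hj⟩
      exact (blockIndex_lt_blockIndex (hd j) (Fin.zero_le _) Fin.castSucc_lt_succ).ne' hj
    · have hle : (d i).succ ≤ (d j).castSucc := Fin.succ_le_castSucc_iff.2 (d.strictMono hij)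
      exact blockIndex_lt_blockIndex (hd j) hle Fin.castSucc_lt_succ
  exact (Finite.injective_iff_surjective.1 hinj).of_comp

lemma blockIndex_univ_injective : Function.Injective (blockIndex (Finset.univ : Finset (Fin m))) :=
  (Fin.strictMono_iff_lt_succ.2 fun d => blockIndex_lt_blockIndex (Finset.mem_univ d) le_rfl
    Fin.castSucc_lt_succ).injective

/-- The number of ways of permuting each of the intervals cut out by `D`. -/
def blockFactorial (D : Finset (Fin m)) : ℕ :=
  ∏ y, (#{i | blockIndex D i = y})!

lemma blockFactorial_univ : blockFactorial (Finset.univ : Finset (Fin m)) = 1 := by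
  refine Finset.prod_eq_one fun y _ => Nat.factorial_eq_one.2 (Finset.card_le_one.2 ?_)
  intro i hi j hj
  simp only [Finset.mem_filter_univ] at hi hj
  exact blockIndex_univ_injective (hi.trans hj.symm)

lemma two_pow_dvd_factorial (n : ℕ) : 2 ^ (n / 2) ∣ n ! :=
  calc 2 ^ (n / 2) = ∏ _i ∈ Finset.range (n / 2), 2 ! := by simp
    _ ∣ (∑ _i ∈ Finset.range (n / 2), 2)! := Nat.prod_factorial_dvd_factorial_sum _ _
    _ = (n / 2 * 2)! := by simp
    _ ∣ n ! := Nat.factorial_dvd_factorial (Nat.div_mul_le_self n 2)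

lemma two_pow_dvd_blockFactorial (D : Finset (Fin m)) :
    2 ^ ((m + 1 - #D) / 2) ∣ blockFactorial D := by
  have hcard : m + 1 = ∑ y, #{i | blockIndex D i = y} := by
    simpa using Finset.card_eq_sum_card_fiberwise (f := blockIndex D) (s := Finset.univ)
      (t := Finset.univ) (fun _ _ => Finset.mem_coe.2 (Finset.mem_univ _))
  have hsum : m + 1 ≤ 2 * ∑ y, #{i | blockIndex D i = y} / 2 + (#D + 1) :=
    calc m + 1 = ∑ y, #{i | blockIndex D i = y} := hcard
      _ ≤ ∑ y, (2 * (#{i | blockIndex D i = y} / 2) + 1) :=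
        Finset.sum_le_sum fun y _ => by omega
      _ = 2 * ∑ y, #{i | blockIndex D i = y} / 2 + (#D + 1) := by
        simp [Finset.sum_add_distrib, Finset.mul_sum]
  calc 2 ^ ((m + 1 - #D) / 2) ∣ 2 ^ ∑ y, #{i | blockIndex D i = y} / 2 :=
        pow_dvd_pow 2 (by omega)
    _ = ∏ y, 2 ^ (#{i | blockIndex D i = y} / 2) := (Finset.prod_pow_eq_pow_sum _ _ _).symm
    _ ∣ blockFactorial D := Finset.prod_dvd_prod_of_dvd _ _ fun y _ => two_pow_dvd_factorial _

/-- The cuts at which `π` splits as a direct sum. -/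
def sumCuts (π : Perm (Fin (m + 1))) : Finset (Fin m) :=
  {d | ∀ i, d.castSucc < π i ↔ d.castSucc < i}

lemma mem_sumCuts {π : Perm (Fin (m + 1))} {d : Fin m} :
    d ∈ sumCuts π ↔ ∀ i, d.castSucc < π i ↔ d.castSucc < i :=
  Finset.mem_filter_univ d

/-- `π` is neither a direct sum nor a skew sum; the skew decompositions of `π` are the direct sum
decompositions of its reversal. -/
def IsIndecomposable (π : Perm (Fin (m + 1))) : Prop :=
  sumCuts π = ∅ ∧ sumCuts (Fin.revPerm * π) = ∅

variable {π : Perm (Fin (m + 1))}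

lemma isInflation_blockIndex_one_iff : IsInflation (blockIndex D) 1 π ↔ D ⊆ sumCuts π := by
  simp only [isInflation_one_iff (blockIndex_monotone D), blockIndex_eq_iff, Finset.subset_iff,
    mem_sumCuts]
  exact ⟨fun h d hd i => h i d hd, fun h i d hd => h hd i⟩

lemma image_Iic_of_mem_sumCuts {d : Fin m} (hd : d ∈ sumCuts π) :
    π '' Set.Iic d.castSucc = Set.Iic d.castSucc := by
  rw [image_eq_preimage_symm]
  ext i
  have hi := mem_sumCuts.1 hd (π.symm i)
  simpa using (not_congr hi).symm

lemma isBlock_Iic_of_mem_sumCuts {d : Fin m} (hd : d ∈ sumCuts π) :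
    IsBlock π (Set.Iic d.castSucc) :=
  ⟨Set.ordConnected_Iic, by rw [image_Iic_of_mem_sumCuts hd]; exact Set.ordConnected_Iic⟩

lemma isBlock_Ioi_of_mem_sumCuts {d : Fin m} (hd : d ∈ sumCuts π) :
    IsBlock π (Set.Ioi d.castSucc) := by
  refine ⟨Set.ordConnected_Ioi, ?_⟩
  rw [← Set.compl_Iic, Set.image_compl_eq π.bijective, image_Iic_of_mem_sumCuts hd, Set.compl_Iic]
  exact Set.ordConnected_Ioi

lemma apply_zero_lt_apply_last_of_sumCuts_nonempty (h : (sumCuts π).Nonempty) :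
    π 0 < π (Fin.last m) := by
  obtain ⟨d, hd⟩ := h
  have hd := mem_sumCuts.1 hd
  have hzero : π 0 ≤ d.castSucc := by simpa using (hd 0).not
  exact hzero.trans_lt ((hd _).2 d.castSucc_lt_last)

lemma sumCuts_eq_empty_or_sumCuts_revPerm_mul_eq_empty (π : Perm (Fin (m + 1))) :
    sumCuts π = ∅ ∨ sumCuts (Fin.revPerm * π) = ∅ := by
  by_contra! h
  have hlt := apply_zero_lt_apply_last_of_sumCuts_nonempty h.1
  have hgt : (π 0).rev < (π (Fin.last m)).rev := apply_zero_lt_apply_last_of_sumCuts_nonempty h.2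
  exact hlt.asymm (Fin.rev_lt_rev.1 hgt)

lemma sumCuts_nonempty_of_isBlock {B : Set (Fin (m + 1))} (hB : IsBlock π B) (hne : B ≠ Set.univ)
    (h : 0 ∈ B) (hπ : 0 ∈ π '' B) : (sumCuts π).Nonempty := by
  have hlower := isLowerSet_of_bot_mem hB.1 h
  have hcard : (π '' B).ncard = B.ncard := Set.ncard_image_of_injective B π.injective
  have himage : π '' B = B := by
    rcases hlower.total (isLowerSet_of_bot_mem hB.2 hπ) with hsub | hsub
    · exact (Set.eq_of_subset_of_ncard_le hsub hcard.le).symm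
    · exact Set.eq_of_subset_of_ncard_le hsub hcard.ge
  obtain ⟨a, rfl⟩ := hlower.eq_univ_or_Iio.resolve_left hne
  obtain ⟨d, rfl⟩ := Fin.exists_succ_eq.2 (Set.mem_Iio.1 h).ne'
  refine ⟨d, mem_sumCuts.2 fun i => ?_⟩
  have hi := π.injective.mem_set_image (s := Set.Iio d.succ) (a := i)
  rw [himage] at hi
  simpa [Fin.castSucc_lt_iff_succ_le] using not_congr hi

/- Two proper blocks covering all positions split the values into an initial and a final segment, so
`π` would be a direct sum or a skew sum. -/
lemma IsIndecomposable.union_ne_univ (hπ : IsIndecomposable π) {A B : Set (Fin (m + 1))}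
    (hA : IsBlock π A) (hB : IsBlock π B) (hAne : A ≠ Set.univ) (hBne : B ≠ Set.univ) :
    A ∪ B ≠ Set.univ := by
  intro hunion
  wlog h0 : 0 ∈ A generalizing A B
  · exact this hB hA hBne hAne (Set.union_comm A B ▸ hunion)
      ((Set.eq_univ_iff_forall.1 hunion 0).resolve_left h0)
  by_cases h0image : 0 ∈ π '' A
  · exact (sumCuts_nonempty_of_isBlock hA hAne h0 h0image).ne_empty hπ.1
  have himages : π '' A ∪ π '' B = Set.univ := by
    rw [← Set.image_union, hunion, Set.image_univ_of_surjective π.surjective]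
  have himageB : π '' B ≠ Set.univ := fun h => hBne (by
    rwa [← Set.image_univ_of_surjective π.surjective, π.injective.image_injective.eq_iff] at h)
  have h0B : 0 ∈ π '' B := (Set.eq_univ_iff_forall.1 himages 0).resolve_left h0image
  obtain ⟨a, ha, hlast⟩ : Fin.last m ∈ π '' A :=
    (Set.eq_univ_iff_forall.1 himages _).resolve_right fun h =>
      himageB (eq_univ_of_bot_mem_of_top_mem hB.2 h0B h)
  refine (sumCuts_nonempty_of_isBlock (isBlock_revPerm_mul_iff.2 hA) hAne h0
    ⟨a, ha, ?_⟩).ne_empty hπ.2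
  simp [hlast]

end Cut

section UncrossedCuts

variable {m : ℕ} {π : Perm (Fin (m + 1))} {D : Finset (Fin m)}

open Classical in
/-- The cuts that no proper block of `π` straddles. If `π` is indecomposable, they separate the
maximal proper blocks of `π`. -/
noncomputable def uncrossedCuts (π : Perm (Fin (m + 1))) : Finset (Fin m) :=
  {d | ∀ B : Set (Fin (m + 1)), IsBlock π B → d.castSucc ∈ B → d.succ ∈ B → B = Set.univ}

lemma mem_uncrossedCuts {d : Fin m} : d ∈ uncrossedCuts π ↔
    ∀ B : Set (Fin (m + 1)), IsBlock π B → d.castSucc ∈ B → d.succ ∈ B → B = Set.univ :=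
  by
  classical exact Finset.mem_filter_univ d

lemma uncrossedCuts_subset_singleton {d : Fin m} (hIic : IsBlock π (Set.Iic d.castSucc))
    (hIoi : IsBlock π (Set.Ioi d.castSucc)) : uncrossedCuts π ⊆ {d} := by
  refine fun e he => Finset.mem_singleton.2 (le_antisymm ?_ ?_) <;> by_contra! hlt
  · have huniv := mem_uncrossedCuts.1 he _ hIoi (Fin.castSucc_lt_castSucc_iff.2 hlt)
      ((Fin.castSucc_lt_castSucc_iff.2 hlt).trans Fin.castSucc_lt_succ)
    exact lt_irrefl d.castSucc (Set.eq_univ_iff_forall.1 huniv d.castSucc)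
  · have huniv := mem_uncrossedCuts.1 he _ hIic (Fin.castSucc_le_castSucc_iff.2 hlt.le)
      (Fin.succ_le_castSucc_iff.2 hlt)
    exact (Set.eq_univ_iff_forall.1 huniv (Fin.last m)).not_gt d.castSucc_lt_last

lemma isIndecomposable_of_two_le_card_uncrossedCuts (h : 2 ≤ #(uncrossedCuts π)) :
    IsIndecomposable π := by
  have hnot : ∀ d : Fin m, IsBlock π (Set.Iic d.castSucc) → ¬ IsBlock π (Set.Ioi d.castSucc) :=
    fun d hIic hIoi => by
      have hcard := Finset.card_le_card (uncrossedCuts_subset_singleton hIic hIoi)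
      rw [Finset.card_singleton] at hcard
      omega
  constructor <;> refine Finset.eq_empty_of_forall_notMem fun d hd => hnot d ?_ ?_
  · exact isBlock_Iic_of_mem_sumCuts hd
  · exact isBlock_Ioi_of_mem_sumCuts hd
  · exact isBlock_revPerm_mul_iff.1 (isBlock_Iic_of_mem_sumCuts hd)
  · exact isBlock_revPerm_mul_iff.1 (isBlock_Ioi_of_mem_sumCuts hd)

lemma blockIndex_uncrossedCuts_eq_of_isBlock {B : Set (Fin (m + 1))} (hB : IsBlock π B)
    (hne : B ≠ Set.univ) {i j : Fin (m + 1)} (hi : i ∈ B) (hj : j ∈ B) :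
    blockIndex (uncrossedCuts π) i = blockIndex (uncrossedCuts π) j := by
  have hlt : ∀ {i j}, i ∈ B → j ∈ B → ∀ d ∈ uncrossedCuts π, d.castSucc < i → d.castSucc < j := by
    intro i j hi hj d hd hdi
    by_contra! hjd
    exact hne (mem_uncrossedCuts.1 hd B hB (hB.1.out hj hi ⟨hjd, hdi.le⟩)
      (hB.1.out hj hi ⟨hjd.trans Fin.castSucc_lt_succ.le, Fin.castSucc_lt_iff_succ_le.1 hdi⟩))
  exact blockIndex_eq_iff.2 fun d hd => ⟨hlt hi hj d hd, hlt hj hi d hd⟩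

lemma IsIndecomposable.exists_isBlock_of_blockIndex_eq (hπ : IsIndecomposable π) (hm : 1 ≤ m)
    {i j : Fin (m + 1)} (h : blockIndex (uncrossedCuts π) i = blockIndex (uncrossedCuts π) j) :
    ∃ B, IsBlock π B ∧ B ≠ Set.univ ∧ i ∈ B ∧ j ∈ B := by
  have : Nontrivial (Fin (m + 1)) := Fin.nontrivial_iff_two_le.2 (by omega)
  wlog hij : i ≤ j generalizing i j
  · obtain ⟨B, hB, hne, hj, hi⟩ := this h.symm (le_of_not_ge hij)
    exact ⟨B, hB, hne, hi, hj⟩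
  induction j using Fin.induction with
  | zero =>
    obtain rfl := Fin.le_zero_iff.1 hij
    exact ⟨{0}, isBlock_singleton π 0, Set.singleton_ne_univ 0, rfl, rfl⟩
  | succ d ih =>
    rcases hij.eq_or_lt with rfl | hlt
    · exact ⟨_, isBlock_singleton π _, Set.singleton_ne_univ _, rfl, rfl⟩
    have hid : i ≤ d.castSucc := Fin.le_castSucc_iff.2 hlt
    have heq : blockIndex (uncrossedCuts π) i = blockIndex (uncrossedCuts π) d.castSucc :=
      le_antisymm (blockIndex_monotone _ hid)
        (h ▸ blockIndex_monotone _ Fin.castSucc_lt_succ.le)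
    have hd : d ∉ uncrossedCuts π := fun hd =>
      (blockIndex_lt_blockIndex hd hid Fin.castSucc_lt_succ).ne h
    obtain ⟨A, hA, hAne, hiA, hdA⟩ := ih heq hid
    obtain ⟨B, hB, hdB, hsB, hBne⟩ : ∃ B, IsBlock π B ∧ d.castSucc ∈ B ∧ d.succ ∈ B ∧
        B ≠ Set.univ := by simpa [mem_uncrossedCuts] using hd
    exact ⟨A ∪ B, hA.union hB hdA hdB, hπ.union_ne_univ hA hB hAne hBne, Or.inl hiA, Or.inr hsB⟩

lemma IsIndecomposable.ordConnected_fiber (hπ : IsIndecomposable π) (hm : 1 ≤ m)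
    (y : Fin (#(uncrossedCuts π) + 1)) :
    ((blockIndex (uncrossedCuts π) ∘ π.symm) ⁻¹' {y}).OrdConnected := by
  constructor
  rintro u rfl v hv w hw
  obtain ⟨B, hB, hne, huB, hvB⟩ := hπ.exists_isBlock_of_blockIndex_eq hm hv.symm
  rw [← Set.mem_image_equiv] at huB hvB
  exact blockIndex_uncrossedCuts_eq_of_isBlock hB hne
    ((Set.mem_image_equiv).1 (hB.2.out huB hvB hw)) ((Set.mem_image_equiv).1 huB)

lemma IsInflation.isSimplePerm {σ : Perm (Fin (#(uncrossedCuts π) + 1))}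
    (h : IsInflation (blockIndex (uncrossedCuts π)) σ π) : IsSimplePerm σ := by
  have hsurj := blockIndex_surjective (uncrossedCuts π)
  refine isSimplePerm_iff.2 fun B hB => or_iff_not_imp_right.2 fun hne y hy z hz => ?_
  obtain ⟨i, rfl⟩ := hsurj y
  obtain ⟨j, rfl⟩ := hsurj z
  refine blockIndex_uncrossedCuts_eq_of_isBlock
    (h.isBlock_preimage (blockIndex_monotone _) hB) (fun hu => hne ?_) hy hz
  exact hsurj.preimage_injective (hu.trans Set.preimage_univ.symm)

lemma IsIndecomposable.exists_isInflation (hπ : IsIndecomposable π) (hm : 1 ≤ m) :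
    ∃ σ, IsInflation (blockIndex (uncrossedCuts π)) σ π :=
  exists_perm_monotone_comp ((blockIndex_surjective _).comp π.symm.surjective)
    (hπ.ordConnected_fiber hm)

lemma eq_one_or_eq_revPerm {n : ℕ} (hn : n = 2) (σ : Perm (Fin n)) :
    σ = 1 ∨ σ = Fin.revPerm := by
  subst hn
  revert σ
  decide

lemma isIndecomposable_iff (hm : 1 ≤ m) : IsIndecomposable π ↔ 2 ≤ #(uncrossedCuts π) := by
  refine ⟨fun hπ => ?_, isIndecomposable_of_two_le_card_uncrossedCuts⟩
  have hzero : #(uncrossedCuts π) ≠ 0 := fun hcard => by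
    have hindex : blockIndex (uncrossedCuts π) 0 = blockIndex (uncrossedCuts π) (Fin.last m) :=
      Fin.ext (by omega)
    obtain ⟨B, hB, hne, h0, hlast⟩ := hπ.exists_isBlock_of_blockIndex_eq hm hindex
    exact hne (eq_univ_of_bot_mem_of_top_mem hB.1 h0 hlast)
  have hone : #(uncrossedCuts π) ≠ 1 := fun hcard => by
    have hnonempty : uncrossedCuts π ≠ ∅ := fun hempty => by simp [hempty] at hcard
    obtain ⟨σ, hσ⟩ := hπ.exists_isInflation hm
    rcases eq_one_or_eq_revPerm (congrArg (· + 1) hcard) σ with rfl | rfl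
    · exact hnonempty (Finset.subset_empty.1 (hπ.1 ▸ isInflation_blockIndex_one_iff.1 hσ))
    · exact hnonempty (Finset.subset_empty.1
        (hπ.2 ▸ isInflation_blockIndex_one_iff.1 (isInflation_revPerm_iff.1 hσ)))
  omega

lemma IsInflation.uncrossedCuts_eq {σ : Perm (Fin (#D + 1))} (h : IsInflation (blockIndex D) σ π)
    (hσ : IsSimplePerm σ) (hD : 2 ≤ #D) : uncrossedCuts π = D := by
  have hmono := blockIndex_monotone D
  have hsurj := blockIndex_surjective D
  ext d
  refine ⟨fun hd => ?_, fun hd => mem_uncrossedCuts.2 fun B hB hc hs => ?_⟩ <;> by_contra hnot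
  · have hindex : blockIndex D d.succ = blockIndex D d.castSucc := by
      refine blockIndex_eq_iff.2 fun e he => ?_
      have hne : e ≠ d := fun h => hnot (h ▸ he)
      simp [Fin.castSucc_lt_succ_iff, hne.le_iff_lt]
    have huniv := mem_uncrossedCuts.1 hd _ (h.isBlock_preimage hmono (isBlock_singleton σ _))
      (Set.mem_singleton _) hindex
    have hsubsingleton : Subsingleton (Fin (#D + 1)) := subsingleton_of_forall_eq _ fun y => by
      obtain ⟨i, rfl⟩ := hsurj y
      exact Set.eq_univ_iff_forall.1 huniv i
    have := Fin.subsingleton_iff_le_one.1 hsubsingleton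
    omega
  · have hsub := h.subsingleton_image_of_isBlock hmono hsurj hD hσ hB hnot
    exact (blockIndex_lt_blockIndex hd le_rfl Fin.castSucc_lt_succ).ne
      (hsub ⟨_, hc, rfl⟩ ⟨_, hs, rfl⟩)

lemma exists_isSimplePerm_and_isInflation_iff (hD : 2 ≤ #D) :
    (∃ σ, IsSimplePerm σ ∧ IsInflation (blockIndex D) σ π) ↔ uncrossedCuts π = D := by
  refine ⟨fun ⟨σ, hσ, h⟩ => h.uncrossedCuts_eq hσ hD, ?_⟩
  rintro rfl
  have hcard : #(uncrossedCuts π) ≤ m := card_finset_fin_le _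
  have hm : 1 ≤ m := by omega
  obtain ⟨σ, h⟩ := ((isIndecomposable_iff hm).2 hD).exists_isInflation hm
  exact ⟨σ, h.isSimplePerm, h⟩

end UncrossedCuts

section Counting

variable {m : ℕ}

open Classical in
lemma card_sumCuts_eq_empty : (#{π : Perm (Fin (m + 1)) | sumCuts π = ∅} : ℤ) =
    ∑ D : Finset (Fin m), (-1) ^ #D * (blockFactorial D : ℤ) := by
  have hcount : ∀ D : Finset (Fin m),
      #{π : Perm (Fin (m + 1)) | D ⊆ sumCuts π} = blockFactorial D := fun D => by
    simp only [← isInflation_blockIndex_one_iff]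
    exact card_isInflation _ _
  calc (#{π : Perm (Fin (m + 1)) | sumCuts π = ∅} : ℤ)
      = ∑ π : Perm (Fin (m + 1)), if sumCuts π = ∅ then 1 else 0 := by simp
    _ = ∑ π : Perm (Fin (m + 1)), ∑ D ∈ (sumCuts π).powerset, (-1) ^ #D := by
      simp only [Finset.sum_powerset_neg_one_pow_card]
    _ = ∑ π : Perm (Fin (m + 1)), ∑ D, if D ⊆ sumCuts π then (-1) ^ #D else 0 := by
      simp only [← Finset.sum_filter, Finset.filter_subset_univ]
    _ = ∑ D, (-1) ^ #D * (#{π : Perm (Fin (m + 1)) | D ⊆ sumCuts π} : ℤ) := by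
      rw [Finset.sum_comm]
      simp [← Finset.sum_filter, mul_comm]
    _ = _ := by simp only [hcount]

open Classical in
lemma card_uncrossedCuts_eq {D : Finset (Fin m)} (hD : 2 ≤ #D) :
    #{π : Perm (Fin (m + 1)) | uncrossedCuts π = D} =
      simpleCount (#D + 1) * blockFactorial D := by
  let patterns : Finset (Perm (Fin (#D + 1))) := {σ | IsSimplePerm σ}
  let inflations (σ : Perm (Fin (#D + 1))) : Finset (Perm (Fin (m + 1))) :=
    {π | IsInflation (blockIndex D) σ π}
  have hunion : ({π | uncrossedCuts π = D} : Finset (Perm (Fin (m + 1)))) =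
      patterns.biUnion inflations := by
    ext π
    simp [patterns, inflations, ← exists_isSimplePerm_and_isInflation_iff hD]
  have hdisj : (patterns : Set (Perm (Fin (#D + 1)))).PairwiseDisjoint inflations := by
    refine fun σ _ τ _ hne => Finset.disjoint_left.2 fun π hσ hτ => hne ?_
    exact ((Finset.mem_filter_univ π).1 hσ).eq ((Finset.mem_filter_univ π).1 hτ)
      (blockIndex_surjective D)
  have hcard : #patterns = simpleCount (#D + 1) := by
    rw [simpleCount, Nat.card_eq_fintype_card, Fintype.card_subtype]
  rw [hunion, Finset.card_biUnion hdisj,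
    Finset.sum_const_nat fun σ _ => card_isInflation (blockIndex D) σ, hcard, blockFactorial]

open Classical in
lemma card_isIndecomposable (hm : 1 ≤ m) : #{π : Perm (Fin (m + 1)) | IsIndecomposable π} =
    ∑ D : Finset (Fin m), if 2 ≤ #D then simpleCount (#D + 1) * blockFactorial D else 0 := by
  simp only [isIndecomposable_iff hm]
  rw [← Finset.sum_filter, Finset.card_eq_sum_card_fiberwise (f := uncrossedCuts)
    (t := {D : Finset (Fin m) | 2 ≤ #D}) fun π hπ => by simpa using hπ]
  refine Finset.sum_congr rfl fun D hD => ?_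
  rw [Finset.mem_filter_univ] at hD
  rw [← card_uncrossedCuts_eq hD, Finset.filter_filter]
  congr 1
  ext π
  simp only [Finset.mem_filter_univ, and_iff_right_iff_imp]
  rintro rfl
  exact hD

open Classical in
lemma card_isIndecomposable_add_factorial :
    #{π : Perm (Fin (m + 1)) | IsIndecomposable π} + (m + 1)! =
      2 * #{π : Perm (Fin (m + 1)) | sumCuts π = ∅} := by
  let noSum : Finset (Perm (Fin (m + 1))) := {π | sumCuts π = ∅}
  let noSkew : Finset (Perm (Fin (m + 1))) := {π | sumCuts (Fin.revPerm * π) = ∅}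
  have hinter : noSum ∩ noSkew = ({π | IsIndecomposable π} : Finset _) := by
    ext π
    simp only [noSum, noSkew, Finset.mem_inter, Finset.mem_filter_univ]
    rfl
  have hunion : noSum ∪ noSkew = Finset.univ := by
    rw [← Finset.filter_or]
    exact Finset.filter_true_of_mem fun π _ => sumCuts_eq_empty_or_sumCuts_revPerm_mul_eq_empty π
  have hskew : #noSkew = #noSum :=
    Finset.card_equiv (Equiv.mulLeft Fin.revPerm) fun π => by simp [noSum, noSkew]
  have hcard := Finset.card_inter_add_card_union noSum noSkew
  rw [hinter, hunion, hskew, Finset.card_univ, Fintype.card_perm, Fintype.card_fin] at hcard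
  rw [hcard, two_mul]

/-- The coefficient with which the inflations of patterns of length `k + 1` contribute to the
count of all permutations in `factorial_eq_neg_sum_quotientCoeff_mul_blockFactorial`. The patterns
of length at most `2` are left out of the first term: inflating them gives all permutations or the
sums and skew sums, which the second term accounts for. -/
noncomputable def quotientCoeff (k : ℕ) : ℤ :=
  (if 2 ≤ k then (simpleCount (k + 1) : ℤ) else 0) - 2 * (-1) ^ k

lemma factorial_eq_neg_sum_quotientCoeff_mul_blockFactorial (hm : 1 ≤ m) :
    ((m + 1)! : ℤ) = -∑ D : Finset (Fin m), quotientCoeff #D * blockFactorial D := by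
  classical
  have hcount : (#{π : Perm (Fin (m + 1)) | IsIndecomposable π} : ℤ) + (m + 1)! =
      2 * #{π : Perm (Fin (m + 1)) | sumCuts π = ∅} := mod_cast card_isIndecomposable_add_factorial
  rw [card_sumCuts_eq_empty, card_isIndecomposable hm] at hcount
  simp only [quotientCoeff, sub_mul, Finset.sum_sub_distrib, ite_mul, zero_mul, mul_assoc,
    ← Finset.mul_sum]
  push_cast at hcount
  linarith

lemma two_pow_dvd_quotientCoeff (m : ℕ) : (2 : ℤ) ^ ((m + 1) / 2) ∣ quotientCoeff m := by
  induction m using Nat.strong_induction_on with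
  | h m ih =>
    rcases m.eq_zero_or_pos with rfl | hm
    · simp
    have hfact : (2 : ℤ) ^ ((m + 1) / 2) ∣ (m + 1)! := mod_cast two_pow_dvd_factorial (m + 1)
    have hproper : ∀ D ∈ Finset.univ.erase (Finset.univ : Finset (Fin m)),
        (2 : ℤ) ^ ((m + 1) / 2) ∣ quotientCoeff #D * blockFactorial D := fun D hD => by
      have hlt : #D < m := by
        simpa using Finset.card_lt_card (Finset.ssubset_univ_iff.2 (Finset.ne_of_mem_erase hD))
      calc (2 : ℤ) ^ ((m + 1) / 2) ∣ 2 ^ ((#D + 1) / 2 + (m + 1 - #D) / 2) :=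
            pow_dvd_pow 2 (by omega)
        _ = 2 ^ ((#D + 1) / 2) * 2 ^ ((m + 1 - #D) / 2) := pow_add _ _ _
        _ ∣ quotientCoeff #D * blockFactorial D :=
          mul_dvd_mul (ih _ hlt) (mod_cast two_pow_dvd_blockFactorial D)
    have hsum := factorial_eq_neg_sum_quotientCoeff_mul_blockFactorial hm
    rw [← Finset.add_sum_erase _ _ (Finset.mem_univ Finset.univ), blockFactorial_univ,
      Finset.card_univ, Fintype.card_fin, Nat.cast_one, mul_one] at hsum
    rw [hsum, dvd_neg] at hfact
    exact (dvd_add_left (Finset.dvd_sum hproper)).1 hfact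

lemma simpleCount_modEq {m : ℕ} (hm : 2 ≤ m) :
    (simpleCount (m + 1) : ℤ) ≡ 2 * (-1) ^ m [ZMOD 2 ^ ((m + 1) / 2)] := by
  refine (Int.modEq_iff_dvd.2 ?_).symm
  simpa only [quotientCoeff, if_pos hm] using two_pow_dvd_quotientCoeff m

end Counting

end SimplePermutation

/-- For `n ≥ 3`: `sₙ ≡ 2 (mod 2^{(n-1)/2})` for odd `n`, and
`sₙ ≡ -2 (mod 2^{n/2})` for even `n`. -/
theorem simpleCount_congruence_mod_two_powers (n : ℕ) (hn : 3 ≤ n) :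
    (Odd n → (simpleCount n : ℤ) ≡ 2 [ZMOD (2 : ℤ) ^ ((n - 1) / 2)]) ∧
    (Even n → (simpleCount n : ℤ) ≡ -2 [ZMOD (2 : ℤ) ^ (n / 2)]) := by
  obtain ⟨m, rfl⟩ : ∃ m, n = m + 1 := ⟨n - 1, by omega⟩
  have hmod := SimplePermutation.simpleCount_modEq (m := m) (by omega)
  constructor
  · intro hodd
    have heven : Even m := by simpa [Nat.odd_add_one] using hodd
    rw [heven.neg_one_pow, mul_one] at hmod
    exact hmod.of_dvd (pow_dvd_pow 2 (by omega))
  · intro heven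
    have hodd : Odd m := by simpa [Nat.even_add_one] using heven
    simpa [hodd.neg_one_pow] using hmod
end
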